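/- arXiv:1611.09719 — 2 statements merged into one kernel-verified Lean document; each statement's English description precedes it below -/
import Mathlib

section
/- Let T ∈ (0,1], β > −2, ρ ∈ (−2,0], let n ∈ ℕ satisfy β+1 ≤ n < β+2, let r ∈ ℕ satisfy r > |β|, and let M > 0. For ε = 2^{−N} let ζ^ε : (ε²ℤ ∩ (0,T]) × 𝕋_ε → ℝ (1-periodic in space) satisfy |t|_ε^{−ρ} λ^{−β} |⟨ζ^ε(t,·), φ_x^λ⟩_ε| ≤ M for all t ∈ ε²ℤ ∩ (0,T], x ∈ 𝕋_ε, λ ∈ [ε,1] and φ ∈ B^r_0. Set P^{(ε,n)} := D_{x,ε}^n P^ε and (P^{(ε,n)} ∗_ε ζ^ε)(t,x) := ε² Σ_{s ∈ ε²ℤ ∩ (0,t]} ⟨ζ^ε(s,·), P^{(ε,n)}(t−s, x−·)⟩_ε. Then for every θ₁ ∈ (0, β−n+2) and θ₂ ∈ ℝ with θ := θ₁ − θ₂ > 0, setting β̄ := β+2−n−θ₁ and ρ̄ := ρ+θ₂, there is a constant C independent of ε, M, T and ζ^ε such that sup_{z=(t,x)} |t|_ε^{−(ρ̄+β̄)}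 |(P^{(ε,n)} ∗_ε ζ^ε)(z)| + sup_{z=(t,x)} sup_{z̄=(t̄,x̄)≠z, |t̄−t|≤|t,t̄|_ε²} |(P^{(ε,n)} ∗_ε ζ^ε)(z̄) − (P^{(ε,n)} ∗_ε ζ^ε)(z)| / (|t,t̄|_ε^{ρ̄} ‖z̄−z‖_s^{β̄}) ≤ C M |T|_ε^{θ}, where the suprema run over (ε²ℤ ∩ (0,T]) × 𝕋_ε, |t,t̄|_ε := |t|_ε ∧ |t̄|_ε and |T|_ε := T^{1/2} ∨ ε. -/
open Real

noncomputable section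

/-- `φ ∈ B^r_0`: a smooth function supported in `[-1,1]` whose derivatives up to
order `r` are bounded by `1`. -/
def IsTestFunction (r : ℕ) (φ : ℝ → ℝ) : Prop :=
  ContDiff ℝ (⊤ : ℕ∞) φ ∧ (∀ y : ℝ, y ∉ Set.Icc (-1 : ℝ) 1 → φ y = 0) ∧
    ∀ j ≤ r, ∀ y : ℝ, |iteratedDeriv j φ y| ≤ 1

/-- One step of the operator `Id + ε²Δ_ε` on grid functions (indexed form; the
powers of `ε` cancel). Here `Δ_ε φ(x) = (2ν̄ε²)⁻¹ Σ_k a(k) φ(x+εk)` with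
`ν̄ = Σ_k |a(k)|`. -/
def gridStep (a : ℤ →₀ ℝ) (f : ℤ → ℝ) : ℤ → ℝ :=
  fun j => f j + (2 * ∑ k ∈ a.support, |a k|)⁻¹ * ∑ k ∈ a.support, a k * f (j + k)

/-- `(Id + ε²Δ_ε)^n δ₀` on grid indices, so that the grid discrete heat kernel
is `P^ε(nε², εj) = ε⁻¹ · gridHeat a n j`. -/
def gridHeat (a : ℤ →₀ ℝ) (n : ℕ) : ℤ → ℝ :=
  (gridStep a)^[n] (fun j => if j = 0 then 1 else 0)

/-- `ε · D_{x,ε}` on grid functions (indexed form), i.e. `f ↦ Σ_k b(k) f(·+k)`. -/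
def gridDerivStep (b : ℤ →₀ ℝ) (f : ℤ → ℝ) : ℤ → ℝ :=
  fun j => ∑ k ∈ b.support, b k * f (j + k)

/-- `P^{(ε,n)}(Mε², εj) = ε^{-1-n} · gridHeatDeriv a b n M j`, the `n`-th
discrete spatial derivative of the grid discrete heat kernel (up to the factor
`ε^{-1-n}`). -/
def gridHeatDeriv (a b : ℤ →₀ ℝ) (n M : ℕ) : ℤ → ℝ :=
  (gridDerivStep b)^[n] (gridHeat a M)

/-- `|t|_ε = |t|^{1/2} ∨ ε`. -/
def teps (ε t : ℝ) : ℝ := max (Real.sqrt |t|) ε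

/-- The discrete space-time convolution
`(P^{(ε,n)} ∗_ε ζ)(ε²M, εk) = ε² Σ_{s∈ε²ℤ∩(0,ε²M]} ⟨ζ(s,·), P^{(ε,n)}(ε²M-s, εk-·)⟩_ε`,
where `ζ m j` is the value of `ζ` at the grid point `(ε² m, ε j)`. -/
def dheatConv (a b : ℤ →₀ ℝ) (n : ℕ) (ε : ℝ) (ζ : ℕ → ℤ → ℝ) (M : ℕ) (k : ℤ) : ℝ :=
  ε ^ 2 * ∑ m ∈ Finset.Icc 1 M,
    ε * ∑' j : ℤ, ζ m j * ((ε ^ (n + 1))⁻¹ * gridHeatDeriv a b n (M - m) (k - j))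


abbrev LP := LaurentPolynomial ℝ

def l1 (f : LP) : ℝ := f.coeff.sum (fun _ c => |c|)

def pr (Z : ℤ → ℝ) (k : ℤ) (f : LP) : ℝ := f.coeff.sum (fun i c => c * Z (k - i))

def sg (k : ℤ) (c : ℝ) : LP := AddMonoidAlgebra.single k c

lemma sg_coeff (k : ℤ) (c : ℝ) : (sg k c).coeff = Finsupp.single k c := rfl

lemma l1_eq (f : LP) : l1 f = ∑ k ∈ f.coeff.support, |f.coeff k| := rfl

lemma l1_nonneg (f : LP) : 0 ≤ l1 f := Finset.sum_nonneg (fun _ _ => abs_nonneg _)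

lemma l1_eq_of_subset (f : LP) (s : Finset ℤ) (h : f.coeff.support ⊆ s) :
    l1 f = ∑ k ∈ s, |f.coeff k| :=
  Finsupp.sum_of_support_subset _ h _ (by simp)

lemma l1_zero : l1 0 = 0 := by simp [l1]

lemma l1_add_le (f g : LP) : l1 (f + g) ≤ l1 f + l1 g := by
  classical
  rw [l1_eq_of_subset f (f.coeff.support ∪ g.coeff.support) Finset.subset_union_left,
    l1_eq_of_subset g (f.coeff.support ∪ g.coeff.support) Finset.subset_union_right,
    l1_eq_of_subset (f+g) (f.coeff.support ∪ g.coeff.support)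
      (by rw [AddMonoidAlgebra.coeff_add]; exact Finsupp.support_add), ← Finset.sum_add_distrib]
  exact Finset.sum_le_sum (fun i _ => by simpa using abs_add_le _ _)

lemma l1_sum_le {ι : Type*} (s : Finset ι) (F : ι → LP) :
    l1 (∑ i ∈ s, F i) ≤ ∑ i ∈ s, l1 (F i) :=
  Finset.le_sum_of_subadditive l1 l1_zero.le l1_add_le s F

lemma l1_sg (k : ℤ) (c : ℝ) : l1 (sg k c) = |c| := by
  simp [l1, sg_coeff]

lemma l1_neg (f : LP) : l1 (-f) = l1 f := by
  simp [l1_eq]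

lemma l1_one : l1 1 = 1 := by
  have := l1_sg 0 1
  rw [abs_one] at this
  exact this

lemma eq_sum_sg (f : LP) : f = ∑ i ∈ f.coeff.support, sg i (f.coeff i) := by
  conv_lhs => rw [← AddMonoidAlgebra.sum_coeff_single f]
  rfl

lemma sg_mul_sg (i j : ℤ) (c d : ℝ) : sg i c * sg j d = sg (i+j) (c*d) :=
  AddMonoidAlgebra.single_mul_single _ _ _ _

lemma l1_sg_mul (i : ℤ) (c : ℝ) (g : LP) : l1 (sg i c * g) ≤ |c| * l1 g := by
  conv_lhs => rw [eq_sum_sg g]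
  rw [Finset.mul_sum]
  refine (l1_sum_le _ _).trans ?_
  rw [l1_eq, Finset.mul_sum]
  refine Finset.sum_le_sum (fun j _ => ?_)
  rw [sg_mul_sg, l1_sg, abs_mul]

lemma l1_mul_le (f g : LP) : l1 (f * g) ≤ l1 f * l1 g := by
  conv_lhs => rw [eq_sum_sg f]
  rw [Finset.sum_mul]
  refine (l1_sum_le _ _).trans ?_
  rw [l1_eq f, Finset.sum_mul]
  exact Finset.sum_le_sum (fun j _ => l1_sg_mul _ _ _)

lemma l1_mul_le' {f g : LP} {A B : ℝ} (hf : l1 f ≤ A) (hg : l1 g ≤ B) : l1 (f * g) ≤ A * B :=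
  (l1_mul_le f g).trans (mul_le_mul hf hg (l1_nonneg _) ((l1_nonneg _).trans hf))

lemma pr_add (Z : ℤ → ℝ) (k : ℤ) (f g : LP) : pr Z k (f + g) = pr Z k f + pr Z k g :=
  Finsupp.sum_add_index' (by simp) (by intros; ring)

lemma pr_zero (Z : ℤ → ℝ) (k : ℤ) : pr Z k 0 = 0 := by simp [pr]

lemma pr_sum {ι : Type*} (Z : ℤ → ℝ) (k : ℤ) (s : Finset ι) (F : ι → LP) :
    pr Z k (∑ i ∈ s, F i) = ∑ i ∈ s, pr Z k (F i) := by
  classical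
  induction s using Finset.induction_on with
  | empty => simp [pr_zero]
  | insert a s ha ih => rw [Finset.sum_insert ha, Finset.sum_insert ha, pr_add, ih]

lemma pr_sg (Z : ℤ → ℝ) (k i : ℤ) (c : ℝ) : pr Z k (sg i c) = c * Z (k - i) := by
  simp [pr, sg_coeff]

lemma pr_sg_mul (Z : ℤ → ℝ) (k i : ℤ) (c : ℝ) (g : LP) :
    pr Z k (sg i c * g) = c * pr Z (k - i) g := by
  conv_lhs => rw [eq_sum_sg g]
  rw [Finset.mul_sum, pr_sum]
  unfold pr Finsupp.sum
  rw [Finset.mul_sum]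
  refine Finset.sum_congr rfl (fun j _ => ?_)
  rw [sg_mul_sg]
  have := pr_sg Z k (i+j) (c * g.coeff j)
  unfold pr Finsupp.sum at this
  rw [this]
  rw [show k - (i + j) = k - i - j by ring]; ring

lemma pr_neg (Z : ℤ → ℝ) (k : ℤ) (f : LP) : pr Z k (-f) = - pr Z k f := by
  have := pr_add Z k f (-f)
  rw [add_neg_cancel, pr_zero] at this
  linarith

lemma pr_sub (Z : ℤ → ℝ) (k : ℤ) (f g : LP) : pr Z k (f - g) = pr Z k f - pr Z k g := by
  rw [sub_eq_add_neg, pr_add, pr_neg]; ring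

lemma pr_mul_le (Z : ℤ → ℝ) (k : ℤ) (f g : LP) (B : ℝ) (hB : ∀ k, |pr Z k g| ≤ B) :
    |pr Z k (f * g)| ≤ l1 f * B := by
  conv_lhs => rw [eq_sum_sg f]
  rw [Finset.sum_mul, pr_sum]
  refine (Finset.abs_sum_le_sum_abs _ _).trans ?_
  rw [l1_eq f, Finset.sum_mul]
  refine Finset.sum_le_sum (fun j _ => ?_)
  rw [pr_sg_mul, abs_mul]
  exact mul_le_mul_of_nonneg_left (hB _) (abs_nonneg _)

lemma pr_eq_tsum (Z : ℤ → ℝ) (k : ℤ) (f : LP) :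
    ∑' j : ℤ, Z j * f.coeff (k - j) = pr Z k f := by
  rw [← (Equiv.subLeft k).tsum_eq]
  simp only [Equiv.subLeft_apply, sub_sub_cancel]
  rw [tsum_eq_sum (s := f.coeff.support)]
  · unfold pr Finsupp.sum
    exact Finset.sum_congr rfl (fun _ _ => mul_comm _ _)
  · intro b hb
    simp [Finsupp.notMem_support_iff.mp hb]

/-! grid operators -/

def bt (b : ℤ →₀ ℝ) : LP := ∑ k ∈ b.support, sg (-k) (b k)

lemma sg_mul_coeff (i j : ℤ) (c : ℝ) (f : LP) :
    (sg i c * f).coeff j = c * f.coeff (-i + j) :=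
  AddMonoidAlgebra.coeff_single_mul_apply _ _ _ _

lemma bt_mul_coeff (b : ℤ →₀ ℝ) (f : LP) (j : ℤ) :
    (bt b * f).coeff j = ∑ k ∈ b.support, b k * f.coeff (j + k) := by
  unfold bt
  rw [Finset.sum_mul, AddMonoidAlgebra.coeff_sum, Finset.sum_apply']
  refine Finset.sum_congr rfl (fun k _ => ?_)
  rw [sg_mul_coeff, neg_neg, add_comm]

def nub (a : ℤ →₀ ℝ) : ℝ := ∑ k ∈ a.support, |a k|

def pp (a : ℤ →₀ ℝ) : LP := 1 + sg 0 (2 * nub a)⁻¹ * bt a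

lemma gridHeat_eq (a : ℤ →₀ ℝ) (m : ℕ) : gridHeat a m = fun j => (pp a ^ m).coeff j := by
  unfold gridHeat
  induction m with
  | zero =>
    funext j
    have : ((1 : LP)).coeff = Finsupp.single 0 1 := rfl
    simp only [Function.iterate_zero, id, pow_zero, this, Finsupp.single_apply]
    simp only [eq_comm]
  | succ m ih =>
    rw [Function.iterate_succ_apply', ih]
    funext j
    unfold gridStep
    rw [pow_succ', pp, add_mul, one_mul, AddMonoidAlgebra.coeff_add, Finsupp.add_apply, mul_assoc,
      sg_mul_coeff, bt_mul_coeff]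
    simp [nub]

lemma gridHeatDeriv_eq (a b : ℤ →₀ ℝ) (n m : ℕ) :
    gridHeatDeriv a b n m = fun j => (bt b ^ n * pp a ^ m).coeff j := by
  unfold gridHeatDeriv
  induction n with
  | zero => simp [gridHeat_eq]
  | succ n ih =>
    rw [Function.iterate_succ_apply', ih]
    funext j
    unfold gridDerivStep
    rw [pow_succ', mul_assoc, bt_mul_coeff]

lemma dheatConv_eq (a b : ℤ →₀ ℝ) (n : ℕ) (ε : ℝ) (ζ : ℕ → ℤ → ℝ) (M : ℕ) (k : ℤ) :
    dheatConv a b n ε ζ M k = ε ^ 3 * (ε ^ (n + 1))⁻¹ * ∑ m ∈ Finset.Icc 1 M,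
      pr (ζ m) k (bt b ^ n * pp a ^ (M - m)) := by
  unfold dheatConv
  rw [show ε ^ 3 * (ε ^ (n + 1))⁻¹ = ε^2 * (ε * (ε ^ (n + 1))⁻¹) by ring, mul_assoc]
  congr 1
  rw [Finset.mul_sum]
  refine Finset.sum_congr rfl (fun m _ => ?_)
  rw [mul_assoc]
  congr 1
  rw [gridHeatDeriv_eq, ← pr_eq_tsum, ← tsum_mul_left]
  exact tsum_congr (fun j => by ring)

/-! divisibility -/

def UU : LP := sg 1 1 - 1

lemma sg_zero_one : sg 0 1 = 1 := rfl

lemma sg_one_pow (i : ℕ) : (sg 1 1)^i = sg i 1 := by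
  induction i with
  | zero => simp [sg_zero_one]
  | succ i ih => rw [pow_succ, ih, sg_mul_sg]; push_cast; simp

lemma sg_sub_one_nat (h : ℕ) : ∃ w : LP, sg h 1 - 1 = UU * w ∧ l1 w ≤ h := by
  refine ⟨∑ i ∈ Finset.range h, sg i 1, ?_, ?_⟩
  · unfold UU
    rw [← sg_one_pow, ← mul_geom_sum]
    congr 1
    exact Finset.sum_congr rfl (fun i _ => sg_one_pow i)
  · refine (l1_sum_le _ _).trans ?_
    simp [l1_sg]

lemma sg_sub_one (h : ℤ) : ∃ w : LP, sg h 1 - 1 = UU * w ∧ l1 w ≤ |(h:ℝ)| := by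
  obtain ⟨n, rfl | rfl⟩ := h.eq_nat_or_neg
  · obtain ⟨w, h1, h2⟩ := sg_sub_one_nat n
    exact ⟨w, h1, by simpa using h2⟩
  · obtain ⟨w, h1, h2⟩ := sg_sub_one_nat n
    refine ⟨sg (-n) (-1) * w, ?_, ?_⟩
    · rw [mul_left_comm, ← h1, mul_sub, sg_mul_sg]
      have e : sg (-n) (-1) = - sg (-n) 1 := by simp [sg, AddMonoidAlgebra.single_neg]
      have e2 : sg (-(n:ℤ) + n) (-1 * 1) = -1 := by
        rw [← sg_zero_one]; simp [sg, AddMonoidAlgebra.single_neg]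
      rw [e2, e, mul_one]; ring
    · refine (l1_sg_mul _ _ _).trans ?_
      simpa using h2

lemma bt_dvd (b : ℤ →₀ ℝ) (hb0 : ∑ k ∈ b.support, b k = 0) : ∃ w : LP, bt b = UU * w := by
  choose w hw _ using sg_sub_one
  refine ⟨∑ k ∈ b.support, sg 0 (b k) * w (-k), ?_⟩
  have e1 : ∑ k ∈ b.support, sg 0 (b k) = 0 := by
    have : sg 0 (∑ k ∈ b.support, b k) = ∑ k ∈ b.support, sg 0 (b k) := by
      ext j
      rw [AddMonoidAlgebra.coeff_sum, Finset.sum_apply']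
      simp only [sg, AddMonoidAlgebra.coeff_single]
      by_cases h : j = 0 <;> simp [h]
    rw [← this, hb0]; simp [sg]
  rw [Finset.mul_sum]
  have : ∀ k ∈ b.support, UU * (sg 0 (b k) * w (-k)) = sg (-k) (b k) - sg 0 (b k) := by
    intro k _
    rw [mul_left_comm, ← hw, mul_sub, sg_mul_sg]; simp
  rw [Finset.sum_congr rfl this, Finset.sum_sub_distrib, e1, sub_zero]
  rfl

lemma bt_dvd_two (a : ℤ →₀ ℝ) (ha_symm : ∀ k : ℤ, a (-k) = a k)
    (hb0 : ∑ k ∈ a.support, a k = 0) : ∃ w : LP, bt a = UU ^ 2 * w := by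
  choose w hw _ using sg_sub_one
  refine ⟨∑ k ∈ a.support, sg 0 (a k / 2) * (sg (-k) 1 * w k ^ 2), ?_⟩
  have e1 : ∑ k ∈ a.support, sg 0 (a k) = 0 := by
    have : sg 0 (∑ k ∈ a.support, a k) = ∑ k ∈ a.support, sg 0 (a k) := by
      ext j
      rw [AddMonoidAlgebra.coeff_sum, Finset.sum_apply']
      simp only [sg, AddMonoidAlgebra.coeff_single]
      by_cases h : j = 0 <;> simp [h]
    rw [← this, hb0]; simp [sg]
  have e2 : ∑ k ∈ a.support, sg k (a k / 2) = ∑ k ∈ a.support, sg (-k) (a k / 2) := by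
    refine Finset.sum_nbij' (fun k => -k) (fun k => -k) ?_ ?_ ?_ ?_ ?_
    · intro k hk; simpa [ha_symm] using hk
    · intro k hk; simpa [ha_symm] using hk
    · simp
    · simp
    · intro k hk; simp [ha_symm]
  rw [Finset.mul_sum]
  have hadd : ∀ (k:ℤ) (c d : ℝ), sg k (c + d) = sg k c + sg k d := fun k c d =>
    AddMonoidAlgebra.single_add _ _ _
  have : ∀ k ∈ a.support, UU^2 * (sg 0 (a k/2) * (sg (-k) 1 * w k ^ 2)) =
      sg k (a k / 2) + sg (-k) (a k / 2) - sg 0 (a k) := by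
    intro k _
    calc UU^2 * (sg 0 (a k/2) * (sg (-k) 1 * w k ^ 2))
        = sg 0 (a k / 2) * (sg (-k) 1 * (sg k 1 - 1)^2) := by rw [hw]; ring
      _ = sg 0 (a k / 2) * ((sg (-k) 1 * sg k 1) * (sg k 1 - 2) + sg (-k) 1) := by ring
      _ = sg 0 (a k / 2) * (sg k 1 - 2 + sg (-k) 1) := by
          rw [sg_mul_sg]; simp [sg_zero_one]
      _ = sg 0 (a k / 2) * sg k 1 + sg 0 (a k / 2) * sg (-k) 1
            - (sg 0 (a k / 2) + sg 0 (a k / 2)) := by ring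
      _ = _ := by rw [sg_mul_sg, sg_mul_sg, ← hadd]; simp
  rw [Finset.sum_congr rfl this, Finset.sum_sub_distrib, Finset.sum_add_distrib, e1, e2, sub_zero,
    ← Finset.sum_add_distrib]
  unfold bt
  refine Finset.sum_congr rfl (fun k _ => ?_)
  rw [← hadd]; simp


def ee (k : ℤ) (θ : ℝ) : ℂ := Complex.exp ((2 * π * k * Complex.I) * θ)

lemma ee_add (j k : ℤ) (θ : ℝ) : ee (j + k) θ = ee j θ * ee k θ := by
  unfold ee; rw [← Complex.exp_add]; congr 1; push_cast; ring

lemma ee_norm (k : ℤ) (θ : ℝ) : ‖ee k θ‖ = 1 := by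
  unfold ee
  rw [show (2 * π * k * Complex.I) * θ = ((2 * π * k * θ : ℝ) : ℂ) * Complex.I by push_cast; ring]
  exact Complex.norm_exp_ofReal_mul_I _

lemma ee_conj (k : ℤ) (θ : ℝ) : (starRingEnd ℂ) (ee k θ) = ee (-k) θ := by
  unfold ee
  rw [← Complex.exp_conj]; congr 1; simp [Complex.conj_ofNat]

lemma ee_hasDeriv (k : ℤ) (θ : ℝ) : HasDerivAt (ee k) ((2 * π * k * Complex.I) * ee k θ) θ := by
  unfold ee
  have h : HasDerivAt (fun x : ℝ => (2 * π * k * Complex.I) * (x : ℂ)) (2 * π * k * Complex.I) θ := by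
    simpa using (Complex.ofRealCLM.hasDerivAt (x := θ)).const_mul (2 * π * k * Complex.I)
  simpa [mul_comm] using h.cexp

lemma ee_cont (k : ℤ) : Continuous (ee k) :=
  continuous_iff_continuousAt.mpr (fun θ => (ee_hasDeriv k θ).continuousAt)

lemma ee_int (k : ℤ) : ∫ θ in (-(1/2) : ℝ)..(1/2), ee k θ = if k = 0 then 1 else 0 := by
  split_ifs with h
  · subst h; simp [ee]; norm_num
  · unfold ee
    have hc : (2 * π * k * Complex.I : ℂ) ≠ 0 := by
      simp [h, Real.pi_ne_zero]
    rw [integral_exp_mul_complex hc]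
    have : Complex.exp ((2 * π * k * Complex.I) * ((1/2 : ℝ) : ℂ)) =
        Complex.exp ((2 * π * k * Complex.I) * ((-(1/2) : ℝ) : ℂ)) := by
      rw [Complex.exp_eq_exp_iff_exists_int]
      exact ⟨k, by push_cast; ring⟩
    rw [this]; simp

lemma parseval (s : Finset ℤ) (c : ℤ → ℂ) :
    ∫ θ in (-(1/2) : ℝ)..(1/2), ‖∑ k ∈ s, c k * ee k θ‖ ^ 2 = ∑ k ∈ s, ‖c k‖ ^ 2 := by
  have h : ∀ θ : ℝ, ((‖∑ k ∈ s, c k * ee k θ‖ ^ 2 : ℝ) : ℂ) =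
      ∑ k ∈ s, ∑ l ∈ s, (c k * (starRingEnd ℂ) (c l)) * ee (k + -l) θ := by
    intro θ
    push_cast
    rw [← Complex.mul_conj', map_sum, Finset.sum_mul_sum]
    refine Finset.sum_congr rfl (fun k _ => Finset.sum_congr rfl (fun l _ => ?_))
    rw [map_mul, ee_conj, ee_add]; ring
  have h2 : ((∫ θ in (-(1/2) : ℝ)..(1/2), ‖∑ k ∈ s, c k * ee k θ‖ ^ 2 : ℝ) : ℂ) =
      ((∑ k ∈ s, ‖c k‖ ^ 2 : ℝ) : ℂ) := by
    rw [← intervalIntegral.integral_ofReal]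
    simp_rw [h]
    have hi : ∀ (d : ℂ) (k : ℤ), IntervalIntegrable (fun θ => d * ee k θ) MeasureTheory.volume
        (-(1/2) : ℝ) (1/2) := fun d k =>
      (continuous_const.mul (ee_cont k)).intervalIntegrable _ _
    rw [intervalIntegral.integral_finsetSum]
    · push_cast
      refine Finset.sum_congr rfl (fun k hk => ?_)
      rw [intervalIntegral.integral_finsetSum (fun l _ => hi _ _)]
      simp_rw [intervalIntegral.integral_const_mul, ee_int]
      rw [Finset.sum_eq_single k]
      · simp [Complex.mul_conj']
      · intro l _ hl
        have : k + -l ≠ 0 := by intro h; apply hl; omega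
        simp [this]
      · intro h; exact absurd hk h
    · intro k _
      refine Continuous.intervalIntegrable ?_ _ _
      exact continuous_finsetSum _ (fun l _ => continuous_const.mul (ee_cont _))
  exact_mod_cast h2

def ev (f : LP) (θ : ℝ) : ℂ := f.coeff.sum (fun k c => (c : ℂ) * ee k θ)
def dv (f : LP) (θ : ℝ) : ℂ := f.coeff.sum (fun k c => ((c : ℂ) * (2 * π * k * Complex.I)) * ee k θ)

lemma ev_hasDeriv (f : LP) (θ : ℝ) : HasDerivAt (ev f) (dv f θ) θ := by
  unfold ev dv Finsupp.sum
  refine HasDerivAt.fun_sum (fun k _ => ?_)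
  have := (ee_hasDeriv k θ).const_mul ((f.coeff k : ℝ) : ℂ)
  exact this.congr_deriv (by ring)

lemma ev_cont (f : LP) : Continuous (ev f) :=
  continuous_iff_continuousAt.mpr (fun θ => (ev_hasDeriv f θ).continuousAt)

lemma dv_cont (f : LP) : Continuous (dv f) := by
  unfold dv Finsupp.sum
  exact continuous_finsetSum _ (fun l _ => continuous_const.mul (ee_cont _))

lemma ev_add (f g : LP) (θ : ℝ) : ev (f + g) θ = ev f θ + ev g θ :=
  Finsupp.sum_add_index' (by simp) (by intros; push_cast; ring)

lemma ev_zero (θ : ℝ) : ev 0 θ = 0 := by simp [ev]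

lemma ev_sum {ι : Type*} (θ : ℝ) (s : Finset ι) (F : ι → LP) :
    ev (∑ i ∈ s, F i) θ = ∑ i ∈ s, ev (F i) θ := by
  classical
  induction s using Finset.induction_on with
  | empty => simp [ev_zero]
  | insert a s ha ih => rw [Finset.sum_insert ha, Finset.sum_insert ha, ev_add, ih]

lemma ev_sg (i : ℤ) (c θ : ℝ) : ev (sg i c) θ = c * ee i θ := by
  simp [ev, sg_coeff]

lemma ev_mul (f g : LP) (θ : ℝ) : ev (f * g) θ = ev f θ * ev g θ := by
  conv_lhs => rw [eq_sum_sg f, eq_sum_sg g]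
  conv_rhs => rw [eq_sum_sg f, eq_sum_sg g]
  rw [Finset.sum_mul_sum, ev_sum, ev_sum, ev_sum, Finset.sum_mul_sum]
  refine Finset.sum_congr rfl (fun k _ => ?_)
  rw [ev_sum]
  refine Finset.sum_congr rfl (fun l _ => ?_)
  rw [sg_mul_sg, ev_sg, ev_sg, ev_sg, ee_add]; push_cast; ring

lemma ev_one (θ : ℝ) : ev 1 θ = 1 := by
  rw [← sg_zero_one, ev_sg]; simp [ee]

lemma ev_pow (f : LP) (θ : ℝ) (m : ℕ) : ev (f ^ m) θ = ev f θ ^ m := by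
  induction m with
  | zero => simp [ev_one]
  | succ m ih => rw [pow_succ, ev_mul, ih, pow_succ]

lemma dv_mul (f g : LP) (θ : ℝ) : dv (f * g) θ = dv f θ * ev g θ + ev f θ * dv g θ := by
  have h1 := (ev_hasDeriv f θ).mul (ev_hasDeriv g θ)
  have h2 := ev_hasDeriv (f * g) θ
  have : ev (f * g) = ev f * ev g := funext (fun x => ev_mul f g x)
  rw [this] at h2
  exact h2.unique h1

lemma dv_pow (f : LP) (θ : ℝ) (m : ℕ) : dv (f ^ m) θ = m * ev f θ ^ (m - 1) * dv f θ := by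
  have h1 := (ev_hasDeriv f θ).fun_pow m
  have h2 := ev_hasDeriv (f ^ m) θ
  have : ev (f ^ m) = fun x => ev f x ^ m := funext (fun x => ev_pow f x m)
  rw [this] at h2
  exact h2.unique h1

lemma ev_parseval (f : LP) :
    ∫ θ in (-(1/2) : ℝ)..(1/2), ‖ev f θ‖ ^ 2 = ∑ k ∈ f.coeff.support, (f.coeff k) ^ 2 := by
  have := parseval f.coeff.support (fun k => (f.coeff k : ℂ))
  unfold ev Finsupp.sum
  rw [this]
  simp

lemma dv_parseval (f : LP) :
    ∫ θ in (-(1/2) : ℝ)..(1/2), ‖dv f θ‖ ^ 2 =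
      ∑ k ∈ f.coeff.support, (2 * π * k) ^ 2 * (f.coeff k) ^ 2 := by
  have := parseval f.coeff.support (fun k => ((f.coeff k : ℂ) * (2 * π * k * Complex.I)))
  unfold dv Finsupp.sum
  rw [this]
  refine Finset.sum_congr rfl (fun k _ => ?_)
  simp [mul_pow]; ring

lemma nat_sum_bound (A : ℝ) (hA : 1 ≤ A) (n : ℕ) :
    ∑ i ∈ Finset.range n, 1 / (A ^ 2 + (i:ℝ) ^ 2) ≤ 2 / (A - 1/2) - 2 / (A + n - 1/2) := by
  induction n with
  | zero => simp
  | succ n ih =>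
    rw [Finset.sum_range_succ]
    have hn : (0:ℝ) ≤ n := n.cast_nonneg
    have key : 1 / (A ^ 2 + (n:ℝ) ^ 2) ≤ 2 / (A + n - 1/2) - 2 / (A + n + 1/2) := by
      rw [div_sub_div _ _ (by linarith) (by linarith), div_le_div_iff₀ (by positivity)
        (by apply mul_pos <;> linarith)]
      nlinarith [sq_nonneg (A - n)]
    push_cast
    rw [show A + (n + 1) - 1/2 = A + n + 1/2 by ring]
    linarith

lemma int_sum_bound (A : ℝ) (hA : 1 ≤ A) (s : Finset ℤ) :
    ∑ k ∈ s, 1 / (A ^ 2 + (k:ℝ) ^ 2) ≤ 8 / A := by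
  classical
  have hb : ∀ n : ℕ, ∑ i ∈ Finset.range n, 1 / (A ^ 2 + (i:ℝ) ^ 2) ≤ 4 / A := by
    intro n
    refine (nat_sum_bound A hA n).trans ?_
    have hn : (0:ℝ) ≤ n := n.cast_nonneg
    have : 0 ≤ 2 / (A + n - 1/2) := div_nonneg (by norm_num) (by linarith)
    have h2 : 2 / (A - 1/2) ≤ 4 / A := by
      rw [div_le_div_iff₀ (by linarith) (by linarith)]; linarith
    linarith
  set K := s.sup Int.natAbs + 1
  have hsub : s ⊆ (Finset.range K).image (fun i : ℕ => (i : ℤ)) ∪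
      (Finset.range K).image (fun i : ℕ => -(i : ℤ)) := by
    intro k hk
    have : k.natAbs ≤ s.sup Int.natAbs := Finset.le_sup (f := Int.natAbs) hk
    rw [Finset.mem_union, Finset.mem_image, Finset.mem_image]
    rcases le_total 0 k with h | h
    · left; exact ⟨k.natAbs, by simp [K]; omega, by omega⟩
    · right; exact ⟨k.natAbs, by simp [K]; omega, by omega⟩
  have hpos : ∀ k : ℤ, 0 ≤ 1 / (A ^ 2 + (k:ℝ) ^ 2) := fun k => by positivity
  refine (Finset.sum_le_sum_of_subset_of_nonneg hsub (fun i _ _ => hpos i)).trans ?_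
  have hui := Finset.sum_union_inter (s₁ := (Finset.range K).image (fun i : ℕ => (i : ℤ)))
    (s₂ := (Finset.range K).image (fun i : ℕ => -(i : ℤ))) (f := fun k : ℤ => 1 / (A ^ 2 + (k:ℝ) ^ 2))
  have hin : 0 ≤ ∑ k ∈ (Finset.range K).image (fun i : ℕ => (i : ℤ)) ∩
      (Finset.range K).image (fun i : ℕ => -(i : ℤ)), 1 / (A ^ 2 + (k:ℝ) ^ 2) :=
    Finset.sum_nonneg (fun i _ => hpos i)
  refine (le_add_of_nonneg_right hin).trans ?_
  rw [hui]
  rw [Finset.sum_image (by intro a _ b _ h; simpa using h),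
    Finset.sum_image (by intro a _ b _ h; simpa using h)]
  have := hb K
  simp only [Int.cast_natCast, Int.cast_neg, neg_sq]
  have e : 8 / A = 4/A + 4/A := by ring
  linarith

lemma gauss_le (c : ℝ) (hc : 0 < c) :
    ∫ θ in (-(1/2) : ℝ)..(1/2), Real.exp (-c * θ ^ 2) ≤ √(π / c) := by
  rw [← integral_gaussian, intervalIntegral.integral_of_le (by norm_num)]
  exact MeasureTheory.setIntegral_le_integral (integrable_exp_neg_mul_sq hc)
    (Filter.Eventually.of_forall (fun x => (Real.exp_pos _).le))

lemma sq_int_le (c B : ℝ) (hc : 0 < c) (F : ℝ → ℂ) (hF : Continuous F)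
    (h : ∀ θ ∈ Set.Icc (-(1/2) : ℝ) (1/2), ‖F θ‖ ≤ B * Real.exp (-c * θ ^ 2)) :
    ∫ θ in (-(1/2) : ℝ)..(1/2), ‖F θ‖ ^ 2 ≤ B ^ 2 * √(π / (2 * c)) := by
  have : ∫ θ in (-(1/2) : ℝ)..(1/2), ‖F θ‖ ^ 2 ≤
      ∫ θ in (-(1/2) : ℝ)..(1/2), B ^ 2 * Real.exp (-(2 * c) * θ ^ 2) := by
    refine intervalIntegral.integral_mono_on (by norm_num)
      ((by fun_prop : Continuous fun θ => ‖F θ‖ ^ 2).intervalIntegrable _ _)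
      ((by fun_prop : Continuous fun θ : ℝ => B ^ 2 * Real.exp (-(2 * c) * θ ^ 2)).intervalIntegrable _ _)
      (fun θ hθ => ?_)
    have := pow_le_pow_left₀ (norm_nonneg _) (h θ hθ) 2
    refine this.trans (le_of_eq ?_)
    rw [mul_pow, ← Real.exp_nat_mul]; congr 2; push_cast; ring
  refine this.trans ?_
  rw [intervalIntegral.integral_const_mul]
  exact mul_le_mul_of_nonneg_left (gauss_le _ (by linarith)) (sq_nonneg _)

lemma l1_of_gauss (c : ℝ) (hc : 0 < c) : ∃ C : ℝ, 0 < C ∧ ∀ (f : LP) (m B : ℝ), 1 ≤ m → 0 ≤ B →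
    (∀ θ ∈ Set.Icc (-(1/2) : ℝ) (1/2), ‖ev f θ‖ ≤ B * Real.exp (-(c * m) * θ ^ 2)) →
    (∀ θ ∈ Set.Icc (-(1/2) : ℝ) (1/2), ‖dv f θ‖ ≤ (B * √m) * Real.exp (-(c * m) * θ ^ 2)) →
    l1 f ≤ C * B := by
  refine ⟨√(16 * √(π / (2 * c))), by positivity, fun f m B hm hB h0 h1 => ?_⟩
  have hm0 : 0 < m := by linarith
  have i0 := sq_int_le (c * m) B (by positivity) (ev f) (ev_cont f) h0
  have i1 := sq_int_le (c * m) (B * √m) (by positivity) (dv f) (dv_cont f) h1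
  rw [ev_parseval] at i0
  rw [dv_parseval] at i1
  set S0 := ∑ k ∈ f.coeff.support, (f.coeff k) ^ 2
  have i2 : ∑ k ∈ f.coeff.support, (k:ℝ) ^ 2 * (f.coeff k) ^ 2 ≤
      ∑ k ∈ f.coeff.support, (2 * π * k) ^ 2 * (f.coeff k) ^ 2 := by
    refine Finset.sum_le_sum (fun k _ => mul_le_mul_of_nonneg_right ?_ (sq_nonneg _))
    have : 1 ≤ (2 * π) ^ 2 := by nlinarith [Real.pi_gt_three]
    rw [mul_pow]
    nlinarith [sq_nonneg (k:ℝ)]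
  have hsm : √m ^ 2 = m := Real.sq_sqrt hm0.le
  have hsm1 : 1 ≤ √m := Real.one_le_sqrt.mpr hm
  have cs : (l1 f) ^ 2 ≤ (∑ k ∈ f.coeff.support, 1 / ((√m) ^ 2 + (k:ℝ) ^ 2)) *
      (∑ k ∈ f.coeff.support, (m * (f.coeff k) ^ 2 + (k:ℝ) ^ 2 * (f.coeff k) ^ 2)) := by
    rw [l1_eq]
    refine Finset.sum_sq_le_sum_mul_sum_of_sq_le_mul _ (fun k _ => by positivity)
      (fun k _ => by positivity) (fun k _ => ?_)
    rw [hsm, sq_abs]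
    have : 0 < m + (k:ℝ)^2 := by positivity
    field_simp
    rfl
  rw [Finset.sum_add_distrib, ← Finset.mul_sum] at cs
  have hb := int_sum_bound (√m) hsm1 f.coeff.support
  have hg : √(π / (2 * (c * m))) = √(π / (2 * c)) / √m := by
    rw [← Real.sqrt_div (by positivity)]; congr 1; field_simp
  rw [hg] at i0 i1
  rw [mul_pow, hsm] at i1
  set G := √(π / (2 * c))
  have : (l1 f) ^ 2 ≤ 8 / √m * (m * (B ^ 2 * (G / √m)) + B ^ 2 * m * (G / √m)) := by
    refine cs.trans (mul_le_mul hb ?_ (by positivity) (by positivity))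
    refine add_le_add (mul_le_mul_of_nonneg_left i0 hm0.le) (i2.trans i1)
  have e : 8 / √m * (m * (B ^ 2 * (G / √m)) + B ^ 2 * m * (G / √m)) = 16 * G * B ^ 2 := by
    have : √m ≠ 0 := by positivity
    field_simp
    rw [hsm]; ring
  rw [e] at this
  have hl : l1 f ≤ √(16 * G * B ^ 2) := Real.le_sqrt_of_sq_le this
  rwa [Real.sqrt_mul (by positivity), Real.sqrt_sq hB] at hl


lemma ev_sub (f g : LP) (θ : ℝ) : ev (f - g) θ = ev f θ - ev g θ := by
  have := ev_add (f - g) g θ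
  rw [sub_add_cancel] at this
  rw [this]; ring

lemma ev_bt (a : ℤ →₀ ℝ) (θ : ℝ) : ev (bt a) θ = ∑ k ∈ a.support, (a k : ℂ) * ee (-k) θ := by
  unfold bt
  rw [ev_sum]
  exact Finset.sum_congr rfl (fun k _ => ev_sg _ _ _)

def gs (a : ℤ →₀ ℝ) (θ : ℝ) : ℝ := 2 * ∑ k ∈ a.support, a k * sin (π * k * θ) ^ 2

lemma ev_bt_eq (a : ℤ →₀ ℝ) (ha_symm : ∀ k : ℤ, a (-k) = a k)
    (ha0 : ∑ k ∈ a.support, a k = 0) (θ : ℝ) : ev (bt a) θ = ((- gs a θ : ℝ) : ℂ) := by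
  have e2 : ∑ k ∈ a.support, (a k : ℂ) * ee k θ = ∑ k ∈ a.support, (a k : ℂ) * ee (-k) θ := by
    refine Finset.sum_nbij' (fun k => -k) (fun k => -k) ?_ ?_ ?_ ?_ ?_
    · intro k hk; simpa [ha_symm] using hk
    · intro k hk; simpa [ha_symm] using hk
    · simp
    · simp
    · intro k hk; simp [ha_symm]
  have e3 : ev (bt a) θ = ∑ k ∈ a.support, ((a k * cos (2 * (π * k * θ)) : ℝ) : ℂ) := by
    have : 2 * ev (bt a) θ = 2 * ∑ k ∈ a.support, ((a k * cos (2 * (π * k * θ)) : ℝ) : ℂ) := by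
      rw [two_mul, ev_bt]
      conv_lhs => enter [1]; rw [← e2]
      rw [← Finset.sum_add_distrib, Finset.mul_sum]
      refine Finset.sum_congr rfl (fun k _ => ?_)
      push_cast
      rw [mul_left_comm, Complex.two_cos, ← mul_add]
      unfold ee
      rw [show (2 * π * k * Complex.I) * θ = 2 * (π * k * θ) * Complex.I by ring,
        show (2 * π * ((-k : ℤ) : ℂ) * Complex.I) * θ = -(2 * (π * k * θ)) * Complex.I by
          push_cast; ring]
    exact mul_left_cancel₀ two_ne_zero this
  rw [e3, ← Complex.ofReal_sum]
  congr 1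
  unfold gs
  have : ∀ k ∈ a.support, a k * cos (2 * (π * k * θ)) = a k - 2 * (a k * sin (π * k * θ) ^ 2) := by
    intro k _
    rw [Real.cos_two_mul, Real.cos_sq']; ring
  rw [Finset.sum_congr rfl this, Finset.sum_sub_distrib, ha0, ← Finset.mul_sum]; ring

lemma gs_lower (a : ℤ →₀ ℝ) (ha_symm : ∀ k : ℤ, a (-k) = a k)
    (ha0 : ∑ k ∈ a.support, a k = 0)
    (ha2 : ∑ k ∈ a.support, ((k : ℝ)) ^ 2 * a k = 2)
    (ha_four : ∀ θ : ℝ,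
      (∑ k ∈ a.support, (a k : ℂ) * Complex.exp (-(2 * Real.pi * k * θ) * Complex.I)) = 0 →
      ∃ z : ℤ, θ = (z : ℝ)) :
    ∃ c : ℝ, 0 < c ∧ ∀ θ ∈ Set.Icc (-(1/2) : ℝ) (1/2), c * θ ^ 2 ≤ gs a θ := by
  set G : ℝ → ℝ := fun θ => 2 * ∑ k ∈ a.support, a k * ((π * k) ^ 2 * sinc (π * k * θ) ^ 2) with hG
  have hGc : Continuous G := by
    refine continuous_const.mul (continuous_finsetSum _ (fun k _ => ?_))
    have := Real.continuous_sinc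
    fun_prop
  have hg : ∀ θ, gs a θ = θ ^ 2 * G θ := by
    intro θ
    simp only [hG, gs]
    rw [mul_left_comm (θ ^ 2) 2, Finset.mul_sum _ _ (θ ^ 2)]
    congr 1
    refine Finset.sum_congr rfl (fun k _ => ?_)
    rcases eq_or_ne (π * k * θ) 0 with h | h
    · rw [h]
      have : (θ * (π * k)) ^ 2 = 0 := by rw [show θ * (π * k) = π * k * θ by ring, h]; simp
      rw [show θ ^ 2 * (a k * ((π * k) ^ 2 * sinc 0 ^ 2)) = a k * sinc 0 ^ 2 * (θ * (π * k)) ^ 2 by ring,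
        this]
      simp
    · rw [Real.sinc_of_ne_zero h]
      have h1 : θ ≠ 0 := by rintro rfl; simp at h
      have h2 : (k:ℝ) ≠ 0 := by intro h'; rw [h'] at h; simp at h
      field_simp
  have hG0 : 0 < G 0 := by
    simp only [hG, mul_zero, Real.sinc_zero]
    have : ∑ k ∈ a.support, a k * ((π * k) ^ 2 * 1 ^ 2) = π ^ 2 * 2 := by
      rw [← ha2, Finset.mul_sum]
      exact Finset.sum_congr rfl (fun k _ => by ring)
    rw [this]; positivity
  have hne : ∀ θ ∈ Set.Icc (-(1/2) : ℝ) (1/2), G θ ≠ 0 := by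
    intro θ hθ h0
    have hθ0 : θ ≠ 0 := by rintro rfl; exact hG0.ne' h0
    have h1 := ev_bt_eq a ha_symm ha0 θ
    rw [hg, h0, mul_zero, neg_zero, Complex.ofReal_zero, ev_bt] at h1
    obtain ⟨z, hz⟩ := ha_four θ (by
      rw [← h1]
      refine Finset.sum_congr rfl (fun k _ => ?_)
      unfold ee
      congr 2; push_cast; ring)
    rw [hz] at hθ hθ0
    have h2 : (z:ℝ) < 1 := by linarith [hθ.2]
    have h3 : (-1:ℝ) < z := by linarith [hθ.1]
    have h4 : z < 1 := by exact_mod_cast h2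
    have h5 : -1 < z := by exact_mod_cast h3
    have : z = 0 := by omega
    simp [this] at hθ0
  have hpos : ∀ θ ∈ Set.Icc (-(1/2) : ℝ) (1/2), 0 < G θ := by
    intro θ hθ
    by_contra hcon
    push Not at hcon
    have hpc : IsPreconnected (Set.Icc (-(1/2) : ℝ) (1/2)) := isPreconnected_Icc
    have := hpc.intermediate_value hθ (by constructor <;> norm_num : (0:ℝ) ∈ _) hGc.continuousOn
    obtain ⟨x, hx, hx0⟩ := this ⟨hcon, hG0.le⟩
    exact hne x hx hx0
  obtain ⟨x, hx, hmin⟩ := isCompact_Icc.exists_isMinOn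
    (⟨0, by constructor <;> norm_num⟩ : (Set.Icc (-(1/2) : ℝ) (1/2)).Nonempty) hGc.continuousOn
  refine ⟨G x, hpos x hx, fun θ hθ => ?_⟩
  rw [hg, mul_comm]
  exact mul_le_mul_of_nonneg_left (hmin hθ) (sq_nonneg _)

lemma pp_ev_le (a : ℤ →₀ ℝ) (ha_symm : ∀ k : ℤ, a (-k) = a k)
    (ha0 : ∑ k ∈ a.support, a k = 0)
    (ha2 : ∑ k ∈ a.support, ((k : ℝ)) ^ 2 * a k = 2)
    (ha_four : ∀ θ : ℝ,
      (∑ k ∈ a.support, (a k : ℂ) * Complex.exp (-(2 * Real.pi * k * θ) * Complex.I)) = 0 →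
      ∃ z : ℤ, θ = (z : ℝ)) :
    ∃ c : ℝ, 0 < c ∧ ∀ θ ∈ Set.Icc (-(1/2) : ℝ) (1/2), ‖ev (pp a) θ‖ ≤ exp (-c * θ ^ 2) := by
  obtain ⟨c, hc, h⟩ := gs_lower a ha_symm ha0 ha2 ha_four
  have hnu : 0 < nub a := by
    refine lt_of_le_of_ne (Finset.sum_nonneg fun _ _ => abs_nonneg _) (fun h0 => ?_)
    have := (Finset.sum_eq_zero_iff_of_nonneg (fun k _ => abs_nonneg (a k))).mp h0.symm
    have h2 : ∑ k ∈ a.support, ((k : ℝ)) ^ 2 * a k = 0 :=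
      Finset.sum_eq_zero (fun k hk => by rw [abs_eq_zero.mp (this k hk), mul_zero])
    linarith
  refine ⟨(2 * nub a)⁻¹ * c, by positivity, fun θ hθ => ?_⟩
  have hup : |gs a θ| ≤ nub a := by
    have e := ev_bt_eq a ha_symm ha0 θ
    have : ‖ev (bt a) θ‖ ≤ nub a := by
      rw [ev_bt]
      refine (norm_sum_le _ _).trans (Finset.sum_le_sum (fun k _ => ?_))
      rw [norm_mul, ee_norm]; simp
    rwa [e, Complex.norm_real, norm_neg] at this
  have e1 : ev (pp a) θ = ((1 - (2 * nub a)⁻¹ * gs a θ : ℝ) : ℂ) := by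
    unfold pp
    rw [ev_add, ev_one, ev_mul, ev_sg, ev_bt_eq a ha_symm ha0]
    simp [ee]; ring
  rw [e1, Complex.norm_real, Real.norm_eq_abs]
  have h1 : (2 * nub a)⁻¹ * gs a θ ≤ 1 := by
    rw [inv_mul_le_iff₀ (by positivity)]
    linarith [(abs_le.mp hup).2]
  rw [abs_of_nonneg (by linarith)]
  have h2 := mul_le_mul_of_nonneg_left (h θ hθ) (by positivity : 0 ≤ (2 * nub a)⁻¹)
  have h3 := Real.add_one_le_exp (-((2 * nub a)⁻¹ * c) * θ ^ 2)
  linarith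

lemma ev_UU_le (θ : ℝ) : ‖ev UU θ‖ ≤ 2 * π * |θ| := by
  unfold UU
  rw [ev_sub, ev_one, ev_sg]
  have := Real.norm_exp_I_mul_ofReal_sub_one_le (x := 2 * π * θ)
  rw [Real.norm_eq_abs, abs_mul, abs_of_pos (by positivity : 0 < 2 * π)] at this
  refine le_trans (le_of_eq ?_) this
  unfold ee
  congr 2
  rw [Complex.ofReal_one, one_mul]
  congr 1
  push_cast; ring

lemma dv_UU (θ : ℝ) : dv UU θ = 2 * π * Complex.I * ee 1 θ := by
  have h1 := ev_hasDeriv UU θ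
  have h2 := (ee_hasDeriv 1 θ).sub_const (1:ℂ)
  have : ev UU = fun x => ee 1 x - 1 := by
    funext x; unfold UU; rw [ev_sub, ev_one, ev_sg]; simp
  rw [this] at h1
  rw [h1.unique h2]; simp

lemma dv_UU_le (θ : ℝ) : ‖dv UU θ‖ ≤ 2 * π := by
  rw [dv_UU]
  simp [ee_norm, abs_of_pos Real.pi_pos]

lemma dv_pp_le (a : ℤ →₀ ℝ) (ha_symm : ∀ k : ℤ, a (-k) = a k)
    (ha0 : ∑ k ∈ a.support, a k = 0) :
    ∃ D : ℝ, 0 ≤ D ∧ ∀ θ ∈ Set.Icc (-(1/2) : ℝ) (1/2), ‖dv (pp a) θ‖ ≤ D * |θ| := by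
  obtain ⟨w, hw⟩ := bt_dvd_two a ha_symm ha0
  set v := sg 0 (2 * nub a)⁻¹ * w with hv
  have hp : pp a = 1 + UU * (UU * v) := by
    unfold pp; rw [hw, hv]; ring
  obtain ⟨C1, h1⟩ := isCompact_Icc.exists_bound_of_continuousOn (s := Set.Icc (-(1/2) : ℝ) (1/2))
    (ev_cont v).continuousOn
  obtain ⟨C2, h2⟩ := isCompact_Icc.exists_bound_of_continuousOn (s := Set.Icc (-(1/2) : ℝ) (1/2))
    (dv_cont v).continuousOn
  have hC1 : 0 ≤ C1 := (norm_nonneg _).trans (h1 0 (by constructor <;> norm_num))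
  have hC2 : 0 ≤ C2 := (norm_nonneg _).trans (h2 0 (by constructor <;> norm_num))
  refine ⟨2 * π * (2 * π * C1) + 2 * π * (2 * π * C1 + 2 * π * C2), by positivity, fun θ hθ => ?_⟩
  have e : dv (pp a) θ = dv (UU * (UU * v)) θ := by
    have h1 := ev_hasDeriv (pp a) θ
    have h2 := (ev_hasDeriv (UU * (UU * v)) θ).const_add (1:ℂ)
    have : ev (pp a) = fun x => 1 + ev (UU * (UU * v)) x := by
      funext x; rw [hp, ev_add, ev_one]
    rw [this] at h1
    exact h1.unique h2
  have hθ1 : |θ| ≤ 1 := by rw [abs_le]; constructor <;> linarith [hθ.1, hθ.2]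
  rw [e, dv_mul, dv_mul, ev_mul]
  have hpi := Real.pi_pos
  have a1 := ev_UU_le θ
  have a2 := dv_UU_le θ
  have b1 := h1 θ hθ
  have b2 := h2 θ hθ
  have t1 : ‖dv UU θ * (ev UU θ * ev v θ)‖ ≤ 2 * π * ((2 * π * |θ|) * C1) := by
    rw [norm_mul, norm_mul]; gcongr
  have t2 : ‖dv UU θ * ev v θ + ev UU θ * dv v θ‖ ≤ 2 * π * C1 + (2 * π * 1) * C2 := by
    refine (norm_add_le _ _).trans ?_
    rw [norm_mul, norm_mul]
    have : ‖ev UU θ‖ ≤ 2 * π * 1 := a1.trans (by gcongr)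
    gcongr
  have t3 : ‖ev UU θ * (dv UU θ * ev v θ + ev UU θ * dv v θ)‖ ≤
      (2 * π * |θ|) * (2 * π * C1 + (2 * π * 1) * C2) := by
    rw [norm_mul]; gcongr
  refine (norm_add_le _ _).trans ((add_le_add t1 t3).trans (le_of_eq ?_))
  ring

lemma y_exp_le (c y : ℝ) (hc : 0 < c) : y * exp (-c * y ^ 2) ≤ 1 / √c := by
  have hs : 0 < √c := by positivity
  have h1 : √c * y ≤ exp (c * y ^ 2) := by
    have := Real.add_one_le_exp (c * y ^ 2)
    have h2 : √c ^ 2 = c := Real.sq_sqrt hc.le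
    nlinarith [sq_nonneg (√c * y - 1/2)]
  rw [neg_mul, Real.exp_neg, ← div_eq_mul_inv, div_le_div_iff₀ (exp_pos _) hs]
  linarith

lemma y2_exp_le (c y : ℝ) (hc : 0 < c) : y ^ 2 * exp (-c * y ^ 2) ≤ 1 / c := by
  have := Real.add_one_le_exp (c * y ^ 2)
  rw [neg_mul, Real.exp_neg, ← div_eq_mul_inv, div_le_div_iff₀ (exp_pos _) hc]
  linarith

lemma heat_l1 (p : LP) (c D : ℝ) (hc : 0 < c) (hD : 0 ≤ D)
    (h0 : ∀ θ ∈ Set.Icc (-(1/2) : ℝ) (1/2), ‖ev p θ‖ ≤ exp (-c * θ ^ 2))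
    (h1 : ∀ θ ∈ Set.Icc (-(1/2) : ℝ) (1/2), ‖dv p θ‖ ≤ D * |θ|) :
    ∃ C : ℝ, 1 ≤ C ∧ (∀ m : ℕ, l1 (p ^ m) ≤ C) ∧
      ∀ m : ℕ, l1 (UU * p ^ m) ≤ C * ((m:ℝ) + 1) ^ (-(1/2) : ℝ) := by
  obtain ⟨C0, hC0, hl⟩ := l1_of_gauss (c/2) (by positivity)
  set K := 1 / √(c/2) with hK
  set K2 := 1 / (c/2) with hK2
  have hKp : 0 < K := by positivity
  have hK2p : 0 < K2 := by positivity
  set E := D * exp c with hE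
  have hEp : 0 ≤ E := by positivity
  have hpi := Real.pi_pos
  -- pointwise bounds
  have hev : ∀ m : ℕ, ∀ θ ∈ Set.Icc (-(1/2) : ℝ) (1/2), ‖ev (p ^ m) θ‖ ≤
      exp (-(c/2*m) * θ ^ 2) * exp (-(c/2) * (√m * |θ|) ^ 2) := by
    intro m θ hθ
    rw [ev_pow, norm_pow, ← Real.exp_add]
    refine (pow_le_pow_left₀ (norm_nonneg _) (h0 θ hθ) m).trans (le_of_eq ?_)
    rw [← Real.exp_nat_mul]
    congr 1
    rw [mul_pow, Real.sq_sqrt (Nat.cast_nonneg m), sq_abs]; ring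
  have hdv : ∀ m : ℕ, 1 ≤ m → ∀ θ ∈ Set.Icc (-(1/2) : ℝ) (1/2), ‖dv (p ^ m) θ‖ ≤
      E * √m * (√m * |θ|) * (exp (-(c/2*m) * θ ^ 2) * exp (-(c/2) * (√m * |θ|) ^ 2)) := by
    intro m hm θ hθ
    have hθ1 : θ ^ 2 ≤ 1 := by nlinarith [hθ.1, hθ.2]
    rw [dv_pow, norm_mul, norm_mul, norm_pow, Complex.norm_natCast]
    have e1 : ‖ev p θ‖ ^ (m - 1) ≤ exp c *
        (exp (-(c/2*m) * θ ^ 2) * exp (-(c/2) * (√m * |θ|) ^ 2)) := by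
      refine (pow_le_pow_left₀ (norm_nonneg _) (h0 θ hθ) (m-1)).trans ?_
      rw [← Real.exp_nat_mul, ← Real.exp_add, ← Real.exp_add]
      apply Real.exp_le_exp.mpr
      rw [mul_pow, Real.sq_sqrt (Nat.cast_nonneg m), sq_abs, Nat.cast_sub hm]
      push_cast
      nlinarith
    calc (m:ℝ) * ‖ev p θ‖ ^ (m - 1) * ‖dv p θ‖ ≤ m * (exp c *
        (exp (-(c/2*m) * θ ^ 2) * exp (-(c/2) * (√m * |θ|) ^ 2))) * (D * |θ|) := by
          gcongr; exact h1 θ hθ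
      _ = D * exp c * (m) * |θ| * (exp (-(c/2*m) * θ ^ 2) * exp (-(c/2) * (√m * |θ|) ^ 2)) := by ring
      _ = _ := by
        have hs := Real.mul_self_sqrt (Nat.cast_nonneg m : (0:ℝ) ≤ m)
        rw [hE]
        generalize exp (-(c/2*m) * θ ^ 2) * exp (-(c/2) * (√m * |θ|) ^ 2) = X
        linear_combination (-(D * exp c * |θ| * X)) * hs
  have bound0 : ∀ m : ℕ, 1 ≤ m → l1 (p ^ m) ≤ C0 * (1 + E * K) := by
    intro m hm
    have hm1 : (1:ℝ) ≤ m := by exact_mod_cast hm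
    refine hl (p ^ m) m _ hm1 (by positivity) (fun θ hθ => ?_) (fun θ hθ => ?_)
    · refine (hev m θ hθ).trans ?_
      rw [mul_comm]
      refine mul_le_mul_of_nonneg_right ?_ (exp_pos _).le
      have : exp (-(c/2) * (√m * |θ|) ^ 2) ≤ 1 := Real.exp_le_one_iff.mpr (by
        have : 0 ≤ c/2 * (√m * |θ|)^2 := by positivity
        linarith)
      have : 0 ≤ E * K := by positivity
      linarith
    · refine (hdv m hm θ hθ).trans ?_
      have hy := y_exp_le (c/2) (√m * |θ|) (by positivity)
      calc _ = E * √m * ((√m * |θ|) * exp (-(c/2) * (√m * |θ|) ^ 2)) * exp (-(c/2*m) * θ ^ 2) := by ring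
        _ ≤ E * √m * K * exp (-(c/2*m) * θ ^ 2) := by gcongr
        _ ≤ _ := by
          refine mul_le_mul_of_nonneg_right ?_ (exp_pos _).le
          nlinarith [Real.sqrt_nonneg (m:ℝ)]
  set B1 := 2 * π * K + 2 * π + 2 * π * E * K2 with hB1
  have hB1p : 0 < B1 := by positivity
  have bound1 : ∀ m : ℕ, 1 ≤ m → l1 (UU * p ^ m) ≤ C0 * (B1 / √m) := by
    intro m hm
    have hm1 : (1:ℝ) ≤ m := by exact_mod_cast hm
    have hsm : 0 < √(m:ℝ) := by positivity
    refine hl (UU * p ^ m) m _ hm1 (by positivity) (fun θ hθ => ?_) (fun θ hθ => ?_)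
    · rw [ev_mul, norm_mul]
      have hy := y_exp_le (c/2) (√m * |θ|) (by positivity)
      calc _ ≤ (2 * π * |θ|) * (exp (-(c/2*m) * θ ^ 2) * exp (-(c/2) * (√m * |θ|) ^ 2)) :=
            mul_le_mul (ev_UU_le θ) (hev m θ hθ) (norm_nonneg _) (by positivity)
        _ = (2 * π / √m) * ((√m * |θ|) * exp (-(c/2) * (√m * |θ|) ^ 2)) * exp (-(c/2*m) * θ ^ 2) := by
            field_simp
        _ ≤ (2 * π / √m) * K * exp (-(c/2*m) * θ ^ 2) := by gcongr
        _ ≤ _ := by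
          refine mul_le_mul_of_nonneg_right ?_ (exp_pos _).le
          rw [div_mul_eq_mul_div]
          have : 0 ≤ 2 * π * E * K2 := by positivity
          gcongr
          rw [hB1]; linarith
    · rw [div_mul_cancel₀ _ hsm.ne', dv_mul]
      have hy := y2_exp_le (c/2) (√m * |θ|) (by positivity)
      have hle1 : exp (-(c/2) * (√m * |θ|) ^ 2) ≤ 1 := Real.exp_le_one_iff.mpr (by
        have : 0 ≤ c/2 * (√m * |θ|)^2 := by positivity
        linarith)
      have t1 : ‖dv UU θ * ev (p^m) θ‖ ≤ 2 * π * exp (-(c/2*m) * θ ^ 2) := by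
        rw [norm_mul]
        refine mul_le_mul (dv_UU_le θ) ((hev m θ hθ).trans ?_) (norm_nonneg _) (by positivity)
        exact mul_le_of_le_one_right (exp_pos _).le hle1
      have t2 : ‖ev UU θ * dv (p^m) θ‖ ≤ 2 * π * E * K2 * exp (-(c/2*m) * θ ^ 2) := by
        rw [norm_mul]
        calc _ ≤ (2 * π * |θ|) * (E * √m * (√m * |θ|) *
              (exp (-(c/2*m) * θ ^ 2) * exp (-(c/2) * (√m * |θ|) ^ 2))) :=
              mul_le_mul (ev_UU_le θ) (hdv m hm θ hθ) (norm_nonneg _) (by positivity)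
          _ = 2 * π * E * ((√m * |θ|) ^ 2 * exp (-(c/2) * (√m * |θ|) ^ 2)) * exp (-(c/2*m) * θ ^ 2) := by
              ring
          _ ≤ _ := by gcongr
      refine (norm_add_le _ _).trans ((add_le_add t1 t2).trans ?_)
      rw [← add_mul]
      refine mul_le_mul_of_nonneg_right ?_ (exp_pos _).le
      have : 0 ≤ 2 * π * K := by positivity
      rw [hB1]; linarith
  have hUU : l1 UU ≤ 2 := by
    unfold UU
    rw [sub_eq_add_neg]
    refine (l1_add_le _ _).trans ?_
    rw [l1_neg, l1_one, l1_sg]; norm_num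
  refine ⟨2 + C0 * (1 + E * K) + 2 * (C0 * B1), ?_, ?_, ?_⟩
  · have : 0 ≤ C0 * (1 + E * K) + 2 * (C0 * B1) := by positivity
    linarith
  · intro m
    have p1 : 0 ≤ C0 * (1 + E * K) := by positivity
    have p2 : 0 ≤ 2 * (C0 * B1) := by positivity
    rcases Nat.eq_zero_or_pos m with rfl | hm
    · rw [pow_zero, l1_one]; linarith
    · have := bound0 m hm; linarith
  · intro m
    have p1 : 0 ≤ C0 * (1 + E * K) := by positivity
    have p2 : 0 ≤ 2 * (C0 * B1) := by positivity
    rcases Nat.eq_zero_or_pos m with rfl | hm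
    · rw [pow_zero, mul_one]; norm_num; linarith
    · have := bound1 m hm
      have hm1 : (1:ℝ) ≤ m := by exact_mod_cast hm
      have hsm : 0 < √(m:ℝ) := by positivity
      refine this.trans ?_
      rw [Real.rpow_neg (by positivity), ← Real.sqrt_eq_rpow]
      have hs : √((m:ℝ)+1) ≤ 2 * √m := by
        rw [Real.sqrt_le_left (by positivity), mul_pow, Real.sq_sqrt (by positivity)]; linarith
      rw [← mul_div_assoc, ← div_eq_mul_inv, div_le_div_iff₀ hsm (by positivity)]
      have p3 : 0 < C0 * B1 := by positivity
      nlinarith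

lemma heat_l1_pow (p : LP) (C : ℝ) (hC : 1 ≤ C) (h0 : ∀ m : ℕ, l1 (p ^ m) ≤ C)
    (h1 : ∀ m : ℕ, l1 (UU * p ^ m) ≤ C * ((m:ℝ) + 1) ^ (-(1/2) : ℝ)) (k : ℕ) :
    ∃ C' : ℝ, 0 < C' ∧ ∀ m : ℕ, l1 (UU ^ k * p ^ m) ≤ C' * ((m:ℝ) + 1) ^ (-(k:ℝ)/2) := by
  induction k with
  | zero => exact ⟨C, by linarith, fun m => by simpa using h0 m⟩
  | succ k ih =>
    obtain ⟨C', hC', h⟩ := ih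
    refine ⟨C * C' * 2 ^ (((k:ℝ)+1)/2), by positivity, fun m => ?_⟩
    have e : UU ^ (k+1) * p ^ m = (UU * p ^ (m/2)) * (UU ^ k * p ^ (m - m/2)) := by
      have : p ^ m = p ^ (m/2) * p ^ (m - m/2) := by rw [← pow_add]; congr 1; omega
      rw [this]; ring
    rw [e]
    refine (l1_mul_le' (h1 _) (h _)).trans ?_
    have g : ∀ i : ℕ, m ≤ 2 * i + 1 → ∀ x : ℝ, 0 ≤ x →
        ((i:ℝ)+1) ^ (-x) ≤ 2 ^ x * ((m:ℝ)+1) ^ (-x) := by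
      intro i hi x hx
      have hi' : (m:ℝ) ≤ 2 * i + 1 := by exact_mod_cast hi
      have : (((m:ℝ)+1)/2) ≤ (i:ℝ)+1 := by linarith
      refine (Real.rpow_le_rpow_of_nonpos (by positivity) this (by linarith)).trans (le_of_eq ?_)
      rw [Real.div_rpow (by positivity) (by norm_num), Real.rpow_neg (by norm_num : (0:ℝ) ≤ 2)]
      field_simp
    have g1 := g (m/2) (by omega) (1/2) (by norm_num)
    have g2 := g (m - m/2) (by omega) ((k:ℝ)/2) (by positivity)
    rw [show -(k:ℝ)/2 = -((k:ℝ)/2) by ring]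
    calc _ ≤ (C * (2 ^ (1/2:ℝ) * ((m:ℝ)+1) ^ (-(1/2) : ℝ))) *
          (C' * (2 ^ ((k:ℝ)/2) * ((m:ℝ)+1) ^ (-((k:ℝ)/2)))) := by gcongr
      _ = C * C' * (2 ^ (1/2:ℝ) * 2 ^ ((k:ℝ)/2)) *
          (((m:ℝ)+1) ^ (-(1/2) : ℝ) * ((m:ℝ)+1) ^ (-((k:ℝ)/2))) := by ring
      _ = _ := by
        rw [← Real.rpow_add (by norm_num), ← Real.rpow_add (by positivity)]
        push_cast
        congr 2 <;> ring_nf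


def HZ (ε K β : ℝ) (r : ℕ) (Z : ℤ → ℝ) : Prop :=
  ∀ k : ℤ, ∀ lam : ℝ, lam ∈ Set.Icc ε 1 → ∀ φ : ℝ → ℝ, IsTestFunction r φ →
    |∑' j : ℤ, Z j * φ (lam⁻¹ * (ε * j - ε * k))| ≤ K * lam ^ (β + 1)

/-- bounded test functions -/
def BT (r : ℕ) (B : ℝ) (φ : ℝ → ℝ) : Prop :=
  ContDiff ℝ (⊤ : ℕ∞) φ ∧ (∀ y : ℝ, y ∉ Set.Icc (-1 : ℝ) 1 → φ y = 0) ∧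
    ∀ j ≤ r, ∀ y : ℝ, |iteratedDeriv j φ y| ≤ B

lemma cd_le {φ : ℝ → ℝ} (h : ContDiff ℝ (⊤ : ℕ∞) φ) (n : ℕ) : ContDiff ℝ n φ :=
  h.of_le (by exact_mod_cast le_top)

lemma pr_samp_le {ε K β : ℝ} {r : ℕ} {Z : ℤ → ℝ} (hε : 0 < ε) (hZ : HZ ε K β r Z)
    {B : ℝ} (hB : 0 < B) {φ : ℝ → ℝ} (hφ : BT r B φ) {Λ c : ℝ} (hΛ : 1 ≤ Λ) (hΛε : ε * Λ ≤ 1)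
    {f : LP} (hf : ∀ i : ℤ, f.coeff i = c * φ (-(i:ℝ) / Λ)) (k : ℤ) :
    |pr Z k f| ≤ |c| * (B * (K * (ε * Λ) ^ (β + 1))) := by
  have ht : IsTestFunction r (fun y => B⁻¹ * φ y) := by
    obtain ⟨h1, h2, h3⟩ := hφ
    refine ⟨contDiff_const.mul h1, fun y hy => by simp [h2 y hy], fun j hj y => ?_⟩
    have := iteratedDeriv_const_mul (n := j) (x := y) B⁻¹ ((cd_le h1 j).contDiffAt)
    rw [this, abs_mul, abs_of_pos (inv_pos.2 hB), inv_mul_le_iff₀ hB, mul_one]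
    exact h3 j hj y
  have := hZ k (ε * Λ) ⟨by nlinarith, hΛε⟩ _ ht
  rw [← pr_eq_tsum]
  have e : ∀ j : ℤ, Z j * f.coeff (k - j) =
      (c * B) * (Z j * (B⁻¹ * φ ((ε * Λ)⁻¹ * (ε * j - ε * k)))) := by
    intro j
    rw [hf]
    have : -(((k - j : ℤ)):ℝ) / Λ = (ε * Λ)⁻¹ * (ε * j - ε * k) := by
      push_cast; field_simp; ring
    rw [this]; field_simp
  rw [tsum_congr e, tsum_mul_left, abs_mul, abs_mul, abs_of_pos hB, mul_assoc]
  gcongr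

/-! chi and friends -/

def chi : ContDiffBump (0:ℝ) := ⟨1/4, 1/2, by norm_num, by norm_num⟩

lemma chi_smooth : ContDiff ℝ (⊤ : ℕ∞) chi := chi.contDiff

lemma chi_one {u : ℝ} (h : |u| ≤ 1/4) : chi u = 1 :=
  chi.one_of_mem_closedBall (by simpa [chi, Real.norm_eq_abs] using h)

lemma chi_zero {u : ℝ} (h : 1/2 ≤ |u|) : chi u = 0 :=
  chi.zero_of_le_dist (by simpa [chi, Real.dist_eq] using h)

lemma abs_mul_smooth {ψ : ℝ → ℝ} (h : ContDiff ℝ (⊤ : ℕ∞) ψ) {c : ℝ} (hc : 0 < c)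
    (h0 : ∀ u, |u| ≤ c → ψ u = 0) : ContDiff ℝ (⊤ : ℕ∞) (fun u => |u| * ψ u) := by
  rw [contDiff_iff_contDiffAt]
  intro u
  rcases eq_or_ne u 0 with rfl | hu
  · have : (fun u => |u| * ψ u) =ᶠ[nhds 0] fun _ => 0 := by
      filter_upwards [Metric.ball_mem_nhds (0:ℝ) hc] with x hx
      rw [h0 x, mul_zero]
      rw [Metric.mem_ball, Real.dist_eq, sub_zero] at hx
      exact hx.le
    exact (contDiffAt_const).congr_of_eventuallyEq this
  · exact (contDiffAt_abs hu).mul h.contDiffAt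

lemma bdd_on {F : ℝ → ℝ} (h : ContDiff ℝ (⊤ : ℕ∞) F) (r : ℕ) :
    ∃ B : ℝ, 0 < B ∧ ∀ j ≤ r, ∀ u ∈ Set.Icc (-1:ℝ) 1, |iteratedDeriv j F u| ≤ B := by
  have : ∀ j : ℕ, ∃ B : ℝ, 0 < B ∧ ∀ u ∈ Set.Icc (-1:ℝ) 1, |iteratedDeriv j F u| ≤ B := by
    intro j
    have hc : Continuous (iteratedDeriv j F) := (cd_le h j).continuous_iteratedDeriv j le_rfl
    obtain ⟨B, hB⟩ := (isCompact_Icc (a := (-1:ℝ)) (b := 1)).exists_bound_of_continuousOn hc.continuousOn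
    exact ⟨max B 1, by positivity, fun u hu => (hB u hu).trans (le_max_left _ _)⟩
  choose B hB0 hB using this
  refine ⟨∑ j ∈ Finset.range (r+1), B j, Finset.sum_pos (fun j _ => hB0 j) (by simp), ?_⟩
  intro j hj u hu
  refine (hB j u hu).trans ?_
  exact Finset.single_le_sum (fun i _ => (hB0 i).le) (Finset.mem_range.2 (by omega))

lemma bt_of_supp {F : ℝ → ℝ} (h : ContDiff ℝ (⊤ : ℕ∞) F)
    (h0 : ∀ y : ℝ, y ∉ Set.Icc (-1 : ℝ) 1 → F y = 0) (r : ℕ) : ∃ B : ℝ, 0 < B ∧ BT r B F := by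
  obtain ⟨B, hB, hb⟩ := bdd_on h r
  refine ⟨B, hB, h, h0, fun j hj y => ?_⟩
  by_cases hy : y ∈ Set.Icc (-1:ℝ) 1
  · exact hb j hj y hy
  · have : F =ᶠ[nhds y] fun _ => 0 := by
      filter_upwards [isClosed_Icc.isOpen_compl.mem_nhds hy] with x hx
      exact h0 x hx
    rw [this.iteratedDeriv_eq j, iteratedDeriv_const]
    split_ifs <;> simp [hB.le]

def gg (u : ℝ) : ℝ := |u| * (chi u - chi (2 * u))

lemma gg_bt (r : ℕ) : ∃ B : ℝ, 0 < B ∧ BT r B gg := by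
  refine bt_of_supp ?_ ?_ r
  · refine abs_mul_smooth (c := 1/8) ?_ (by norm_num) ?_
    · exact chi_smooth.sub (chi_smooth.comp (contDiff_const.mul contDiff_id))
    · intro u hu
      rw [chi_one (by linarith), chi_one (by rw [abs_mul, abs_two]; linarith), sub_self]
  · intro y hy
    have : 1 < |y| := by
      by_contra h
      exact hy (abs_le.1 (not_lt.1 h))
    unfold gg
    rw [chi_zero (by linarith), chi_zero (by rw [abs_mul, abs_two]; linarith)]; simp

def GT (u : ℝ) : ℝ := 1/2 * (|u| * (1 - chi u))

lemma GT_smooth : ContDiff ℝ (⊤ : ℕ∞) GT := by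
  refine contDiff_const.mul (abs_mul_smooth (c := 1/4) (contDiff_const.sub chi_smooth) (by norm_num) ?_)
  intro u hu
  rw [chi_one hu, sub_self]

lemma GT_lin {u : ℝ} (h : 1/2 ≤ |u|) : GT u = 1/2 * |u| := by
  unfold GT; rw [chi_zero h]; ring

lemma iter_lin (c u : ℝ) (j : ℕ) : iteratedDeriv (j+2) (fun x : ℝ => c * x) u = 0 := by
  rw [iteratedDeriv_succ', iteratedDeriv_succ']
  have : deriv (fun x : ℝ => c * x) = fun _ => c := by
    funext x; simp
  rw [this]
  have : deriv (fun _ : ℝ => c) = fun _ => 0 := by funext x; simp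
  rw [this, iteratedDeriv_const]; split_ifs <;> rfl

lemma GT_bdd (r : ℕ) : ∃ B : ℝ, 0 < B ∧ ∀ j ≤ r, ∀ u : ℝ, |iteratedDeriv (j+2) GT u| ≤ B := by
  obtain ⟨B, hB, hb⟩ := bdd_on GT_smooth (r+2)
  refine ⟨B, hB, fun j hj y => ?_⟩
  by_cases hy : y ∈ Set.Icc (-1:ℝ) 1
  · exact hb (j+2) (by omega) y hy
  · have h1 : y < -1 ∨ 1 < y := by
      by_contra h
      push Not at h
      exact hy ⟨h.1, h.2⟩
    have : ∃ c : ℝ, GT =ᶠ[nhds y] fun x => c * x := by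
      rcases h1 with h | h
      · refine ⟨-(1/2), ?_⟩
        filter_upwards [Iio_mem_nhds h] with x hx
        have hx : x < -1 := hx
        have : |x| = -x := abs_of_neg (by linarith)
        rw [GT_lin (by rw [this]; linarith), this]; ring
      · refine ⟨1/2, ?_⟩
        filter_upwards [Ioi_mem_nhds h] with x hx
        have hx : 1 < x := hx
        have : |x| = x := abs_of_pos (by linarith)
        rw [GT_lin (by rw [this]; linarith), this]
    obtain ⟨c, hc⟩ := this
    rw [hc.iteratedDeriv_eq, iter_lin, abs_zero]; exact hB.le

lemma second_diff {F : ℝ → ℝ} (hF : ContDiff ℝ 2 F) {B : ℝ} (hB : ∀ u, |deriv (deriv F) u| ≤ B)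
    {h : ℝ} (hh : 0 < h) (u : ℝ) : |F (u + h) - 2 * F u + F (u - h)| ≤ B * h ^ 2 := by
  have hd : Differentiable ℝ F := hF.differentiable (by norm_num)
  have hd1 : ContDiff ℝ 1 (deriv F) := by
    have : ContDiff ℝ (1+1) F := by simpa [one_add_one_eq_two] using hF
    exact (contDiff_succ_iff_deriv.1 this).2.2
  have hd2 : Differentiable ℝ (deriv F) := hd1.differentiable (by norm_num)
  have hk : ∀ v, HasDerivAt (fun v => F (v + h) - F v) (deriv F (v + h) - deriv F v) v := by
    intro v
    exact ((hd (v+h)).hasDerivAt.comp_add_const v h).sub (hd v).hasDerivAt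
  have h1 : ∀ v, |deriv F (v + h) - deriv F v| ≤ B * h := by
    intro v
    have := Convex.norm_image_sub_le_of_norm_deriv_le (f := deriv F) (C := B) (s := Set.univ)
      (fun x _ => hd2 x) (fun x _ => hB x) convex_univ (Set.mem_univ v) (Set.mem_univ (v+h))
    simpa [Real.norm_eq_abs, abs_of_pos hh] using this
  have := Convex.norm_image_sub_le_of_norm_hasDerivWithin_le (f := fun v => F (v + h) - F v) (C := B * h)
      (s := Set.univ)
      (fun x _ => (hk x).hasDerivWithinAt) (fun x _ => h1 x) convex_univ (Set.mem_univ (u-h)) (Set.mem_univ u)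
  rw [Real.norm_eq_abs, Real.norm_eq_abs, sub_sub_cancel, abs_of_pos hh] at this
  calc _ = |F (u + h) - F u - (F (u - h + h) - F (u - h))| := by congr 1; rw [sub_add_cancel]; ring
    _ ≤ _ := this
    _ = _ := by ring

def PhT (h u : ℝ) : ℝ := (h ^ 2)⁻¹ * (GT (u + h) - 2 * GT u + GT (u - h))

lemma PhT_bt (r : ℕ) : ∃ B : ℝ, 0 < B ∧ ∀ h : ℝ, 0 < h → h ≤ 1/2 → BT r B (PhT h) := by
  obtain ⟨B, hB, hb⟩ := GT_bdd r
  refine ⟨B, hB, fun h h0 h1 => ⟨?_, ?_, ?_⟩⟩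
  · have h1 : ContDiff ℝ (⊤ : ℕ∞) (fun u => GT (u + h)) := GT_smooth.comp (contDiff_id.add contDiff_const)
    have h2 : ContDiff ℝ (⊤ : ℕ∞) (fun u => GT (u - h)) := GT_smooth.comp (contDiff_id.sub contDiff_const)
    exact contDiff_const.mul ((h1.sub (contDiff_const.mul GT_smooth)).add h2)
  · intro y hy
    have h1 : y < -1 ∨ 1 < y := by
      by_contra h
      push Not at h
      exact hy ⟨h.1, h.2⟩
    unfold PhT
    rcases h1 with h | h
    · rw [GT_lin (by rw [abs_of_neg (by linarith)]; linarith),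
        GT_lin (by rw [abs_of_neg (by linarith)]; linarith),
        GT_lin (by rw [abs_of_neg (by linarith)]; linarith), abs_of_neg (by linarith),
        abs_of_neg (by linarith), abs_of_neg (by linarith)]
      ring
    · rw [GT_lin (by rw [abs_of_pos (by linarith)]; linarith),
        GT_lin (by rw [abs_of_pos (by linarith)]; linarith),
        GT_lin (by rw [abs_of_pos (by linarith)]; linarith), abs_of_pos (by linarith),
        abs_of_pos (by linarith), abs_of_pos (by linarith)]
      ring
  · intro j hj y
    have e : iteratedDeriv j (PhT h) y = (h ^ 2)⁻¹ *
        (iteratedDeriv j GT (y + h) - 2 * iteratedDeriv j GT y + iteratedDeriv j GT (y - h)) := by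
      have h1 : ContDiff ℝ (⊤ : ℕ∞) (fun u => GT (u + h)) := GT_smooth.comp (contDiff_id.add contDiff_const)
      have h2 : ContDiff ℝ (⊤ : ℕ∞) (fun u => GT (u - h)) := GT_smooth.comp (contDiff_id.sub contDiff_const)
      have h1j := (cd_le h1 j).contDiffAt (x := y)
      have h2j := (cd_le h2 j).contDiffAt (x := y)
      have h3j := (cd_le GT_smooth j).contDiffAt (x := y)
      have h4j := (cd_le (contDiff_const (c := (2:ℝ)).mul GT_smooth) j).contDiffAt (x := y)
      have e0 : PhT h = fun u => (h ^ 2)⁻¹ * (GT (u + h) - 2 * GT u + GT (u - h)) := rfl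
      rw [e0, iteratedDeriv_const_mul _ ((h1j.sub h4j).add h2j), iteratedDeriv_fun_add (h1j.sub h4j) h2j,
        iteratedDeriv_fun_sub h1j h4j, iteratedDeriv_const_mul _ h3j,
        iteratedDeriv_comp_add_const, iteratedDeriv_comp_sub_const]
    rw [e, abs_mul, abs_of_pos (by positivity), inv_mul_le_iff₀ (by positivity), mul_comm (h ^ 2)]
    refine second_diff ?_ ?_ h0 y
    · have := cd_le GT_smooth (2 + j)
      exact ContDiff.iterate_deriv' 2 j this |> fun h => by simpa [iteratedDeriv_eq_iterate] using h
    · intro u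
      rw [← iteratedDeriv_succ, ← iteratedDeriv_succ]
      exact hb j hj u


def hc (L : ℕ) (i : ℤ) : ℝ := 1/2 * (|(i:ℝ)| * chi (-(i:ℝ) / 2 ^ L))

def HH (L : ℕ) : LP := ∑ i ∈ Finset.Icc (-(2^L : ℤ)) (2^L), sg i (hc L i)

lemma sum_sg_coeff (s : Finset ℤ) (F : ℤ → ℝ) (h : ∀ i, i ∉ s → F i = 0) (j : ℤ) :
    (∑ i ∈ s, sg i (F i)).coeff j = F j := by
  classical
  rw [AddMonoidAlgebra.coeff_sum, Finsupp.finsetSum_apply]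
  simp only [sg_coeff, Finsupp.single_apply]
  rw [Finset.sum_ite_eq']
  split_ifs with hj
  · rfl
  · exact (h j hj).symm

lemma HH_coeff (L : ℕ) (j : ℤ) : (HH L).coeff j = hc L j := by
  refine sum_sg_coeff _ _ (fun i hi => ?_) j
  unfold hc
  have : (2:ℤ)^L < |i| := by
    by_contra h
    exact hi (Finset.mem_Icc.2 (abs_le.1 (not_lt.1 h)))
  have h2 : (2:ℝ)^L < |(i:ℝ)| := by exact_mod_cast this
  rw [chi_zero, mul_zero, mul_zero]
  rw [abs_div, abs_neg, abs_of_pos (by positivity : (0:ℝ) < 2^L), le_div_iff₀ (by positivity)]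
  have : (0:ℝ) < 2^L := by positivity
  linarith

lemma hc_zero (i : ℤ) : hc 0 i = 0 := by
  unfold hc
  rcases eq_or_ne i 0 with rfl | h
  · simp
  · have : (1:ℝ) ≤ |(i:ℝ)| := by exact_mod_cast Int.one_le_abs h
    rw [chi_zero]; · simp
    simp only [pow_zero, div_one, abs_neg]; linarith

lemma HH_zero : HH 0 = 0 := by
  unfold HH
  refine Finset.sum_eq_zero (fun i _ => ?_)
  rw [hc_zero]
  exact AddMonoidAlgebra.single_zero i

lemma HH_succ (l : ℕ) (i : ℤ) : (HH (l+1) - HH l).coeff i = 2 ^ l * gg (-(i:ℝ) / 2^(l+1)) := by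
  rw [AddMonoidAlgebra.coeff_sub, Finsupp.sub_apply, HH_coeff, HH_coeff]
  unfold hc gg
  have : 2 * (-(i:ℝ) / 2^(l+1)) = -(i:ℝ) / 2^l := by
    rw [pow_succ]; field_simp
  rw [this, abs_div, abs_neg, abs_of_pos (by positivity : (0:ℝ) < 2^(l+1)), pow_succ]
  field_simp

lemma pr_HH (β : ℝ) (hβ : -2 < β) (r : ℕ) : ∃ C : ℝ, 0 < C ∧ ∀ (ε K : ℝ) (Z : ℤ → ℝ), 0 < ε →
    0 ≤ K → HZ ε K β r Z → ∀ L : ℕ, ε * 2^L ≤ 1 → ∀ k : ℤ,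
      |pr Z k (HH L)| ≤ C * (K * ε ^ (β+1) * ((2:ℝ)^L) ^ (β+2)) := by
  obtain ⟨B, hB, hb⟩ := gg_bt r
  set q : ℝ := (2:ℝ) ^ (β+2) with hq
  have hq1 : 1 < q := Real.one_lt_rpow (by norm_num) (by linarith)
  have hq1' : 0 < q - 1 := by linarith
  refine ⟨B * q / (q-1), by positivity, ?_⟩
  intro ε K Z hε hK hZ L
  have hp : ∀ L : ℕ, ((2:ℝ)^L) ^ (β+2) = q ^ L := by
    intro L
    rw [hq, ← Real.rpow_natCast, ← Real.rpow_natCast, ← Real.rpow_mul (by norm_num),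
      ← Real.rpow_mul (by norm_num), mul_comm]
  rw [hp]
  have hE : 0 ≤ K * ε ^ (β+1) := by positivity
  induction L with
  | zero => intro _ k; rw [HH_zero, pr_zero, abs_zero]; positivity
  | succ l ih =>
    intro h k
    have hl : ε * 2^l ≤ 1 := by
      refine le_trans ?_ h
      rw [pow_succ]; have : 0 < ε * 2^l := by positivity
      linarith
    have h1 := ih hl k
    have h2 := pr_samp_le hε hZ hB hb (one_le_pow₀ (by norm_num : (1:ℝ) ≤ 2)) h (HH_succ l) k
    have e : HH (l+1) = HH l + (HH (l+1) - HH l) := by ring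
    rw [e, pr_add]
    refine (abs_add_le _ _).trans ((add_le_add h1 h2).trans ?_)
    have e2 : (2:ℝ)^l * (ε * 2^(l+1)) ^ (β+1) = ε ^ (β+1) * (q ^ (l+1) / 2) := by
      rw [Real.mul_rpow hε.le (by positivity), ← hp, show β + 2 = (β + 1) + 1 by ring,
        Real.rpow_add_one (x := 2 ^ (l+1)) (by positivity) (β + 1), pow_succ]
      ring
    rw [abs_of_pos (by positivity)]
    have e3 : (2:ℝ)^l * (B * (K * (ε * 2^(l+1)) ^ (β+1))) = (K * ε ^ (β+1)) * (B * (q ^ (l+1) / 2)) := by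
      calc _ = B * K * ((2:ℝ)^l * (ε * 2^(l+1)) ^ (β+1)) := by ring
        _ = _ := by rw [e2]; ring
    rw [e3]
    have e4 : B * q / (q-1) * (K * ε ^ (β+1) * q ^ (l+1)) - B * q / (q-1) * (K * ε ^ (β+1) * q ^ l)
        = (K * ε ^ (β+1)) * (B * q ^ (l+1)) := by
      field_simp; ring
    have : (K * ε ^ (β+1)) * (B * (q ^ (l+1) / 2)) ≤ (K * ε ^ (β+1)) * (B * q ^ (l+1)) := by
      gcongr
      have : 0 < q ^ (l+1) := by positivity
      linarith
    linarith

def dd : LP := sg (-1) 1 * UU ^ 2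

lemma dd_eq : dd = sg 1 1 + sg (-1) 1 - (1 + 1) := by
  unfold dd UU
  have h : sg (-1) 1 * sg 1 1 = 1 := by rw [sg_mul_sg]; simp [sg_zero_one]
  have : sg (-1) 1 * (sg 1 1 - 1)^2 = (sg (-1) 1 * sg 1 1) * sg 1 1 - (1+1) * (sg (-1) 1 * sg 1 1) + sg (-1) 1 := by ring
  rw [this, h]; ring

lemma dd_mul_coeff (f : LP) (j : ℤ) :
    (dd * f).coeff j = f.coeff (j-1) + f.coeff (j+1) - 2 * f.coeff j := by
  rw [dd_eq, sub_mul, add_mul, add_mul, one_mul]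
  rw [AddMonoidAlgebra.coeff_sub, AddMonoidAlgebra.coeff_add, AddMonoidAlgebra.coeff_add,
    Finsupp.sub_apply, Finsupp.add_apply, Finsupp.add_apply, sg_mul_coeff, sg_mul_coeff,
    show -1 + j = j - 1 by ring, show - -1 + j = j + 1 by ring]
  ring

lemma one_coeff (j : ℤ) : ((1:LP)).coeff j = if j = 0 then 1 else 0 := by
  have : ((1 : LP)).coeff = Finsupp.single 0 1 := rfl
  rw [this, Finsupp.single_apply]
  simp [eq_comm]

lemma abs_second (j : ℤ) : 1/2 * (|(j:ℝ) - 1| + |(j:ℝ) + 1| - 2 * |(j:ℝ)|) = if j = 0 then 1 else 0 := by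
  split_ifs with h
  · subst h; norm_num
  · rcases lt_or_gt_of_ne h with h | h
    · have : (j:ℝ) ≤ -1 := by exact_mod_cast (by omega : j ≤ -1)
      rw [abs_of_nonpos (by linarith), abs_of_nonpos (by linarith), abs_of_nonpos (by linarith)]; ring
    · have : (1:ℝ) ≤ j := by exact_mod_cast (by omega : 1 ≤ j)
      rw [abs_of_nonneg (by linarith), abs_of_nonneg (by linarith), abs_of_nonneg (by linarith)]; ring

lemma Ph_coeff (L : ℕ) (j : ℤ) :
    (1 - dd * HH L).coeff j = (2^L : ℝ)⁻¹ * PhT ((2^L:ℝ)⁻¹) (-(j:ℝ) / 2^L) := by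
  rw [AddMonoidAlgebra.coeff_sub, Finsupp.sub_apply, dd_mul_coeff, one_coeff, ← abs_second,
    HH_coeff, HH_coeff, HH_coeff]
  unfold hc PhT GT
  have hp : (0:ℝ) < 2^L := by positivity
  have e1 : -(j:ℝ) / 2^L + (2^L)⁻¹ = -((j-1 : ℤ):ℝ) / 2^L := by push_cast; field_simp; ring
  have e2 : -(j:ℝ) / 2^L - (2^L)⁻¹ = -((j+1 : ℤ):ℝ) / 2^L := by push_cast; field_simp; ring
  rw [e1, e2, abs_div, abs_div, abs_div, abs_neg, abs_neg, abs_neg, abs_of_pos hp]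
  push_cast
  field_simp
  ring

lemma pr_Ph (β : ℝ) (r : ℕ) : ∃ C : ℝ, 0 < C ∧ ∀ (ε K : ℝ) (Z : ℤ → ℝ), 0 < ε →
    0 ≤ K → HZ ε K β r Z → ∀ L : ℕ, ε * 2^L ≤ 1 → ∀ k : ℤ,
      |pr Z k (1 - dd * HH L)| ≤ C * (K * ε ^ (β+1) * ((2:ℝ)^L) ^ β) := by
  obtain ⟨B, hB, hb⟩ := PhT_bt r
  obtain ⟨B', hB', hb'⟩ := bt_of_supp chi_smooth (fun y hy => chi_zero (by
    by_contra h
    exact hy (abs_le.1 (by linarith [not_le.1 h])))) r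
  refine ⟨B + B', by positivity, ?_⟩
  intro ε K Z hε hK hZ L hL k
  have hp : (0:ℝ) < 2^L := by positivity
  have key : ∀ b : ℝ, b ≤ B + B' → |pr Z k (1 - dd * HH L)| ≤ |(2^L : ℝ)⁻¹| * (b * (K * (ε * 2^L) ^ (β + 1)))
      → |pr Z k (1 - dd * HH L)| ≤ (B + B') * (K * ε ^ (β+1) * ((2:ℝ)^L) ^ β) := by
    intro b hb1 h
    refine h.trans ?_
    rw [Real.mul_rpow hε.le hp.le, Real.rpow_add_one hp.ne', abs_of_pos (by positivity)]
    calc _ = b * (K * ε ^ (β+1) * ((2:ℝ)^L) ^ β) := by field_simp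
      _ ≤ _ := by gcongr
  rcases L with _ | L
  · refine key B' (by linarith) ?_
    refine pr_samp_le hε hZ hB' hb' (by simp) hL ?_ k
    intro i
    rw [HH_zero, mul_zero, sub_zero, one_coeff]
    split_ifs with h
    · subst h; simp [chi_one]
    · have : (1:ℝ) ≤ |(i:ℝ)| := by exact_mod_cast Int.one_le_abs h
      rw [chi_zero]; · simp
      simp only [pow_zero, div_one, abs_neg]; linarith
  · refine key B (by linarith) ?_
    refine pr_samp_le hε hZ hB (hb _ (inv_pos.2 hp) ?_) (one_le_pow₀ (by norm_num)) hL (Ph_coeff _) k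
    rw [pow_succ, mul_inv]
    have : ((2:ℝ)^L)⁻¹ ≤ 1 := inv_le_one_of_one_le₀ (one_le_pow₀ (by norm_num))
    linarith

lemma pair_key (β : ℝ) (hβ : -2 < β) (r : ℕ) : ∃ C : ℝ, 0 < C ∧ ∀ (ε K : ℝ) (Z : ℤ → ℝ), 0 < ε →
    0 ≤ K → HZ ε K β r Z → ∀ L : ℕ, ε * 2^L ≤ 1 → ∀ (k : ℤ) (f : LP),
      |pr Z k f| ≤ C * (K * ε ^ (β+1) * ((2:ℝ)^L) ^ β) * (l1 f + ((2:ℝ)^L)^2 * l1 (UU^2 * f)) := by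
  obtain ⟨C1, h1, H1⟩ := pr_HH β hβ r
  obtain ⟨C2, h2, H2⟩ := pr_Ph β r
  refine ⟨C1 + C2, by positivity, ?_⟩
  intro ε K Z hε hK hZ L hL k f
  have e : f = (dd * f) * HH L + f * (1 - dd * HH L) := by ring
  have hp : (0:ℝ) < 2^L := by positivity
  have hE : 0 ≤ K * ε ^ (β+1) * ((2:ℝ)^L) ^ β := by positivity
  have a1 := pr_mul_le Z k (dd * f) (HH L) _ (H1 ε K Z hε hK hZ L hL)
  have a2 := pr_mul_le Z k f (1 - dd * HH L) _ (H2 ε K Z hε hK hZ L hL)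
  have hd : l1 (dd * f) ≤ l1 (UU^2 * f) := by
    unfold dd
    rw [mul_assoc]
    simpa using l1_sg_mul (-1) 1 (UU^2 * f)
  have e2 : ((2:ℝ)^L) ^ (β+2) = ((2:ℝ)^L) ^ β * ((2:ℝ)^L)^2 := by
    rw [Real.rpow_add hp, Real.rpow_two]
  rw [e2] at a1
  have n1 := l1_nonneg f
  have n2 := l1_nonneg (UU^2 * f)
  calc |pr Z k f| = |pr Z k ((dd * f) * HH L) + pr Z k (f * (1 - dd * HH L))| := by
        rw [← pr_add, ← e]
    _ ≤ _ := abs_add_le _ _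
    _ ≤ _ := add_le_add a1 a2
    _ ≤ l1 (UU^2 * f) * (C1 * (K * ε ^ (β+1) * (((2:ℝ)^L) ^ β * ((2:ℝ)^L)^2))) +
          l1 f * (C2 * (K * ε ^ (β+1) * ((2:ℝ)^L) ^ β)) := by gcongr
    _ = (K * ε ^ (β+1) * ((2:ℝ)^L) ^ β) * (C1 * (((2:ℝ)^L)^2 * l1 (UU^2 * f)) + C2 * l1 f) := by ring
    _ ≤ (K * ε ^ (β+1) * ((2:ℝ)^L) ^ β) * ((C1 + C2) * (((2:ℝ)^L)^2 * l1 (UU^2 * f)) + (C1 + C2) * l1 f) := by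
        gcongr <;> linarith
    _ = _ := by ring

lemma rpow_comp {x y : ℝ} (hx : 0 < x) (h1 : x ≤ y) (h2 : y ≤ 4 * x) (s : ℝ) :
    x ^ s ≤ 4 ^ |s| * y ^ s := by
  have hy : 0 < y := by linarith
  rcases le_total 0 s with hs | hs
  · have a : x ^ s ≤ y ^ s := Real.rpow_le_rpow hx.le h1 hs
    have b : (1:ℝ) ≤ 4 ^ |s| := Real.one_le_rpow (by norm_num) (abs_nonneg _)
    have : 0 < y ^ s := by positivity
    nlinarith
  · have a : (4 * x) ^ s ≤ y ^ s := Real.rpow_le_rpow_of_nonpos hy h2 hs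
    rw [Real.mul_rpow (by norm_num) hx.le] at a
    rw [abs_of_nonpos hs, Real.rpow_neg (by norm_num), ← div_eq_inv_mul, le_div_iff₀ (by positivity)]
    linarith

/-- the main pairing bound against powers of the one-step kernel -/
lemma pair_heat (β : ℝ) (hβ : -2 < β) (r : ℕ) (p : LP)
    (hp : ∀ k : ℕ, ∃ C' : ℝ, 0 < C' ∧ ∀ m : ℕ, l1 (UU ^ k * p ^ m) ≤ C' * ((m:ℝ) + 1) ^ (-(k:ℝ)/2))
    (κ : ℕ) : ∃ C : ℝ, 0 < C ∧ ∀ (ε K : ℝ) (Z : ℤ → ℝ), 0 < ε →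
    0 ≤ K → HZ ε K β r Z → ∀ m : ℕ, ε ^ 2 * ((m:ℝ) + 1) ≤ 1 → ∀ (k : ℤ) (w : LP),
      |pr Z k (w * (UU ^ κ * p ^ m))| ≤
        C * (K * ε ^ (β+1)) * l1 w * ((m:ℝ)+1) ^ ((β - κ)/2) := by
  obtain ⟨C0, h0, H0⟩ := pair_key β hβ r
  obtain ⟨C1, h1, H1⟩ := hp κ
  obtain ⟨C2, h2, H2⟩ := hp (κ + 2)
  refine ⟨C0 * 4 ^ |β/2| * (C1 + C2), by positivity, ?_⟩
  intro ε K Z hε hK hZ m hm k w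
  set L := Nat.log 4 (m+1) with hL
  have hp : (0:ℝ) < 2^L := by positivity
  have hm0 : (0:ℝ) < (m:ℝ) + 1 := by positivity
  have e4 : ((2:ℝ)^L)^2 = 4^L := by rw [← pow_mul, mul_comm, pow_mul]; norm_num
  have l1' : ((2:ℝ)^L)^2 ≤ (m:ℝ) + 1 := by
    rw [e4]; exact_mod_cast Nat.pow_log_le_self 4 (by omega : m+1 ≠ 0)
  have l2 : (m:ℝ) + 1 ≤ 4 * ((2:ℝ)^L)^2 := by
    rw [e4]
    have := (Nat.lt_pow_succ_log_self (b := 4) (by norm_num) (m+1)).le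
    rw [← hL, Nat.succ_eq_add_one, pow_succ'] at this
    exact_mod_cast this
  have hεL : ε * 2^L ≤ 1 := by
    have : (ε * 2^L)^2 ≤ 1 := by
      rw [mul_pow]; exact (by gcongr : _ ≤ ε^2 * ((m:ℝ)+1)).trans hm
    nlinarith [this, (by positivity : 0 < ε * 2^L)]
  have key := H0 ε K Z hε hK hZ L hεL k (w * (UU ^ κ * p ^ m))
  have b1 : l1 (w * (UU ^ κ * p ^ m)) ≤ l1 w * (C1 * ((m:ℝ) + 1) ^ (-(κ:ℝ)/2)) := l1_mul_le' le_rfl (H1 m)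
  have b2 : l1 (UU^2 * (w * (UU ^ κ * p ^ m))) ≤ l1 w * (C2 * (((m:ℝ) + 1) ^ (-(κ:ℝ)/2) * ((m:ℝ)+1)⁻¹)) := by
    rw [show UU^2 * (w * (UU ^ κ * p ^ m)) = w * (UU ^ (κ+2) * p ^ m) by ring]
    refine (l1_mul_le' le_rfl (H2 m)).trans (le_of_eq ?_)
    rw [show -((κ+2 : ℕ):ℝ)/2 = -(κ:ℝ)/2 + (-1) by push_cast; ring, Real.rpow_add hm0, Real.rpow_neg_one]
  have b3 : ((2:ℝ)^L) ^ β ≤ 4 ^ |β/2| * ((m:ℝ)+1) ^ (β/2) := by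
    have := rpow_comp (by positivity) l1' l2 (β/2)
    rwa [← Real.rpow_natCast, ← Real.rpow_mul hp.le, show ((2:ℕ):ℝ) * (β/2) = β by push_cast; ring] at this
  have n0 := l1_nonneg w
  refine key.trans ?_
  have b4 : l1 (w * (UU ^ κ * p ^ m)) + ((2:ℝ)^L)^2 * l1 (UU^2 * (w * (UU ^ κ * p ^ m))) ≤
      (C1 + C2) * (l1 w * ((m:ℝ) + 1) ^ (-(κ:ℝ)/2)) := by
    calc _ ≤ l1 w * (C1 * ((m:ℝ) + 1) ^ (-(κ:ℝ)/2)) +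
          ((m:ℝ)+1) * (l1 w * (C2 * (((m:ℝ) + 1) ^ (-(κ:ℝ)/2) * ((m:ℝ)+1)⁻¹))) := by
            gcongr; exact l1_nonneg _
      _ = _ := by field_simp
  calc _ ≤ C0 * (K * ε ^ (β+1) * (4 ^ |β/2| * ((m:ℝ)+1) ^ (β/2))) * ((C1 + C2) * (l1 w * ((m:ℝ) + 1) ^ (-(κ:ℝ)/2))) := by
        have := l1_nonneg (w * (UU ^ κ * p ^ m))
        have := l1_nonneg (UU^2 * (w * (UU ^ κ * p ^ m)))
        gcongr
    _ = _ := by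
        rw [show (β - κ)/2 = β/2 + -(κ:ℝ)/2 by ring, Real.rpow_add hm0]; ring


lemma sum_pow_le (x : ℝ) (hx : -1 < x) (hx0 : x ≤ 0) (M : ℕ) :
    ∑ i ∈ Finset.range M, ((i:ℝ)+1) ^ x ≤ (x+1)⁻¹ * (M:ℝ) ^ (x+1) := by
  have hs : 0 < x + 1 := by linarith
  induction M with
  | zero => simp [Real.zero_rpow hs.ne']
  | succ M ih =>
    rw [Finset.sum_range_succ]
    have hy : (0:ℝ) < (M:ℝ) + 1 := by positivity
    have hb := _root_.rpow_one_add_le_one_add_mul_self (s := -((M:ℝ)+1)⁻¹) (p := x+1)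
      (by
        have : ((M:ℝ)+1)⁻¹ ≤ 1 := inv_le_one_of_one_le₀ (by linarith [Nat.cast_nonneg (α := ℝ) M])
        linarith) hs.le (by linarith)
    have e : (M:ℝ) = ((M:ℝ)+1) * (1 + -((M:ℝ)+1)⁻¹) := by field_simp; ring
    have h0 : 0 ≤ 1 + -((M:ℝ)+1)⁻¹ := by
      have : ((M:ℝ)+1)⁻¹ ≤ 1 := inv_le_one_of_one_le₀ (by linarith [Nat.cast_nonneg (α := ℝ) M])
      linarith
    have h1 : (M:ℝ)^(x+1) ≤ ((M:ℝ)+1)^(x+1) - (x+1) * ((M:ℝ)+1)^x := by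
      calc (M:ℝ)^(x+1) = (((M:ℝ)+1) * (1 + -((M:ℝ)+1)⁻¹))^(x+1) := by rw [← e]
        _ = ((M:ℝ)+1)^(x+1) * (1 + -((M:ℝ)+1)⁻¹)^(x+1) := Real.mul_rpow hy.le h0
        _ ≤ ((M:ℝ)+1)^(x+1) * (1 + (x+1) * -((M:ℝ)+1)⁻¹) := by gcongr
        _ = _ := by rw [Real.rpow_add_one hy.ne']; field_simp; ring
    push_cast
    have h2 : (x+1)⁻¹ * (M:ℝ)^(x+1) ≤ (x+1)⁻¹ * (((M:ℝ)+1)^(x+1) - (x+1) * ((M:ℝ)+1)^x) := by gcongr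
    have h3 : (x+1)⁻¹ * (((M:ℝ)+1)^(x+1) - (x+1) * ((M:ℝ)+1)^x) = (x+1)⁻¹ * ((M:ℝ)+1)^(x+1) - ((M:ℝ)+1)^x := by
      field_simp
    linarith

lemma sum_Ioc_reflect (M M' : ℕ) (F : ℕ → ℝ) :
    ∑ m ∈ Finset.Ioc M M', F (M' - m) = ∑ i ∈ Finset.range (M' - M), F i := by
  refine Finset.sum_nbij' (fun m => M' - m) (fun i => M' - i) ?_ ?_ ?_ ?_ ?_
  · intro m hm; simp only [Finset.mem_Ioc, Finset.mem_range] at *; omega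
  · intro m hm; simp only [Finset.mem_Ioc, Finset.mem_range] at *; omega
  · intro m hm; simp only [Finset.mem_Ioc] at *; omega
  · intro m hm; simp only [Finset.mem_range] at *; omega
  · intro m _; rfl

lemma sum_Icc_shift (M : ℕ) (F : ℕ → ℝ) :
    ∑ m ∈ Finset.Icc 1 M, F m = ∑ i ∈ Finset.range M, F (i+1) := by
  refine Finset.sum_nbij' (fun m => m - 1) (fun i => i + 1) ?_ ?_ ?_ ?_ ?_
  · intro m hm; simp only [Finset.mem_Icc, Finset.mem_range] at *; omega
  · intro m hm; simp only [Finset.mem_Icc, Finset.mem_range] at *; omega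
  · intro m hm; simp only [Finset.mem_Icc] at *; omega
  · intro m hm; simp only [Finset.mem_range] at *; omega
  · intro m hm; simp only [Finset.mem_Icc] at hm; congr 1; omega

lemma sum_conv_le (x y : ℝ) (hx : -1 < x) (hx0 : x ≤ 0) (hy : -1 < y) (hy0 : y ≤ 0) :
    ∃ C : ℝ, 0 < C ∧ ∀ M : ℕ, 1 ≤ M →
      ∑ m ∈ Finset.Icc 1 M, (m:ℝ)^x * (((M-m : ℕ):ℝ)+1)^y ≤ C * (M:ℝ)^(x+y+1) := by
  have hx1 : 0 < x + 1 := by linarith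
  have hy1 : 0 < y + 1 := by linarith
  refine ⟨2^(-x) * (y+1)⁻¹ + 2^(-y) * (x+1)⁻¹, by positivity, fun M hM => ?_⟩
  have hM0 : (0:ℝ) < M := by exact_mod_cast hM
  have hlow : ∀ (u z : ℝ), z ≤ 0 → (M:ℝ)/2 ≤ u → u^z ≤ 2^(-z) * (M:ℝ)^z := by
    intro u z hz hu
    have := Real.rpow_le_rpow_of_nonpos (by positivity : 0 < (M:ℝ)/2) hu hz
    refine this.trans (le_of_eq ?_)
    rw [Real.div_rpow hM0.le (by norm_num), Real.rpow_neg (by norm_num)]; field_simp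
  have hterm : ∀ m ∈ Finset.Icc 1 M, (m:ℝ)^x * (((M-m : ℕ):ℝ)+1)^y ≤
      2^(-x) * (M:ℝ)^x * (((M-m : ℕ):ℝ)+1)^y + 2^(-y) * (M:ℝ)^y * (m:ℝ)^x := by
    intro m hm
    rw [Finset.mem_Icc] at hm
    have hm0 : (0:ℝ) < m := by exact_mod_cast hm.1
    have hc : ((M-m : ℕ):ℝ) = M - m := by rw [Nat.cast_sub hm.2]
    have hj : (0:ℝ) < ((M-m : ℕ):ℝ)+1 := by positivity
    rcases le_total ((M:ℝ)/2) m with h | h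
    · have := hlow m x hx0 h
      have h2 : (m:ℝ)^x * (((M-m : ℕ):ℝ)+1)^y ≤ 2^(-x) * (M:ℝ)^x * (((M-m : ℕ):ℝ)+1)^y := by gcongr
      have : 0 ≤ 2^(-y) * (M:ℝ)^y * (m:ℝ)^x := by positivity
      linarith
    · have := hlow (((M-m : ℕ):ℝ)+1) y hy0 (by rw [hc]; linarith)
      have h2 : (m:ℝ)^x * (((M-m : ℕ):ℝ)+1)^y ≤ (m:ℝ)^x * (2^(-y) * (M:ℝ)^y) := by gcongr
      have : 0 ≤ 2^(-x) * (M:ℝ)^x * (((M-m : ℕ):ℝ)+1)^y := by positivity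
      linarith
  refine (Finset.sum_le_sum hterm).trans ?_
  rw [Finset.sum_add_distrib, ← Finset.mul_sum, ← Finset.mul_sum]
  have s1 : ∑ m ∈ Finset.Icc 1 M, (((M-m : ℕ):ℝ)+1)^y ≤ (y+1)⁻¹ * (M:ℝ)^(y+1) := by
    have := sum_Ioc_reflect 0 M (fun i => ((i:ℝ)+1)^y)
    rw [show Finset.Icc 1 M = Finset.Ioc 0 M from rfl, this]
    exact sum_pow_le y hy hy0 M
  have s2 : ∑ m ∈ Finset.Icc 1 M, (m:ℝ)^x ≤ (x+1)⁻¹ * (M:ℝ)^(x+1) := by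
    rw [sum_Icc_shift M (fun m => (m:ℝ)^x)]
    push_cast
    exact sum_pow_le x hx hx0 M
  calc _ ≤ 2^(-x) * (M:ℝ)^x * ((y+1)⁻¹ * (M:ℝ)^(y+1)) + 2^(-y) * (M:ℝ)^y * ((x+1)⁻¹ * (M:ℝ)^(x+1)) := by gcongr
    _ = _ := by
      rw [Real.rpow_add hM0 y 1, Real.rpow_add hM0 x 1, Real.rpow_add hM0, Real.rpow_add hM0]; ring

lemma interp {V A u x b : ℝ} {γ : ℕ} (hA : 0 ≤ A) (hu : 0 ≤ u) (hx : 0 ≤ x) (hb : 0 < b) (hbγ : b ≤ γ)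
    (h1 : V ≤ A * u) (h2 : V ≤ A * u * x ^ γ) : V ≤ A * u * x ^ b := by
  rcases le_total x 1 with h | h
  · refine h2.trans ?_
    gcongr
    rcases hx.eq_or_lt with rfl | hx
    · rw [Real.zero_rpow hb.ne', zero_pow]
      rintro rfl
      simp at hbγ; linarith
    · rw [← Real.rpow_natCast]
      exact Real.rpow_le_rpow_of_exponent_ge hx h hbγ
  · refine h1.trans ?_
    have := Real.one_le_rpow h hb.le
    have h3 : 0 ≤ A * u := by positivity
    nlinarith

def PB (p : LP) (β ρ C0 : ℝ) (κ : ℕ) (A : ℝ) (z : ℕ → ℤ → ℝ) (M0 : ℕ) : Prop :=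
  ∀ m : ℕ, 1 ≤ m → m ≤ M0 → ∀ j : ℕ, j + 1 ≤ M0 → ∀ (k : ℤ) (w : LP),
    |pr (z m) k (w * (UU ^ κ * p ^ j))| ≤
      C0 * A * (m:ℝ) ^ (ρ/2) * l1 w * ((j:ℝ)+1) ^ ((β - κ)/2)

def SS (p v : LP) (n : ℕ) (z : ℕ → ℤ → ℝ) (M : ℕ) (k : ℤ) : ℝ :=
  ∑ m ∈ Finset.Icc 1 M, pr (z m) k (v * (UU ^ n * p ^ (M - m)))

lemma F1 (p v : LP) (β ρ C0 : ℝ) (n : ℕ) (hC0 : 0 < C0) (hρ : -2 < ρ) (hρ0 : ρ ≤ 0)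
    (hn1 : β + 1 ≤ n) (hn2 : (n:ℝ) < β + 2) :
    ∃ C : ℝ, 0 < C ∧ ∀ (A : ℝ) (z : ℕ → ℤ → ℝ) (M0 : ℕ), 0 ≤ A → PB p β ρ C0 n A z M0 →
      ∀ M : ℕ, 1 ≤ M → M ≤ M0 → ∀ k : ℤ,
        |SS p v n z M k| ≤ C * A * (M:ℝ) ^ ((ρ + β + 2 - n)/2) := by
  obtain ⟨C, hC, h⟩ := sum_conv_le (ρ/2) ((β-n)/2) (by linarith) (by linarith) (by linarith) (by linarith)
  have hv := l1_nonneg v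
  refine ⟨C0 * (l1 v + 1) * C, by positivity, ?_⟩
  intro A z M0 hA hP M hM hM0 k
  unfold SS
  refine (Finset.abs_sum_le_sum_abs _ _).trans ?_
  calc _ ≤ ∑ m ∈ Finset.Icc 1 M, (C0 * A * (l1 v + 1)) * ((m:ℝ)^(ρ/2) * (((M-m : ℕ):ℝ)+1)^((β-n)/2)) := by
        refine Finset.sum_le_sum (fun m hm => ?_)
        rw [Finset.mem_Icc] at hm
        refine (hP m hm.1 (by omega) (M-m) (by omega) k v).trans ?_
        have : C0 * A * (m:ℝ)^(ρ/2) * l1 v * (((M-m : ℕ):ℝ)+1)^((β-n)/2) ≤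
          C0 * A * (m:ℝ)^(ρ/2) * (l1 v + 1) * (((M-m : ℕ):ℝ)+1)^((β-n)/2) := by gcongr; linarith
        linarith
    _ ≤ (C0 * A * (l1 v + 1)) * (C * (M:ℝ)^(ρ/2 + (β-n)/2 + 1)) := by
        rw [← Finset.mul_sum]; gcongr; exact h M hM
    _ = _ := by rw [show ρ/2 + (β-n)/2 + 1 = (ρ + β + 2 - n)/2 by ring]; ring

/-- common part of the two difference estimates -/
lemma Fdiff (p : LP) (β ρ C0 : ℝ) (n γ : ℕ) (hC0 : 0 < C0) (hρ : -2 < ρ) (hρ0 : ρ ≤ 0)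
    (hn1 : β + 1 ≤ n) (θ₁ : ℝ) (hθ0 : 0 < θ₁) (hθ1 : θ₁ < β - n + 2) (hγ : 1 ≤ γ)
    (W : ℝ) (hW : 0 < W) :
    ∃ C : ℝ, 0 < C ∧ ∀ (A : ℝ) (z : ℕ → ℤ → ℝ) (M0 : ℕ), 0 ≤ A → PB p β ρ C0 n A z M0 →
      PB p β ρ C0 (n+γ) A z M0 →
      ∀ (w1 w2 : LP) (Y : ℝ), 0 ≤ Y → w1 = w2 * UU ^ γ → l1 w1 ≤ W → l1 w2 ≤ W * Y ^ γ →
      ∀ M : ℕ, 1 ≤ M → M ≤ M0 → ∀ k : ℤ,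
        ∑ m ∈ Finset.Icc 1 M, |pr (z m) k (w1 * (UU ^ n * p ^ (M - m)))| ≤
          C * A * Y ^ (β + 2 - n - θ₁) * (M:ℝ) ^ ((ρ + θ₁)/2) := by
  obtain ⟨C, hC, h⟩ := sum_conv_le (ρ/2) (-1 + θ₁/2) (by linarith) (by linarith) (by linarith) (by linarith)
  refine ⟨C0 * W * C, by positivity, ?_⟩
  intro A z M0 hA hP hP2 w1 w2 Y hY hw hw1 hw2 M hM hM0 k
  set b := β + 2 - n - θ₁ with hb
  calc _ ≤ ∑ m ∈ Finset.Icc 1 M, (C0 * A * W * Y ^ b) * ((m:ℝ)^(ρ/2) * (((M-m : ℕ):ℝ)+1)^(-1 + θ₁/2)) := by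
        refine Finset.sum_le_sum (fun m hm => ?_)
        rw [Finset.mem_Icc] at hm
        set s : ℝ := ((M-m : ℕ):ℝ)+1 with hs
        have hs0 : 0 < s := by positivity
        have b1 := hP m hm.1 (by omega) (M-m) (by omega) k w1
        have b2 := hP2 m hm.1 (by omega) (M-m) (by omega) k w2
        rw [show w2 * (UU ^ (n+γ) * p ^ (M-m)) = w1 * (UU ^ n * p ^ (M - m)) by rw [hw]; ring] at b2
        rw [← hs] at b1 b2
        have key := interp (V := |pr (z m) k (w1 * (UU ^ n * p ^ (M - m)))|) (A := C0 * A * (m:ℝ)^(ρ/2) * W)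
          (u := s ^ ((β-n)/2)) (x := Y * s ^ (-(1/2):ℝ)) (b := b) (γ := γ) (by positivity) (by positivity)
          (by positivity) (by rw [hb]; linarith) (by
            have : (1:ℝ) ≤ γ := by exact_mod_cast hγ
            rw [hb]; linarith)
          (b1.trans (by gcongr)) (b2.trans (by
            have e : s ^ ((β - ((n+γ:ℕ):ℝ))/2) = s ^ ((β-n)/2) * (s ^ (-(1/2):ℝ)) ^ γ := by
              rw [← Real.rpow_natCast, ← Real.rpow_mul hs0.le, ← Real.rpow_add hs0]
              congr 1; push_cast; ring
            rw [e, mul_pow]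
            calc _ ≤ C0 * A * (m:ℝ)^(ρ/2) * (W * Y^γ) * (s ^ ((β-n)/2) * (s ^ (-(1/2):ℝ)) ^ γ) := by gcongr
              _ = _ := by ring))
        refine key.trans (le_of_eq ?_)
        rw [Real.mul_rpow hY (by positivity), ← Real.rpow_mul hs0.le,
          show -1 + θ₁/2 = (β-n)/2 + -(1/2) * b by rw [hb]; ring, Real.rpow_add hs0]
        ring
    _ ≤ (C0 * A * W * Y ^ b) * (C * (M:ℝ)^(ρ/2 + (-1 + θ₁/2) + 1)) := by
        rw [← Finset.mul_sum]; gcongr; exact h M hM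
    _ = _ := by rw [show ρ/2 + (-1 + θ₁/2) + 1 = (ρ + θ₁)/2 by ring]; ring

lemma F2 (p v : LP) (β ρ C0 : ℝ) (n : ℕ) (hC0 : 0 < C0) (hρ : -2 < ρ) (hρ0 : ρ ≤ 0)
    (hn1 : β + 1 ≤ n) (θ₁ : ℝ) (hθ0 : 0 < θ₁) (hθ1 : θ₁ < β - n + 2) :
    ∃ C : ℝ, 0 < C ∧ ∀ (A : ℝ) (z : ℕ → ℤ → ℝ) (M0 : ℕ), 0 ≤ A → PB p β ρ C0 n A z M0 →
      PB p β ρ C0 (n+1) A z M0 →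
      ∀ M : ℕ, 1 ≤ M → M ≤ M0 → ∀ k k' : ℤ,
        |SS p v n z M k' - SS p v n z M k| ≤
          C * A * |(k':ℝ) - k| ^ (β + 2 - n - θ₁) * (M:ℝ) ^ ((ρ + θ₁)/2) := by
  have hv := l1_nonneg v
  obtain ⟨C, hC, H⟩ := Fdiff p β ρ C0 n 1 hC0 hρ hρ0 hn1 θ₁ hθ0 hθ1 le_rfl (2 * (l1 v + 1)) (by positivity)
  refine ⟨C, hC, ?_⟩
  intro A z M0 hA hP hP1 M hM hM0 k k'
  obtain ⟨w, hw1, hw2⟩ := sg_sub_one (k - k')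
  have hY : |((k - k' : ℤ):ℝ)| = |(k':ℝ) - k| := by push_cast; exact abs_sub_comm _ _
  rw [hY] at hw2
  have := H A z M0 hA hP hP1 (v * (sg (k-k') 1 - 1)) (v * w) (|(k':ℝ) - k|) (abs_nonneg _)
    (by rw [hw1]; ring) (by
      have h1 : l1 (sg (k-k') 1 - 1) ≤ 2 := by
        rw [sub_eq_add_neg]
        refine (l1_add_le _ _).trans ?_
        rw [l1_neg, l1_one, l1_sg]; norm_num
      have := l1_mul_le' (le_refl (l1 v)) h1
      linarith) (by
      have := l1_mul_le' (le_refl (l1 v)) hw2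
      rw [pow_one]
      nlinarith [abs_nonneg ((k':ℝ) - k)]) M hM hM0 k
  refine le_trans ?_ this
  unfold SS
  rw [← Finset.sum_sub_distrib]
  refine (Finset.abs_sum_le_sum_abs _ _).trans (le_of_eq (Finset.sum_congr rfl (fun m _ => ?_)))
  congr 1
  rw [show v * (sg (k-k') 1 - 1) * (UU ^ n * p ^ (M-m)) = sg (k-k') 1 * (v * (UU ^ n * p ^ (M-m))) - v * (UU ^ n * p ^ (M-m)) by ring,
    pr_sub, pr_sg_mul, sub_sub_cancel, one_mul]

lemma F3 (p v a2 : LP) (β ρ C0 Cp : ℝ) (n : ℕ) (hC0 : 0 < C0) (hρ : -2 < ρ) (hρ0 : ρ ≤ 0)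
    (hn1 : β + 1 ≤ n) (θ₁ : ℝ) (hθ0 : 0 < θ₁) (hθ1 : θ₁ < β - n + 2)
    (hp : p - 1 = UU ^ 2 * a2) (hCp : ∀ m : ℕ, l1 (p ^ m) ≤ Cp) :
    ∃ C : ℝ, 0 < C ∧ ∀ (A : ℝ) (z : ℕ → ℤ → ℝ) (M0 : ℕ), 0 ≤ A → PB p β ρ C0 n A z M0 →
      PB p β ρ C0 (n+2) A z M0 →
      ∀ M τ : ℕ, 1 ≤ M → M + τ ≤ M0 → τ ≤ M → ∀ k : ℤ,
        |SS p v n z (M + τ) k - SS p v n z M k| ≤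
          C * A * √(τ:ℝ) ^ (β + 2 - n - θ₁) * (M:ℝ) ^ ((ρ + θ₁)/2) := by
  have hv := l1_nonneg v
  have ha := l1_nonneg a2
  have hCp0 : 0 ≤ Cp := (l1_nonneg _).trans (hCp 0)
  obtain ⟨C, hC, H⟩ := Fdiff p β ρ C0 n 2 hC0 hρ hρ0 hn1 θ₁ hθ0 hθ1 (by norm_num)
    ((l1 v + 1) * (Cp + 1) * (l1 a2 + 1)) (by positivity)
  have hy1 : 0 < (β - n)/2 + 1 := by linarith
  refine ⟨C + C0 * (l1 v + 1) * ((β - n)/2 + 1)⁻¹, by positivity, ?_⟩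
  intro A z M0 hA hP hP2 M τ hM hM0 hτ k
  set b := β + 2 - n - θ₁ with hb
  have hM0' : (0:ℝ) < M := by exact_mod_cast hM
  have hY2 : √(τ:ℝ) ^ 2 = τ := Real.sq_sqrt (by positivity)
  have h1 := H A z M0 hA hP hP2 (v * (p ^ τ - 1)) (v * a2 * ∑ i ∈ Finset.range τ, p ^ i) (√(τ:ℝ)) (by positivity)
    (by rw [← mul_geom_sum p τ, hp]; ring) (by
      have h1 : l1 (p ^ τ - 1) ≤ Cp + 1 := by
        rw [sub_eq_add_neg]
        refine (l1_add_le _ _).trans ?_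
        rw [l1_neg, l1_one]; linarith [hCp τ]
      refine (l1_mul_le' (le_refl (l1 v)) h1).trans ?_
      have : l1 v * (Cp + 1) ≤ (l1 v + 1) * (Cp + 1) := by gcongr; linarith
      have h3 : 0 ≤ (l1 v + 1) * (Cp + 1) * l1 a2 := by positivity
      linarith) (by
      have h1 : l1 (∑ i ∈ Finset.range τ, p ^ i) ≤ τ * Cp := by
        refine (l1_sum_le _ _).trans ((Finset.sum_le_sum (fun i _ => hCp i)).trans ?_)
        simp
      rw [hY2]
      refine (l1_mul_le' (l1_mul_le v a2) h1).trans ?_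
      calc l1 v * l1 a2 * (τ * Cp) ≤ (l1 v + 1) * (l1 a2 + 1) * (τ * (Cp + 1)) := by gcongr <;> linarith
        _ = _ := by ring) M hM (by omega) k
  have e : SS p v n z (M + τ) k - SS p v n z M k =
      ∑ m ∈ Finset.Icc 1 M, pr (z m) k (v * (p ^ τ - 1) * (UU ^ n * p ^ (M - m))) +
      ∑ m ∈ Finset.Ioc M (M + τ), pr (z m) k (v * (UU ^ n * p ^ (M + τ - m))) := by
    unfold SS
    have hu : Finset.Icc 1 (M+τ) = Finset.Icc 1 M ∪ Finset.Ioc M (M+τ) := by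
      ext m; simp only [Finset.mem_union, Finset.mem_Icc, Finset.mem_Ioc]; omega
    have hdj : Disjoint (Finset.Icc 1 M) (Finset.Ioc M (M+τ)) := by
      rw [Finset.disjoint_left]; intro m; simp only [Finset.mem_Icc, Finset.mem_Ioc]; omega
    rw [hu, Finset.sum_union hdj, add_sub_right_comm, ← Finset.sum_sub_distrib]
    congr 1
    refine Finset.sum_congr rfl (fun m hm => ?_)
    rw [Finset.mem_Icc] at hm
    rw [← pr_sub]
    congr 1
    rw [show M + τ - m = τ + (M - m) by omega, pow_add]; ring
  have h2 : ∑ m ∈ Finset.Ioc M (M + τ), |pr (z m) k (v * (UU ^ n * p ^ (M + τ - m)))| ≤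
      C0 * (l1 v + 1) * ((β - n)/2 + 1)⁻¹ * A * √(τ:ℝ) ^ b * (M:ℝ) ^ ((ρ + θ₁)/2) := by
    calc _ ≤ ∑ m ∈ Finset.Ioc M (M + τ), C0 * A * (M:ℝ)^(ρ/2) * (l1 v + 1) * (((M+τ-m : ℕ):ℝ)+1)^((β-n)/2) := by
          refine Finset.sum_le_sum (fun m hm => ?_)
          rw [Finset.mem_Ioc] at hm
          refine (hP m (by omega) (by omega) (M+τ-m) (by omega) k v).trans ?_
          have : (m:ℝ)^(ρ/2) ≤ (M:ℝ)^(ρ/2) :=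
            Real.rpow_le_rpow_of_nonpos hM0' (by exact_mod_cast hm.1.le) (by linarith)
          gcongr
          linarith
      _ = C0 * A * (M:ℝ)^(ρ/2) * (l1 v + 1) * ∑ i ∈ Finset.range τ, ((i:ℝ)+1)^((β-n)/2) := by
          rw [← Finset.mul_sum, sum_Ioc_reflect M (M+τ) (fun i => ((i:ℝ)+1)^((β-n)/2)), Nat.add_sub_cancel_left]
      _ ≤ C0 * A * (M:ℝ)^(ρ/2) * (l1 v + 1) * (((β-n)/2+1)⁻¹ * (τ:ℝ)^((β-n)/2+1)) := by
          gcongr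
          exact sum_pow_le _ (by linarith) (by linarith) τ
      _ ≤ C0 * A * (M:ℝ)^(ρ/2) * (l1 v + 1) * (((β-n)/2+1)⁻¹ * (√(τ:ℝ) ^ b * (M:ℝ)^(θ₁/2))) := by
          gcongr
          have e1 : (τ:ℝ)^((β-n)/2+1) = √(τ:ℝ) ^ b * (τ:ℝ)^(θ₁/2) := by
            rw [Real.sqrt_eq_rpow, ← Real.rpow_mul (by positivity),
              ← Real.rpow_add_of_nonneg (by positivity) (by rw [hb]; linarith) (by linarith)]
            congr 1; rw [hb]; ring
          rw [e1]; gcongr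
      _ = _ := by
          rw [show (ρ + θ₁)/2 = ρ/2 + θ₁/2 by ring, Real.rpow_add hM0']; ring
  rw [e]
  refine (abs_add_le _ _).trans ?_
  have i1 := Finset.abs_sum_le_sum_abs (fun m => pr (z m) k (v * (p ^ τ - 1) * (UU ^ n * p ^ (M - m)))) (Finset.Icc 1 M)
  have i2 := Finset.abs_sum_le_sum_abs (fun m => pr (z m) k (v * (UU ^ n * p ^ (M + τ - m)))) (Finset.Ioc M (M+τ))
  calc _ ≤ C * A * √(τ:ℝ) ^ b * (M:ℝ) ^ ((ρ + θ₁)/2) + C0 * (l1 v + 1) * ((β - n)/2 + 1)⁻¹ * A * √(τ:ℝ) ^ b * (M:ℝ) ^ ((ρ + θ₁)/2) :=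
        add_le_add (i1.trans h1) (i2.trans h2)
    _ = _ := by ring


lemma teps_grid {ε : ℝ} (hε : 0 < ε) {m : ℕ} (hm : 1 ≤ m) : teps ε (ε ^ 2 * m) = ε * √(m:ℝ) := by
  unfold teps
  rw [abs_of_nonneg (by positivity), Real.sqrt_mul (by positivity), Real.sqrt_sq hε.le]
  apply max_eq_left
  have : 1 ≤ √(m:ℝ) := Real.one_le_sqrt.2 (by exact_mod_cast hm)
  nlinarith

lemma grid_le_T {ε T : ℝ} (hε : 0 < ε) {m : ℕ} (h : ε ^ 2 * m ≤ T) : ε * √(m:ℝ) ≤ teps ε T := by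
  refine le_trans ?_ (le_max_left _ _)
  have hT : 0 ≤ T := le_trans (by positivity) h
  rw [abs_of_nonneg hT]
  apply Real.le_sqrt_of_sq_le
  rw [mul_pow, Real.sq_sqrt (by positivity)]; exact h

lemma HZ_of {ε T Mc β ρ : ℝ} {r : ℕ} {ζ : ℕ → ℤ → ℝ} (hε : 0 < ε)
    (h : ∀ m : ℕ, 1 ≤ m → ε ^ 2 * m ≤ T → ∀ k : ℤ,
          ∀ lam : ℝ, lam ∈ Set.Icc ε 1 →
          ∀ φ : ℝ → ℝ, IsTestFunction r φ →
          teps ε (ε ^ 2 * m) ^ (-ρ) * lam ^ (-β) *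
            |ε * ∑' j : ℤ, ζ m j * (lam⁻¹ * φ (lam⁻¹ * (ε * j - ε * k)))| ≤ Mc)
    (m : ℕ) (hm : 1 ≤ m) (hmT : ε ^ 2 * m ≤ T) :
    HZ ε (ε⁻¹ * Mc * (ε * √(m:ℝ)) ^ ρ) β r (ζ m) := by
  intro k lam hlam φ hφ
  have h1 := h m hm hmT k lam hlam φ hφ
  have hl : 0 < lam := hε.trans_le hlam.1
  have hm0 : (0:ℝ) < m := by exact_mod_cast hm
  rw [teps_grid hε hm] at h1
  have e : ∀ j : ℤ, ζ m j * (lam⁻¹ * φ (lam⁻¹ * (ε * j - ε * k))) =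
      lam⁻¹ * (ζ m j * φ (lam⁻¹ * (ε * j - ε * k))) := fun j => by ring
  rw [tsum_congr e, tsum_mul_left, abs_mul, abs_mul, abs_of_pos hε, abs_of_pos (inv_pos.2 hl),
    Real.rpow_neg (by positivity), Real.rpow_neg hl.le] at h1
  set S := |∑' j : ℤ, ζ m j * φ (lam⁻¹ * (ε * j - ε * k))|
  have hx : 0 < (ε * √(m:ℝ)) ^ ρ := by positivity
  have hy : 0 < lam ^ β := by positivity
  rw [Real.rpow_add_one hl.ne']
  calc S = (ε⁻¹ * (ε * √(m:ℝ)) ^ ρ * (lam ^ β * lam)) *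
        (((ε * √(m:ℝ)) ^ ρ)⁻¹ * (lam ^ β)⁻¹ * (ε * (lam⁻¹ * S))) := by field_simp
    _ ≤ (ε⁻¹ * (ε * √(m:ℝ)) ^ ρ * (lam ^ β * lam)) * Mc := by gcongr
    _ = _ := by ring

lemma PB_of {ε T Mc β ρ C C0 : ℝ} {r κ : ℕ} {p : LP} {ζ : ℕ → ℤ → ℝ} (hε : 0 < ε) (hMc : 0 < Mc) (hT : T ≤ 1)
    (hC : C ≤ C0)
    (H : ∀ (ε K : ℝ) (Z : ℤ → ℝ), 0 < ε →
    0 ≤ K → HZ ε K β r Z → ∀ m : ℕ, ε ^ 2 * ((m:ℝ) + 1) ≤ 1 → ∀ (k : ℤ) (w : LP),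
      |pr Z k (w * (UU ^ κ * p ^ m))| ≤
        C * (K * ε ^ (β+1)) * l1 w * ((m:ℝ)+1) ^ ((β - κ)/2))
    (h : ∀ m : ℕ, 1 ≤ m → ε ^ 2 * m ≤ T → HZ ε (ε⁻¹ * Mc * (ε * √(m:ℝ)) ^ ρ) β r (ζ m))
    (M0 : ℕ) (hM0 : ε ^ 2 * M0 ≤ T) : PB p β ρ C0 κ (Mc * ε ^ (ρ + β)) ζ M0 := by
  intro m hm hmM j hj k w
  have hm0 : (0:ℝ) < m := by exact_mod_cast hm
  have c1 : ε ^ 2 * m ≤ T := le_trans (by gcongr) hM0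
  have c2 : ε ^ 2 * ((j:ℝ) + 1) ≤ 1 := by
    have : (j:ℝ) + 1 ≤ M0 := by exact_mod_cast hj
    exact le_trans (by gcongr) (hM0.trans hT)
  refine (H ε _ (ζ m) hε (by positivity) (h m hm c1) j c2 k w).trans ?_
  have e : ε⁻¹ * Mc * (ε * √(m:ℝ)) ^ ρ * ε ^ (β + 1) = Mc * ε ^ (ρ + β) * (m:ℝ) ^ (ρ/2) := by
    rw [Real.mul_rpow hε.le (by positivity), Real.rpow_add_one hε.ne', Real.rpow_add hε,
      Real.sqrt_eq_rpow, ← Real.rpow_mul hm0.le, show 1/2 * ρ = ρ/2 by ring]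
    field_simp
  rw [e]
  have := l1_nonneg w
  calc _ ≤ C0 * (Mc * ε ^ (ρ + β) * (m:ℝ) ^ (ρ/2)) * l1 w * ((j:ℝ)+1) ^ ((β - κ)/2) := by gcongr
    _ = _ := by ring

lemma half_pow {ε : ℝ} (hε : 0 < ε) {M : ℕ} (hM : 1 ≤ M) (s : ℝ) :
    ε ^ s * (M:ℝ) ^ (s/2) = (ε * √(M:ℝ)) ^ s := by
  rw [Real.mul_rpow hε.le (by positivity), Real.sqrt_eq_rpow, ← Real.rpow_mul (by positivity)]
  congr 2; ring

lemma core
    (a : ℤ →₀ ℝ) (ha_symm : ∀ k : ℤ, a (-k) = a k)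
    (ha0 : ∑ k ∈ a.support, a k = 0)
    (ha2 : ∑ k ∈ a.support, ((k : ℝ)) ^ 2 * a k = 2)
    (ha_four : ∀ θ : ℝ,
      (∑ k ∈ a.support, (a k : ℂ) * Complex.exp (-(2 * Real.pi * k * θ) * Complex.I)) = 0 →
      ∃ z : ℤ, θ = (z : ℝ))
    (b : ℤ →₀ ℝ) (hb0 : ∑ k ∈ b.support, b k = 0)
    (β ρ : ℝ) (n r : ℕ)
    (hβ : -2 < β) (hρ : ρ ∈ Set.Ioc (-2 : ℝ) 0)
    (hn1 : β + 1 ≤ (n : ℝ)) (hn2 : (n : ℝ) < β + 2)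
    (θ₁ : ℝ) (hθ₁ : θ₁ ∈ Set.Ioo 0 (β - (n : ℝ) + 2)) :
    ∃ C : ℝ, 0 < C ∧
      ∀ (ε : ℝ), 0 < ε →
      ∀ T : ℝ, T ∈ Set.Ioc (0 : ℝ) 1 → ∀ Mc : ℝ, 0 < Mc →
      ∀ ζ : ℕ → ℤ → ℝ,
        (∀ m : ℕ, 1 ≤ m → ε ^ 2 * m ≤ T → HZ ε (ε⁻¹ * Mc * (ε * √(m:ℝ)) ^ ρ) β r (ζ m)) →
        (∀ (M : ℕ) (k : ℤ), 1 ≤ M → ε ^ 2 * M ≤ T →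
            |dheatConv a b n ε ζ M k| ≤ C * Mc * (ε * √(M:ℝ)) ^ (ρ + β + 2 - n)) ∧
        (∀ (M : ℕ) (k : ℤ) (τ : ℕ) (k' : ℤ),
            1 ≤ M → ε ^ 2 * ((M + τ : ℕ):ℝ) ≤ T → τ ≤ M →
          |dheatConv a b n ε ζ (M + τ) k' - dheatConv a b n ε ζ M k| ≤
            C * Mc * (ε * √(M:ℝ)) ^ (ρ + θ₁) *
              (max (ε * √(τ:ℝ)) (ε * |(k':ℝ) - k|)) ^ (β + 2 - (n : ℝ) - θ₁)) := by
  obtain ⟨b', hb'⟩ := bt_dvd b hb0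
  obtain ⟨w, hw⟩ := bt_dvd_two a ha_symm ha0
  set p := pp a with hp
  have hp1 : p - 1 = UU ^ 2 * (sg 0 (2 * nub a)⁻¹ * w) := by
    rw [hp]; unfold pp; rw [hw]; ring
  obtain ⟨c, hc, hc1⟩ := pp_ev_le a ha_symm ha0 ha2 ha_four
  obtain ⟨D, hD, hD1⟩ := dv_pp_le a ha_symm ha0
  obtain ⟨Cp, hCp1, hCp, hCp2⟩ := heat_l1 p c D hc hD hc1 hD1
  have hpow := heat_l1_pow p Cp hCp1 hCp hCp2
  obtain ⟨K0, hK0, H0⟩ := pair_heat β hβ r p hpow n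
  obtain ⟨K1, hK1, H1⟩ := pair_heat β hβ r p hpow (n+1)
  obtain ⟨K2, hK2, H2⟩ := pair_heat β hβ r p hpow (n+2)
  set C0 := K0 + K1 + K2 with hC0
  have hC0p : 0 < C0 := by positivity
  obtain ⟨C1, hC1, G1⟩ := F1 p (b' ^ n) β ρ C0 n hC0p hρ.1 hρ.2 hn1 hn2
  obtain ⟨C2, hC2, G2⟩ := F2 p (b' ^ n) β ρ C0 n hC0p hρ.1 hρ.2 hn1 θ₁ hθ₁.1 hθ₁.2
  obtain ⟨C3, hC3, G3⟩ := F3 p (b' ^ n) _ β ρ C0 Cp n hC0p hρ.1 hρ.2 hn1 θ₁ hθ₁.1 hθ₁.2 hp1 hCp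
  refine ⟨C1 + C2 + C3, by positivity, ?_⟩
  intro ε hε T hT Mc hMc ζ hζ
  have P0 := PB_of (C0 := C0) hε hMc hT.2 (by linarith) H0 hζ
  have P1 := PB_of (C0 := C0) hε hMc hT.2 (by linarith) H1 hζ
  have P2 := PB_of (C0 := C0) hε hMc hT.2 (by linarith) H2 hζ
  have hd : ∀ M k, dheatConv a b n ε ζ M k = ε ^ (2 - (n:ℝ)) * SS p (b' ^ n) n ζ M k := by
    intro M k
    rw [dheatConv_eq]
    congr 1
    · rw [Real.rpow_sub hε, Real.rpow_two, Real.rpow_natCast]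
      field_simp
      ring
    · unfold SS
      refine Finset.sum_congr rfl (fun m _ => ?_)
      congr 1
      rw [hb']; ring
  have hA : 0 ≤ Mc * ε ^ (ρ + β) := by positivity
  constructor
  · intro M k hM hMT
    have := G1 _ ζ M hA (P0 M hMT) M hM le_rfl k
    rw [hd, abs_mul, abs_of_pos (by positivity)]
    have hx : 0 ≤ Mc * (ε * √(M:ℝ)) ^ (ρ + β + 2 - n) := by positivity
    calc _ ≤ ε ^ (2 - (n:ℝ)) * (C1 * (Mc * ε ^ (ρ + β)) * (M:ℝ) ^ ((ρ + β + 2 - n)/2)) := by gcongr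
      _ = C1 * (Mc * (ε * √(M:ℝ)) ^ (ρ + β + 2 - n)) := by
        have e : ε ^ (ρ + β + 2 - n) = ε ^ (2 - (n:ℝ)) * ε ^ (ρ + β) := by
          rw [← Real.rpow_add hε]; congr 1; ring
        rw [← half_pow hε hM, e]; ring
      _ ≤ (C1 + C2 + C3) * (Mc * (ε * √(M:ℝ)) ^ (ρ + β + 2 - n)) := by gcongr; linarith
      _ = _ := by ring
  · intro M k τ k' hM hMT hτ
    set B := β + 2 - (n:ℝ) - θ₁ with hB
    have hB0 : 0 < B := by rw [hB]; linarith [hθ₁.2]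
    have g2 := G2 _ ζ (M+τ) hA (P0 _ hMT) (P1 _ hMT) M hM (by omega) k k'
    have g3 := G3 _ ζ (M+τ) hA (P0 _ hMT) (P2 _ hMT) M τ hM le_rfl hτ k'
    set δ := max √(τ:ℝ) |(k':ℝ) - k| with hδ
    have hδ0 : 0 ≤ δ := le_max_of_le_left (by positivity)
    have hδe : max (ε * √(τ:ℝ)) (ε * |(k':ℝ) - k|) = ε * δ := by
      rw [hδ, mul_max_of_nonneg _ _ hε.le]
    have d1 : √(τ:ℝ) ^ B ≤ δ ^ B := Real.rpow_le_rpow (by positivity) (le_max_left _ _) hB0.le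
    have d2 : |(k':ℝ) - k| ^ B ≤ δ ^ B := Real.rpow_le_rpow (by positivity) (le_max_right _ _) hB0.le
    rw [hd, hd, ← mul_sub, abs_mul, abs_of_pos (by positivity), hδe]
    have tri := abs_sub_le (SS p (b' ^ n) n ζ (M+τ) k') (SS p (b' ^ n) n ζ M k') (SS p (b' ^ n) n ζ M k)
    have hx : 0 ≤ Mc * (ε * √(M:ℝ)) ^ (ρ + θ₁) * (ε * δ) ^ B := by positivity
    calc _ ≤ ε ^ (2 - (n:ℝ)) * (C3 * (Mc * ε ^ (ρ + β)) * δ ^ B * (M:ℝ) ^ ((ρ + θ₁)/2) +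
          C2 * (Mc * ε ^ (ρ + β)) * δ ^ B * (M:ℝ) ^ ((ρ + θ₁)/2)) := by
          refine mul_le_mul_of_nonneg_left (tri.trans (add_le_add (g3.trans ?_) (g2.trans ?_))) (by positivity)
          · gcongr
          · gcongr
      _ = (C2 + C3) * (Mc * (ε * √(M:ℝ)) ^ (ρ + θ₁) * (ε * δ) ^ B) := by
          have e : ε ^ (2 - (n:ℝ)) * ε ^ (ρ + β) = ε ^ (ρ + θ₁) * ε ^ B := by
            rw [← Real.rpow_add hε, ← Real.rpow_add hε]; congr 1; rw [hB]; ring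
          rw [← half_pow hε hM, Real.mul_rpow hε.le hδ0]
          linear_combination ((C2 + C3) * Mc * δ ^ B * (M:ℝ) ^ ((ρ + θ₁)/2)) * e
      _ ≤ (C1 + C2 + C3) * (Mc * (ε * √(M:ℝ)) ^ (ρ + θ₁) * (ε * δ) ^ B) := by gcongr; linarith
      _ = _ := by ring


/-- discrete Schauder-type estimate for the discrete space-time
convolution of `P^{(ε,n)} = D_{x,ε}^n P^ε` with a grid function, uniformly in
`ε`.  The grid function `ζ^ε` is represented by its values `ζ m j` at the grid
points `(ε² m, ε j)`. -/
theorem statement7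
    (a : ℤ →₀ ℝ) (ha_symm : ∀ k : ℤ, a (-k) = a k)
    (ha0 : ∑ k ∈ a.support, a k = 0)
    (ha2 : ∑ k ∈ a.support, ((k : ℝ)) ^ 2 * a k = 2)
    (ha_four : ∀ θ : ℝ,
      (∑ k ∈ a.support, (a k : ℂ) * Complex.exp (-(2 * Real.pi * k * θ) * Complex.I)) = 0 →
      ∃ z : ℤ, θ = (z : ℝ))
    (b : ℤ →₀ ℝ) (hb0 : ∑ k ∈ b.support, b k = 0)
    (hb1 : ∑ k ∈ b.support, (k : ℝ) * b k = 1)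
    (β ρ : ℝ) (n r : ℕ)
    (hβ : -2 < β) (hρ : ρ ∈ Set.Ioc (-2 : ℝ) 0)
    (hn1 : β + 1 ≤ (n : ℝ)) (hn2 : (n : ℝ) < β + 2) (hr : |β| < (r : ℝ))
    (θ₁ θ₂ : ℝ) (hθ₁ : θ₁ ∈ Set.Ioo 0 (β - (n : ℝ) + 2)) (hθ : 0 < θ₁ - θ₂) :
    ∃ C : ℝ, 0 < C ∧
      ∀ (N : ℕ) (ε : ℝ), ε = ((2 : ℝ) ^ N)⁻¹ →
      ∀ T : ℝ, T ∈ Set.Ioc (0 : ℝ) 1 → ∀ Mc : ℝ, 0 < Mc →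
      ∀ ζ : ℕ → ℤ → ℝ,
        (∀ (m : ℕ) (j : ℤ), ζ m (j + 2 ^ N) = ζ m j) →
        (∀ m : ℕ, 1 ≤ m → ε ^ 2 * m ≤ T → ∀ k : ℤ,
          ∀ lam : ℝ, lam ∈ Set.Icc ε 1 →
          ∀ φ : ℝ → ℝ, IsTestFunction r φ →
          teps ε (ε ^ 2 * m) ^ (-ρ) * lam ^ (-β) *
            |ε * ∑' j : ℤ, ζ m j * (lam⁻¹ * φ (lam⁻¹ * (ε * j - ε * k)))| ≤ Mc) →
        (∀ (M : ℕ) (k : ℤ), 1 ≤ M → ε ^ 2 * M ≤ T →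
          teps ε (ε ^ 2 * M) ^ (-((ρ + θ₂) + (β + 2 - (n : ℝ) - θ₁))) *
            |dheatConv a b n ε ζ M k| ≤
            C * Mc * teps ε T ^ (θ₁ - θ₂)) ∧
        (∀ (M : ℕ) (k : ℤ) (M' : ℕ) (k' : ℤ),
            1 ≤ M → ε ^ 2 * M ≤ T → 1 ≤ M' → ε ^ 2 * M' ≤ T →
            (M', k') ≠ (M, k) →
            |ε ^ 2 * (M' : ℝ) - ε ^ 2 * M| ≤
              min (teps ε (ε ^ 2 * M)) (teps ε (ε ^ 2 * M')) ^ 2 →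
          |dheatConv a b n ε ζ M' k' - dheatConv a b n ε ζ M k| /
            (min (teps ε (ε ^ 2 * M)) (teps ε (ε ^ 2 * M')) ^ (ρ + θ₂) *
              max (Real.sqrt |ε ^ 2 * (M' : ℝ) - ε ^ 2 * M|) |ε * k' - ε * k| ^
                (β + 2 - (n : ℝ) - θ₁)) ≤
            C * Mc * teps ε T ^ (θ₁ - θ₂)) := by
  obtain ⟨C, hC, H⟩ := core a ha_symm ha0 ha2 ha_four b hb0 β ρ n r hβ hρ hn1 hn2 θ₁ hθ₁
  refine ⟨C, hC, ?_⟩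
  intro N ε hεN T hT Mc hMc ζ _ hζ
  have hε : 0 < ε := by rw [hεN]; positivity
  obtain ⟨Ha, Hb⟩ := H ε hε T hT Mc hMc ζ (HZ_of hε hζ)
  constructor
  · intro M k hM hMT
    have h1 := Ha M k hM hMT
    have hM0 : (0:ℝ) < M := by exact_mod_cast hM
    have hx : 0 < ε * √(M:ℝ) := by positivity
    have hxT := grid_le_T hε hMT
    rw [teps_grid hε hM]
    set x := ε * √(M:ℝ)
    calc _ ≤ x ^ (-((ρ + θ₂) + (β + 2 - (n : ℝ) - θ₁))) * (C * Mc * x ^ (ρ + β + 2 - n)) := by gcongr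
      _ = C * Mc * x ^ (θ₁ - θ₂) := by
        rw [show θ₁ - θ₂ = -((ρ + θ₂) + (β + 2 - (n : ℝ) - θ₁)) + (ρ + β + 2 - n) by ring,
          Real.rpow_add hx]; ring
      _ ≤ _ := by gcongr
  · have key : ∀ (M : ℕ) (k : ℤ) (M' : ℕ) (k' : ℤ), M ≤ M' →
            1 ≤ M → ε ^ 2 * M ≤ T → 1 ≤ M' → ε ^ 2 * M' ≤ T →
            (M', k') ≠ (M, k) →
            |ε ^ 2 * (M' : ℝ) - ε ^ 2 * M| ≤
              min (teps ε (ε ^ 2 * M)) (teps ε (ε ^ 2 * M')) ^ 2 →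
          |dheatConv a b n ε ζ M' k' - dheatConv a b n ε ζ M k| /
            (min (teps ε (ε ^ 2 * M)) (teps ε (ε ^ 2 * M')) ^ (ρ + θ₂) *
              max (Real.sqrt |ε ^ 2 * (M' : ℝ) - ε ^ 2 * M|) |ε * k' - ε * k| ^
                (β + 2 - (n : ℝ) - θ₁)) ≤
            C * Mc * teps ε T ^ (θ₁ - θ₂) := by
      intro M k M' k' hMM hM hMT hM' hMT' hne hclose
      obtain ⟨τ, rfl⟩ := Nat.exists_eq_add_of_le hMM
      have hM0 : (0:ℝ) < M := by exact_mod_cast hM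
      have hx : 0 < ε * √(M:ℝ) := by positivity
      have hxT := grid_le_T hε hMT
      have hmin : min (teps ε (ε ^ 2 * M)) (teps ε (ε ^ 2 * ((M + τ : ℕ):ℝ))) = ε * √(M:ℝ) := by
        rw [teps_grid hε hM, teps_grid hε hM']
        apply min_eq_left
        gcongr
      have hdiff : ε ^ 2 * ((M + τ : ℕ):ℝ) - ε ^ 2 * M = ε ^ 2 * τ := by push_cast; ring
      have hsq : √|ε ^ 2 * ((M + τ : ℕ):ℝ) - ε ^ 2 * M| = ε * √(τ:ℝ) := by
        rw [hdiff, abs_of_nonneg (by positivity), Real.sqrt_mul (by positivity), Real.sqrt_sq hε.le]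
      have hk : |ε * (k':ℝ) - ε * k| = ε * |(k':ℝ) - k| := by
        rw [← mul_sub, abs_mul, abs_of_pos hε]
      rw [hmin, hdiff, abs_of_nonneg (by positivity), mul_pow, Real.sq_sqrt hM0.le] at hclose
      have hτ : τ ≤ M := by
        have : (τ:ℝ) ≤ M := le_of_mul_le_mul_left hclose (by positivity)
        exact_mod_cast this
      have h1 := Hb M k τ k' hM hMT' hτ
      rw [hmin, hsq, hk]
      set x := ε * √(M:ℝ)
      set δ := max (ε * √(τ:ℝ)) (ε * |(k':ℝ) - k|) with hδ
      have hδ0 : 0 < δ := by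
        rw [hδ, lt_max_iff]
        rcases Nat.eq_zero_or_pos τ with h | h
        · right
          have hkk : k' ≠ k := by
            rintro rfl
            exact hne (by rw [h, add_zero])
          have : (k':ℝ) - k ≠ 0 := sub_ne_zero.2 (by exact_mod_cast hkk)
          positivity
        · left
          have : (0:ℝ) < τ := by exact_mod_cast h
          positivity
      rw [div_le_iff₀ (by positivity)]
      calc _ ≤ _ := h1
        _ = C * Mc * x ^ (θ₁ - θ₂) * (x ^ (ρ + θ₂) * δ ^ (β + 2 - (n : ℝ) - θ₁)) := by
          rw [show ρ + θ₁ = (θ₁ - θ₂) + (ρ + θ₂) by ring, Real.rpow_add hx]; ring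
        _ ≤ _ := by gcongr
    intro M k M' k' hM hMT hM' hMT' hne hclose
    rcases le_total M M' with h | h
    · exact key M k M' k' h hM hMT hM' hMT' hne hclose
    · have := key M' k' M k h hM' hMT' hM hMT hne.symm (by rw [abs_sub_comm, min_comm]; exact hclose)
      rw [min_comm, abs_sub_comm, abs_sub_comm (ε ^ 2 * (M':ℝ)), abs_sub_comm (ε * (k':ℝ))]
      exact this
end
end

section
/- Let a : ℤ → ℝ be finitely supported with a(−k) = a(k), Σ_k a(k) = 0, Σ_k k² a(k) = 2, and ν̂(θ) := Σ_k a(k) e^{−2πikθ} vanishing only for θ ∈ ℤ, and let P^ε be the associated grid discrete heat kernel. Then for every m ∈ ℕ there exists a constant C such that for all ε = 2^{−N}, all k = (k₀,k₁) ∈ ℕ² with |k|_s := 2k₀ + k₁ ≤ m, and all z = (t,x) ∈ ε²ℤ × εℤ with ‖z‖_s := |t|^{1/2} ∨ |x| ≤ 1, one has |D̄_ε^k P^ε(z)| ≤ C ‖z‖_{s,ε}^{−1−|k|_s}, where ‖z‖_{s,ε} := ‖z‖_s ∨ ε. (In other words, the localized part of the discrete heat kernel is a discrete singular kernel of order −1,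 uniformly in ε.) -/
open Real

noncomputable section


/-- Forward time difference `D̄_{t,ε²}` on grid functions (indexed form:
`f m j` is the value at the point `(ε² m, ε j)`). -/
def fdT (ε : ℝ) (f : ℤ → ℤ → ℝ) : ℤ → ℤ → ℝ :=
  fun m j => (f (m + 1) j - f m j) / ε ^ 2

/-- Forward space difference `D̄_{x,ε}` on grid functions. -/
def fdX (ε : ℝ) (f : ℤ → ℤ → ℝ) : ℤ → ℤ → ℝ :=
  fun m j => (f m (j + 1) - f m j) / ε

/-- Iterated forward differences `D̄_ε^k = D̄_{t,ε²}^{k₀} D̄_{x,ε}^{k₁}`. -/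
def fdiff (ε : ℝ) (k₀ k₁ : ℕ) (f : ℤ → ℤ → ℝ) : ℤ → ℤ → ℝ :=
  (fdT ε)^[k₀] ((fdX ε)^[k₁] f)

/-- Parabolic norm `‖z‖_s` of the grid point `z = (ε² m, ε j)`. -/
def snorm (ε : ℝ) (m j : ℤ) : ℝ :=
  max (Real.sqrt |ε ^ 2 * (m : ℝ)|) |ε * (j : ℝ)|

/-- `‖z‖_{s,ε} = ‖z‖_s ∨ ε` for the grid point `z = (ε² m, ε j)`. -/
def snormE (ε : ℝ) (m j : ℤ) : ℝ := max (snorm ε m j) ε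

/-- The grid function `K` is supported in the parabolic ball of radius `R`
around the origin. -/
def SuppIn (ε R : ℝ) (K : ℤ → ℤ → ℝ) : Prop :=
  ∀ m j : ℤ, R < snorm ε m j → K m j = 0

/-- `⦀K⦀_{ζ;m}^{(ε)} ≤ M`, expressed through the defining bounds. -/
def SingBound (ε ζ : ℝ) (m : ℕ) (M : ℝ) (K : ℤ → ℤ → ℝ) : Prop :=
  ∀ k₀ k₁ : ℕ, 2 * k₀ + k₁ ≤ m → ∀ mz j : ℤ,
    |fdiff ε k₀ k₁ K mz j| ≤ M * snormE ε mz j ^ (ζ - (2 * (k₀ : ℝ) + (k₁ : ℝ)))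
/-- The Fourier transform `ν̂(θ) = Σ_k a(k) e^{-2πikθ}`. -/
def nuHat (a : ℤ →₀ ℝ) (θ : ℝ) : ℂ :=
  ∑ k ∈ a.support, (a k : ℂ) * Complex.exp (-(2 * Real.pi * k * θ) * Complex.I)

/-- The grid discrete heat kernel `P^ε`, at the point `(ε² m, ε j)`, extended
by `0` to negative times. -/
def PfullG (a : ℤ →₀ ℝ) (ε : ℝ) : ℤ → ℤ → ℝ :=
  fun m j => if 0 ≤ m then ε⁻¹ * gridHeat a m.toNat j else 0

def psi8 (a : ℤ →₀ ℝ) (z : ℂ) : ℂ := ∑ k ∈ a.support, (a k : ℂ) * Complex.exp (k * z)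

def kap8 (a : ℤ →₀ ℝ) : ℝ := (2 * ∑ k ∈ a.support, |a k|)⁻¹

def q8 (a : ℤ →₀ ℝ) (z : ℂ) : ℂ := 1 + (kap8 a : ℂ) * psi8 a z

lemma psi8_cont (a : ℤ →₀ ℝ) : Continuous (psi8 a) := by
  unfold psi8; fun_prop

lemma q8_cont (a : ℤ →₀ ℝ) : Continuous (q8 a) := by
  have := psi8_cont a
  unfold q8; fun_prop

def zz8 (s θ : ℝ) : ℂ := (s : ℂ) + (θ : ℂ) * Complex.I

lemma zz8_cont (s : ℝ) : Continuous (zz8 s) := by unfold zz8; fun_prop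

lemma base8 (s : ℝ) (j : ℤ) :
    ∫ θ in (-π)..π, Complex.exp (j * zz8 s θ) = if j = 0 then 2 * π else 0 := by
  split_ifs with h
  · subst h; simp; ring
  · have hc : (j : ℂ) * Complex.I ≠ 0 := by simp [h]
    have : ∀ θ : ℝ, Complex.exp (j * zz8 s θ)
        = Complex.exp (j * s) * Complex.exp ((j * Complex.I) * θ) := by
      intro θ; rw [← Complex.exp_add]; congr 1; unfold zz8; ring
    simp_rw [this]
    rw [intervalIntegral.integral_const_mul, integral_exp_mul_complex hc]
    have e : Complex.exp (j * Complex.I * (π : ℝ)) = Complex.exp (j * Complex.I * ((-π : ℝ) : ℂ)) := by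
      rw [Complex.exp_eq_exp_iff_exists_int]
      exact ⟨j, by push_cast; ring⟩
    rw [e]; simp

lemma rep8 (a : ℤ →₀ ℝ) (s : ℝ) (n : ℕ) (j : ℤ) :
    ((gridHeat a n j : ℝ) : ℂ) = (2 * π : ℂ)⁻¹ *
      ∫ θ in (-π)..π, q8 a (zz8 s θ) ^ n * Complex.exp (j * zz8 s θ) := by
  induction n generalizing j with
  | zero =>
    simp only [pow_zero, one_mul]
    rw [base8]
    have : (π : ℂ) ≠ 0 := by exact_mod_cast Real.pi_ne_zero
    by_cases h : j = 0
    · simp [gridHeat, h]; field_simp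
    · simp [gridHeat, h]
  | succ n ih =>
    have h1 : gridHeat a (n+1) j = gridStep a (gridHeat a n) j := by
      unfold gridHeat; rw [Function.iterate_succ_apply']
    have hq := q8_cont a
    have hz := zz8_cont s
    rw [h1]
    have hg : gridStep a (gridHeat a n) j = gridHeat a n j +
        kap8 a * ∑ k ∈ a.support, a k * gridHeat a n (j + k) := rfl
    rw [hg]
    push_cast
    simp_rw [ih]
    have h2 : ∀ θ : ℝ, q8 a (zz8 s θ) ^ (n+1) * Complex.exp (j * zz8 s θ)
      = q8 a (zz8 s θ) ^ n * Complex.exp (j * zz8 s θ) +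
        (kap8 a : ℂ) * ∑ k ∈ a.support, (a k : ℂ) *
          (q8 a (zz8 s θ) ^ n * Complex.exp ((j + k : ℤ) * zz8 s θ)) := by
      intro θ
      have : ∀ k : ℤ, Complex.exp ((j + k : ℤ) * zz8 s θ) =
          Complex.exp (j * zz8 s θ) * Complex.exp (k * zz8 s θ) := by
        intro k; rw [← Complex.exp_add]; push_cast; ring_nf
      simp_rw [this]
      rw [pow_succ]
      conv_lhs => rw [show q8 a (zz8 s θ) ^ n * q8 a (zz8 s θ) =
        q8 a (zz8 s θ) ^ n * (1 + (kap8 a : ℂ) * psi8 a (zz8 s θ)) from rfl]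
      have h3 : ∑ k ∈ a.support, (a k : ℂ) * (q8 a (zz8 s θ) ^ n *
        (Complex.exp (j * zz8 s θ) * Complex.exp (k * zz8 s θ))) =
        q8 a (zz8 s θ) ^ n * Complex.exp (j * zz8 s θ) * psi8 a (zz8 s θ) := by
        unfold psi8
        rw [Finset.mul_sum]
        refine Finset.sum_congr rfl fun k _ => by ring
      rw [h3]; ring
    simp_rw [h2]
    rw [intervalIntegral.integral_add, intervalIntegral.integral_const_mul,
      intervalIntegral.integral_finsetSum]
    · simp_rw [intervalIntegral.integral_const_mul]
      rw [mul_add, Finset.mul_sum, Finset.mul_sum, Finset.mul_sum]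
      congr 1
      refine Finset.sum_congr rfl fun k _ => ?_
      ring
    · intro k _
      apply Continuous.intervalIntegrable; fun_prop
    · apply Continuous.intervalIntegrable; fun_prop
    · apply Continuous.intervalIntegrable; fun_prop

def E8 (a : ℤ →₀ ℝ) (s : ℝ) (k₀ k₁ n : ℕ) (j : ℤ) (θ : ℝ) : ℂ :=
  (q8 a (zz8 s θ) - 1) ^ k₀ * (Complex.exp (zz8 s θ) - 1) ^ k₁ *
    q8 a (zz8 s θ) ^ n * Complex.exp (j * zz8 s θ)

lemma E8_cont (a : ℤ →₀ ℝ) (s : ℝ) (k₀ k₁ n : ℕ) (j : ℤ) : Continuous (E8 a s k₀ k₁ n j) := by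
  have hq := q8_cont a
  have hz := zz8_cont s
  unfold E8; fun_prop

lemma fdX8 (a : ℤ →₀ ℝ) (s : ℝ) (k₁ n : ℕ) (j : ℤ) :
    (((fdX 1)^[k₁] (PfullG a 1) n j : ℝ) : ℂ) = (2 * π : ℂ)⁻¹ *
      ∫ θ in (-π)..π, E8 a s 0 k₁ n j θ := by
  induction k₁ generalizing j with
  | zero =>
    simp only [Function.iterate_zero, id, PfullG, E8]
    simp [rep8 a s n j]
  | succ k ih =>
    rw [Function.iterate_succ_apply']
    simp only [fdX, div_one]
    push_cast
    rw [ih, ih, ← mul_sub, ← intervalIntegral.integral_sub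
      ((E8_cont ..).intervalIntegrable ..) ((E8_cont ..).intervalIntegrable ..)]
    congr 2
    ext θ
    have : Complex.exp ((j + 1 : ℤ) * zz8 s θ) =
          Complex.exp (j * zz8 s θ) * Complex.exp (zz8 s θ) := by
      rw [← Complex.exp_add]; push_cast; ring_nf
    simp only [E8, this]; ring

lemma fd8 (a : ℤ →₀ ℝ) (s : ℝ) (k₀ k₁ n : ℕ) (j : ℤ) :
    ((fdiff 1 k₀ k₁ (PfullG a 1) n j : ℝ) : ℂ) = (2 * π : ℂ)⁻¹ *
      ∫ θ in (-π)..π, E8 a s k₀ k₁ n j θ := by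
  unfold fdiff
  induction k₀ generalizing n with
  | zero => exact fdX8 a s k₁ n j
  | succ k ih =>
    rw [Function.iterate_succ_apply']
    have h1 := ih n
    have h2 := ih (n+1)
    push_cast at h2
    simp only [fdT, one_pow, div_one]
    push_cast
    rw [h1, h2, ← mul_sub, ← intervalIntegral.integral_sub
      ((E8_cont ..).intervalIntegrable ..) ((E8_cont ..).intervalIntegrable ..)]
    congr 2
    ext θ
    simp only [E8]; ring

lemma odd8 (a : ℤ →₀ ℝ) (ha_symm : ∀ k : ℤ, a (-k) = a k) (f : ℤ → ℝ)
    (hf : ∀ k, f (-k) = - f k) : ∑ k ∈ a.support, a k * f k = 0 := by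
  have h : ∑ k ∈ a.support, a k * f k = ∑ k ∈ a.support, a (-k) * f (-k) := by
    refine Finset.sum_nbij' (fun k => -k) (fun k => -k) ?_ ?_ ?_ ?_ ?_ <;> simp [ha_symm]
  simp_rw [ha_symm, hf, mul_neg, Finset.sum_neg_distrib] at h
  linarith

def K8 (a : ℤ →₀ ℝ) : ℝ := ∑ k ∈ a.support, |a k| * (|(k:ℝ)| ^ 2 * Real.exp (5 * |(k:ℝ)|))
def L8 (a : ℤ →₀ ℝ) : ℝ := ∑ k ∈ a.support, |a k| * (|(k:ℝ)| ^ 3 * Real.exp (5 * |(k:ℝ)|))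

lemma exp8 (z : ℂ) (n : ℕ) (k : ℤ) (hz : ‖z‖ ≤ 5) :
    ‖Complex.exp (k * z) - ∑ m ∈ Finset.range n, (k * z) ^ m / (m.factorial : ℂ)‖ ≤
      |(k:ℝ)| ^ n * Real.exp (5 * |(k:ℝ)|) * ‖z‖ ^ n := by
  refine (Complex.norm_exp_sub_sum_le_norm_mul_exp _ n).trans ?_
  rw [norm_mul, Complex.norm_intCast, mul_pow]
  have : Real.exp (|(k:ℝ)| * ‖z‖) ≤ Real.exp (5 * |(k:ℝ)|) := by
    apply Real.exp_le_exp.2; nlinarith [abs_nonneg (k:ℝ)]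
  calc _ ≤ |(k:ℝ)| ^ n * ‖z‖ ^ n * Real.exp (5 * |(k:ℝ)|) := by gcongr
    _ = _ := by ring

lemma psi8_bound (a : ℤ →₀ ℝ) (ha_symm : ∀ k : ℤ, a (-k) = a k)
    (ha0 : ∑ k ∈ a.support, a k = 0) (z : ℂ) (hz : ‖z‖ ≤ 5) :
    ‖psi8 a z‖ ≤ K8 a * ‖z‖ ^ 2 := by
  have h1 := odd8 a ha_symm (fun k => (k:ℝ)) (by simp)
  have h0' : ∑ k ∈ a.support, (a k : ℂ) = 0 := by exact_mod_cast ha0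
  have h1' : ∑ k ∈ a.support, (a k : ℂ) * (k:ℂ) = 0 := by exact_mod_cast h1
  have : psi8 a z = ∑ k ∈ a.support, (a k : ℂ) *
      (Complex.exp (k * z) - ∑ m ∈ Finset.range 2, (k * z) ^ m / (m.factorial : ℂ)) := by
    simp only [Finset.sum_range_succ, Finset.range_zero, Finset.sum_empty, mul_sub, mul_add,
      Finset.sum_sub_distrib, Finset.sum_add_distrib]
    simp [h0', ← mul_assoc, ← Finset.sum_mul, h1']
    rfl
  rw [this, K8, Finset.sum_mul]
  refine (norm_sum_le _ _).trans (Finset.sum_le_sum fun k _ => ?_)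
  rw [norm_mul, Complex.norm_real, Real.norm_eq_abs, mul_assoc]
  gcongr
  exact exp8 z 2 k hz

lemma psi8_cubic (a : ℤ →₀ ℝ) (ha_symm : ∀ k : ℤ, a (-k) = a k)
    (ha0 : ∑ k ∈ a.support, a k = 0) (ha2 : ∑ k ∈ a.support, ((k : ℝ)) ^ 2 * a k = 2)
    (z : ℂ) (hz : ‖z‖ ≤ 5) :
    ‖psi8 a z - z ^ 2‖ ≤ L8 a * ‖z‖ ^ 3 := by
  have h1 := odd8 a ha_symm (fun k => (k:ℝ)) (by simp)
  have h0' : ∑ k ∈ a.support, (a k : ℂ) = 0 := by exact_mod_cast ha0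
  have h1' : ∑ k ∈ a.support, (a k : ℂ) * (k:ℂ) = 0 := by exact_mod_cast h1
  have h2' : ∑ k ∈ a.support, (k : ℂ) ^ 2 * a k = 2 := by exact_mod_cast ha2
  have h3' : ∑ k ∈ a.support, (a k : ℂ) * ((k * z) ^ 2 / 2) = z ^ 2 := by
    have : ∀ k ∈ a.support, (a k : ℂ) * ((k * z) ^ 2 / 2) = (k : ℂ) ^ 2 * a k * (z ^ 2 / 2) := by
      intro k _; ring
    rw [Finset.sum_congr rfl this, ← Finset.sum_mul, h2']; ring
  have : psi8 a z - z ^ 2 = ∑ k ∈ a.support, (a k : ℂ) *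
      (Complex.exp (k * z) - ∑ m ∈ Finset.range 3, (k * z) ^ m / (m.factorial : ℂ)) := by
    simp only [Finset.sum_range_succ, Finset.range_zero, Finset.sum_empty, mul_sub, mul_add,
      Finset.sum_sub_distrib, Finset.sum_add_distrib]
    simp only [Nat.factorial_two, Nat.cast_two, h3', Nat.factorial_zero, Nat.factorial_one]
    simp [h0', ← mul_assoc, ← Finset.sum_mul, h1']
    rfl
  rw [this, L8, Finset.sum_mul]
  refine (norm_sum_le _ _).trans (Finset.sum_le_sum fun k _ => ?_)
  rw [norm_mul, Complex.norm_real, Real.norm_eq_abs, mul_assoc]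
  gcongr
  exact exp8 z 3 k hz

lemma psi8_diff (a : ℤ →₀ ℝ) (ha_symm : ∀ k : ℤ, a (-k) = a k) (s θ : ℝ)
    (hs : |s| ≤ 1) (hθ : |θ| ≤ 5) :
    ‖psi8 a (zz8 s θ) - psi8 a (θ * Complex.I)‖ ≤ K8 a * (|s| ^ 2 + |s| * |θ|) := by
  have h1 := odd8 a ha_symm (fun k => (k:ℝ)) (by simp)
  have h1' : ∑ k ∈ a.support, (a k : ℂ) * (k:ℂ) = 0 := by exact_mod_cast h1
  have : psi8 a (zz8 s θ) - psi8 a (θ * Complex.I) = ∑ k ∈ a.support, (a k : ℂ) *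
      (Complex.exp (k * (θ * Complex.I)) * (Complex.exp (k * s) - 1 - k * s) +
        k * s * (Complex.exp (k * (θ * Complex.I)) - 1)) := by
    have e : ∀ k : ℤ, (a k : ℂ) *
      (Complex.exp (k * (θ * Complex.I)) * (Complex.exp (k * s) - 1 - k * s) +
        k * s * (Complex.exp (k * (θ * Complex.I)) - 1)) =
        (a k : ℂ) * Complex.exp (k * zz8 s θ) - a k * Complex.exp (k * (θ * Complex.I))
          - (a k * k) * s := by
      intro k
      rw [zz8, mul_add (k : ℂ) (s : ℂ), Complex.exp_add]; ring
    simp_rw [e, Finset.sum_sub_distrib, ← Finset.sum_mul, h1', psi8]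
    ring
  rw [this, K8, Finset.sum_mul]
  refine (norm_sum_le _ _).trans (Finset.sum_le_sum fun k _ => ?_)
  rw [norm_mul, Complex.norm_real, Real.norm_eq_abs, mul_assoc |a k|]
  apply mul_le_mul_of_nonneg_left _ (abs_nonneg _)
  have e1 : ‖Complex.exp (k * (θ * Complex.I))‖ = 1 := by
    rw [← mul_assoc]
    exact_mod_cast Complex.norm_exp_ofReal_mul_I (k * θ)
  have e2 := exp8 (s : ℂ) 2 k (by simp; linarith)
  have e3 : ‖Complex.exp (k * (θ * Complex.I)) - 1‖ ≤ |(k:ℝ)| * |θ| := by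
    have := Real.norm_exp_I_mul_ofReal_sub_one_le (x := k * θ)
    rw [Real.norm_eq_abs, abs_mul] at this
    refine le_trans (le_of_eq ?_) this
    congr 3; push_cast; ring
  simp only [Finset.sum_range_succ, Finset.range_zero, Finset.sum_empty] at e2
  simp only [zero_add, pow_zero, Nat.factorial_zero, Nat.cast_one, div_one, pow_one,
    Nat.factorial_one, Complex.norm_real, Real.norm_eq_abs, ← sub_sub] at e2
  refine (norm_add_le _ _).trans ?_
  rw [norm_mul, norm_mul, norm_mul, e1, one_mul, Complex.norm_intCast, Complex.norm_real,
    Real.norm_eq_abs, mul_add]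
  refine add_le_add e2 ?_
  have h5 : (1:ℝ) ≤ Real.exp (5 * |(k:ℝ)|) := Real.one_le_exp (by positivity)
  calc |(k:ℝ)| * |s| * ‖Complex.exp (k * (θ * Complex.I)) - 1‖ ≤ |(k:ℝ)| * |s| * (|(k:ℝ)| * |θ|) := by gcongr
    _ = |(k:ℝ)| ^ 2 * 1 * (|s| * |θ|) := by ring
    _ ≤ _ := by gcongr

def phi8 (a : ℤ →₀ ℝ) (θ : ℝ) : ℝ := ∑ k ∈ a.support, a k * Real.cos (k * θ)

lemma phi8_cont (a : ℤ →₀ ℝ) : Continuous (phi8 a) := by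
  unfold phi8; fun_prop

lemma psi8_phi (a : ℤ →₀ ℝ) (ha_symm : ∀ k : ℤ, a (-k) = a k) (θ : ℝ) :
    psi8 a (θ * Complex.I) = phi8 a θ := by
  have h := odd8 a ha_symm (fun k => Real.sin (k * θ)) (by intro k; simp)
  have h' : ∑ k ∈ a.support, (a k : ℂ) * (Complex.sin (k * θ) * Complex.I) = 0 := by
    simp_rw [← mul_assoc]
    rw [← Finset.sum_mul]
    have : ∑ k ∈ a.support, (a k : ℂ) * (Complex.sin (k * θ)) = 0 := by exact_mod_cast h
    rw [this, zero_mul]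
  unfold psi8 phi8
  push_cast
  simp_rw [← mul_assoc, Complex.exp_mul_I, mul_add]
  rw [Finset.sum_add_distrib, h', add_zero]

lemma nuHat8 (a : ℤ →₀ ℝ) (ha_symm : ∀ k : ℤ, a (-k) = a k) (θ : ℝ) :
    nuHat a (θ / (2 * π)) = phi8 a θ := by
  have : phi8 a θ = phi8 a (-θ) := by unfold phi8; simp
  rw [this, ← psi8_phi a ha_symm]
  unfold nuHat psi8
  refine Finset.sum_congr rfl fun k _ => ?_
  have : (π : ℂ) ≠ 0 := by exact_mod_cast Real.pi_ne_zero
  congr 2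
  push_cast; field_simp

lemma phi8_neg (a : ℤ →₀ ℝ)
    (ha_symm : ∀ k : ℤ, a (-k) = a k)
    (ha0 : ∑ k ∈ a.support, a k = 0)
    (ha2 : ∑ k ∈ a.support, ((k : ℝ)) ^ 2 * a k = 2)
    (ha_four : ∀ θ : ℝ, nuHat a θ = 0 → ∃ z : ℤ, θ = (z : ℝ)) :
    ∃ c : ℝ, 0 < c ∧ ∀ θ : ℝ, |θ| ≤ π → phi8 a θ ≤ - c * θ ^ 2 := by
  have hL : 0 ≤ L8 a := Finset.sum_nonneg fun k _ => by positivity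
  have hnear : ∀ θ : ℝ, |θ| ≤ 5 → L8 a * |θ| ≤ 1 / 2 → phi8 a θ ≤ - (1/2) * θ ^ 2 := by
    intro θ h5 h
    have := psi8_cubic a ha_symm ha0 ha2 (θ * Complex.I) (by simpa using h5)
    rw [psi8_phi a ha_symm, mul_pow, Complex.I_sq] at this
    have e : (phi8 a θ : ℂ) - (θ:ℂ) ^ 2 * (-1) = ((phi8 a θ + θ ^ 2 : ℝ) : ℂ) := by push_cast; ring
    rw [e, Complex.norm_real, norm_mul, Complex.norm_real, Complex.norm_I, mul_one,
      Real.norm_eq_abs, Real.norm_eq_abs] at this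
    have h2 := (le_abs_self _).trans this
    have h3 : L8 a * |θ| ^ 3 ≤ 1/2 * θ ^ 2 := by
      calc L8 a * |θ| ^ 3 = (L8 a * |θ|) * |θ| ^ 2 := by ring
        _ ≤ 1/2 * |θ| ^ 2 := by gcongr
        _ = _ := by rw [sq_abs]
    linarith
  have hpi := Real.pi_pos
  have hpi4 := Real.pi_le_four
  obtain ⟨δ, hδ, hδ1, hδL⟩ : ∃ δ : ℝ, 0 < δ ∧ δ ≤ 1 ∧ L8 a * δ ≤ 1 / 2 := by
    refine ⟨1 / (2 * (L8 a + 1)), by positivity, ?_, ?_⟩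
    · rw [div_le_one (by positivity)]; linarith
    · rw [mul_one_div, div_le_iff₀ (by positivity)]; linarith
  have hnear' : ∀ θ : ℝ, |θ| ≤ δ → phi8 a θ ≤ - (1/2) * θ ^ 2 := by
    intro θ h
    exact hnear θ (by linarith) ((mul_le_mul_of_nonneg_left h hL).trans hδL)
  have hpos : ∀ θ ∈ Set.Icc δ π, phi8 a θ < 0 := by
    intro θ hθ
    by_contra hcon
    push Not at hcon
    have hδ' : phi8 a δ ≤ 0 := by
      have := hnear' δ (by rw [abs_of_pos hδ]); nlinarith
    obtain ⟨x, hx, hx0⟩ := intermediate_value_Icc hθ.1 (phi8_cont a).continuousOn ⟨hδ', hcon⟩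
    obtain ⟨z, hz⟩ := ha_four (x / (2 * π)) (by rw [nuHat8 a ha_symm, hx0]; simp)
    have hxp : 0 < x := lt_of_lt_of_le hδ hx.1
    have hxp2 : x ≤ π := hx.2.trans hθ.2
    have z1 : (0:ℝ) < z := by rw [← hz]; positivity
    have z2 : (z:ℝ) < 1 := by rw [← hz, div_lt_one (by positivity)]; linarith
    have z1' : 0 < z := by exact_mod_cast z1
    have z2' : z < 1 := by exact_mod_cast z2
    omega
  obtain ⟨x, hx, hmax⟩ := isCompact_Icc.exists_isMaxOn
    (Set.nonempty_Icc.2 (by linarith [Real.pi_gt_three] : δ ≤ π)) (phi8_cont a).continuousOn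
  have hM := hpos x hx
  refine ⟨min (1/2) (-phi8 a x / π ^ 2), lt_min (by norm_num) (div_pos (by linarith) (by positivity)), ?_⟩
  intro θ hθ
  have heven : phi8 a θ = phi8 a |θ| := by
    rcases abs_choice θ with h | h <;> rw [h]
    unfold phi8; simp
  rcases le_total |θ| δ with h | h
  · have := hnear' θ h
    have := min_le_left (1/2 : ℝ) (-phi8 a x / π ^ 2)
    nlinarith [sq_nonneg θ]
  · have h1 : phi8 a |θ| ≤ phi8 a x := hmax ⟨h, hθ⟩
    have h2 : min (1/2) (-phi8 a x / π ^ 2) * θ ^ 2 ≤ (-phi8 a x / π ^ 2) * π ^ 2 := by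
      apply mul_le_mul (min_le_right _ _) _ (sq_nonneg _) (div_nonneg (by linarith) (by positivity))
      rw [← sq_abs]; gcongr
    rw [div_mul_cancel₀ _ (by positivity)] at h2
    rw [heven]; linarith

lemma A8_pos (a : ℤ →₀ ℝ) (ha2 : ∑ k ∈ a.support, ((k : ℝ)) ^ 2 * a k = 2) :
    0 < ∑ k ∈ a.support, |a k| := by
  have hne : a.support.Nonempty := by
    by_contra h
    rw [Finset.not_nonempty_iff_eq_empty] at h
    rw [h] at ha2; simp at ha2
  exact Finset.sum_pos (fun k hk => abs_pos.2 (Finsupp.mem_support_iff.1 hk)) hne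

lemma q8_bound (a : ℤ →₀ ℝ)
    (ha_symm : ∀ k : ℤ, a (-k) = a k)
    (ha0 : ∑ k ∈ a.support, a k = 0)
    (ha2 : ∑ k ∈ a.support, ((k : ℝ)) ^ 2 * a k = 2)
    (ha_four : ∀ θ : ℝ, nuHat a θ = 0 → ∃ z : ℤ, θ = (z : ℝ)) :
    ∃ c C : ℝ, 0 < c ∧ 0 ≤ C ∧ ∀ s θ : ℝ, |s| ≤ 1 → |θ| ≤ π →
      ‖q8 a (zz8 s θ)‖ ≤ Real.exp (C * s ^ 2 - c * θ ^ 2) := by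
  obtain ⟨c, hc, hphi⟩ := phi8_neg a ha_symm ha0 ha2 ha_four
  have hA := A8_pos a ha2
  have hk : 0 < kap8 a := by unfold kap8; positivity
  have hK : 0 ≤ K8 a := Finset.sum_nonneg fun k _ => by positivity
  have hpi4 := Real.pi_le_four
  refine ⟨kap8 a * c / 2, kap8 a * (K8 a + K8 a ^ 2 / (2 * c)), by positivity, by positivity, ?_⟩
  intro s θ hs hθ
  have hd := psi8_diff a ha_symm s θ hs (by linarith)
  rw [psi8_phi a ha_symm] at hd
  have hφ := hphi θ hθ
  have hlow : - ∑ k ∈ a.support, |a k| ≤ phi8 a θ := by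
    unfold phi8
    rw [← Finset.sum_neg_distrib]
    refine Finset.sum_le_sum fun k _ => ?_
    have : |a k * Real.cos (k * θ)| ≤ |a k| := by
      rw [abs_mul]
      exact mul_le_of_le_one_right (abs_nonneg _) (Real.abs_cos_le_one _)
    exact (abs_le.1 this).1
  have hkA : kap8 a * ∑ k ∈ a.support, |a k| = 1 / 2 := by
    unfold kap8; field_simp
  have hp0 : 0 ≤ 1 + kap8 a * phi8 a θ := by nlinarith
  have e : q8 a (zz8 s θ) = ((1 + kap8 a * phi8 a θ : ℝ) : ℂ) +
      (kap8 a : ℂ) * (psi8 a (zz8 s θ) - phi8 a θ) := by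
    unfold q8; push_cast; ring
  have h1 : ‖q8 a (zz8 s θ)‖ ≤ (1 + kap8 a * phi8 a θ) +
      kap8 a * (K8 a * (|s| ^ 2 + |s| * |θ|)) := by
    rw [e]
    refine (norm_add_le _ _).trans ?_
    rw [norm_mul, Complex.norm_real, Complex.norm_real, Real.norm_of_nonneg hp0,
      Real.norm_of_nonneg hk.le]
    gcongr
  have h2 : K8 a * (|s| * |θ|) ≤ K8 a ^ 2 / (2 * c) * s ^ 2 + c / 2 * θ ^ 2 := by
    rw [← sq_abs s, ← sq_abs θ]
    have : K8 a ^ 2 / (2 * c) * |s| ^ 2 + c / 2 * |θ| ^ 2 - K8 a * (|s| * |θ|) =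
      (K8 a * |s| - c * |θ|) ^ 2 / (2 * c) := by field_simp; ring
    have h3 : 0 ≤ (K8 a * |s| - c * |θ|) ^ 2 / (2 * c) := by positivity
    linarith
  refine h1.trans (le_trans ?_ (Real.add_one_le_exp _))
  have h4 : phi8 a θ + (K8 a * (|s| ^ 2 + |s| * |θ|)) ≤
      (K8 a + K8 a ^ 2 / (2 * c)) * s ^ 2 - c / 2 * θ ^ 2 := by
    rw [mul_add, sq_abs]; linarith
  have h5 := mul_le_mul_of_nonneg_left h4 hk.le
  linarith

lemma poly8 (c : ℝ) (hc : 0 < c) (L : ℕ) : ∃ B : ℝ, 0 < B ∧ ∀ u : ℝ, 0 ≤ u →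
    (1 + u) ^ L * Real.exp (-c * u ^ 2) ≤ B * (1 + u ^ 2)⁻¹ := by
  refine ⟨(L+2).factorial * Real.exp (1 + 1 / (4 * c)), by positivity, fun u hu => ?_⟩
  rw [← div_eq_mul_inv, le_div_iff₀ (by positivity)]
  have h1 := Real.pow_div_factorial_le_exp (1 + u) (by positivity) (L+2)
  rw [div_le_iff₀ (by positivity)] at h1
  have h2 : (1 + u) ^ L * (1 + u ^ 2) ≤ (1 + u) ^ (L + 2) := by
    rw [pow_add]; gcongr; nlinarith
  have h3 : Real.exp (1 + u) * Real.exp (-c * u ^ 2) ≤ Real.exp (1 + 1 / (4 * c)) := by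
    rw [← Real.exp_add]
    apply Real.exp_le_exp.2
    have : 1 / (4 * c) - u + c * u ^ 2 = (2 * c * u - 1) ^ 2 / (4 * c) := by field_simp; ring
    have h4 : 0 ≤ (2 * c * u - 1) ^ 2 / (4 * c) := by positivity
    linarith
  calc (1 + u) ^ L * Real.exp (-c * u ^ 2) * (1 + u ^ 2)
      = ((1 + u) ^ L * (1 + u ^ 2)) * Real.exp (-c * u ^ 2) := by ring
    _ ≤ (Real.exp (1 + u) * (L+2).factorial) * Real.exp (-c * u ^ 2) := by
        exact mul_le_mul_of_nonneg_right (h2.trans h1) (Real.exp_pos _).le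
    _ = (L+2).factorial * (Real.exp (1 + u) * Real.exp (-c * u ^ 2)) := by ring
    _ ≤ _ := by gcongr

lemma int8 (r : ℝ) (hr : 0 < r) : ∫ θ in (-π)..π, (1 + (r * θ) ^ 2)⁻¹ ≤ π / r := by
  rw [intervalIntegral.integral_comp_mul_left (fun x => (1 + x ^ 2)⁻¹) hr.ne',
    integral_inv_one_add_sq, smul_eq_mul]
  have h1 := Real.arctan_lt_pi_div_two (r * π)
  have h2 := Real.neg_pi_div_two_lt_arctan (r * -π)
  rw [div_eq_inv_mul]
  gcongr
  linarith

lemma bound8 (a : ℤ →₀ ℝ)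
    (ha_symm : ∀ k : ℤ, a (-k) = a k)
    (ha0 : ∑ k ∈ a.support, a k = 0)
    (ha2 : ∑ k ∈ a.support, ((k : ℝ)) ^ 2 * a k = 2)
    (ha_four : ∀ θ : ℝ, nuHat a θ = 0 → ∃ z : ℤ, θ = (z : ℝ)) (k₀ k₁ : ℕ) :
    ∃ B : ℝ, 0 < B ∧ ∀ (n : ℕ) (j : ℤ) (r : ℝ), 0 < r → r ^ 2 = n + 1 →
      |fdiff 1 k₀ k₁ (PfullG a 1) n j| ≤
        B * r⁻¹ ^ (2 * k₀ + k₁ + 1) * Real.exp (-(|(j:ℝ)| / r)) := by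
  obtain ⟨c, C, hc, hC, hq⟩ := q8_bound a ha_symm ha0 ha2 ha_four
  obtain ⟨B, hB, hpoly⟩ := poly8 c hc (2 * k₀ + k₁)
  have hA := A8_pos a ha2
  have hk : 0 < kap8 a := by unfold kap8; positivity
  have hK : 0 ≤ K8 a := Finset.sum_nonneg fun k _ => by positivity
  have hpi4 := Real.pi_le_four
  have hpi := Real.pi_pos
  set W : ℝ := (kap8 a * (K8 a + 1)) ^ k₀ * Real.exp 5 ^ k₁ * Real.exp (C + c * π ^ 2) * B with hW
  refine ⟨W, by positivity, ?_⟩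
  intro n j r hr hr2
  have hr1 : 1 ≤ r := by
    by_contra h
    push Not at h
    have : (0:ℝ) ≤ n := Nat.cast_nonneg n
    nlinarith
  have hri : r⁻¹ ≤ 1 := inv_le_one_of_one_le₀ hr1
  obtain ⟨s, hs, hsj⟩ : ∃ s : ℝ, |s| = r⁻¹ ∧ j * s = -(|(j:ℝ)| / r) := by
    rcases le_total 0 (j:ℝ) with h | h
    · exact ⟨-r⁻¹, by rw [abs_neg, abs_of_pos (by positivity)], by rw [abs_of_nonneg h]; ring⟩
    · exact ⟨r⁻¹, by rw [abs_of_pos (by positivity)], by rw [abs_of_nonpos h]; ring⟩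
  have hpt : ∀ θ ∈ Set.Icc (-π) π, ‖E8 a s k₀ k₁ n j θ‖ ≤
      W * r⁻¹ ^ (2 * k₀ + k₁) * Real.exp (-(|(j:ℝ)| / r)) * (1 + (r * θ) ^ 2)⁻¹ := by
    intro θ hθ'
    have hθ : |θ| ≤ π := abs_le.2 hθ'
    set u := r * |θ| with hu
    have hu0 : 0 ≤ u := by positivity
    have hu2 : (r * θ) ^ 2 = u ^ 2 := by rw [hu, mul_pow, mul_pow, sq_abs]
    have hz : ‖zz8 s θ‖ ≤ r⁻¹ * (1 + u) := by
      unfold zz8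
      refine (norm_add_le _ _).trans ?_
      rw [norm_mul, Complex.norm_real, Complex.norm_real, Complex.norm_I, mul_one,
        Real.norm_eq_abs, Real.norm_eq_abs, hs, hu, mul_add, inv_mul_cancel_left₀ hr.ne', mul_one]
    have hz5 : ‖zz8 s θ‖ ≤ 5 := by
      refine hz.trans ?_
      rw [hu, mul_add, inv_mul_cancel_left₀ hr.ne']; linarith
    have h1 : ‖q8 a (zz8 s θ) - 1‖ ≤ kap8 a * (K8 a + 1) * (r⁻¹ * (1 + u)) ^ 2 := by
      have : q8 a (zz8 s θ) - 1 = kap8 a * psi8 a (zz8 s θ) := by unfold q8; ring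
      rw [this, norm_mul, Complex.norm_real, Real.norm_of_nonneg hk.le, mul_assoc]
      gcongr
      refine (psi8_bound a ha_symm ha0 _ hz5).trans ?_
      gcongr
      linarith
    have h2 : ‖Complex.exp (zz8 s θ) - 1‖ ≤ Real.exp 5 * (r⁻¹ * (1 + u)) := by
      have := Complex.norm_exp_sub_sum_le_norm_mul_exp (zz8 s θ) 1
      simp at this
      refine this.trans ?_
      rw [mul_comm]
      gcongr
    have h3 : ‖q8 a (zz8 s θ) ^ n‖ ≤ Real.exp (C + c * π ^ 2) * Real.exp (-c * u ^ 2) := by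
      rw [norm_pow]
      refine (pow_le_pow_left₀ (norm_nonneg _) (hq s θ (by rw [hs]; exact hri) hθ) n).trans ?_
      rw [← Real.exp_nat_mul, ← Real.exp_add]
      apply Real.exp_le_exp.2
      have hs2 : s ^ 2 = (r ^ 2)⁻¹ := by rw [← sq_abs, hs, inv_pow]
      have e1 : (n:ℝ) * s ^ 2 ≤ 1 := by
        rw [hs2, ← div_eq_mul_inv, div_le_one (by positivity)]; linarith
      have e2 : u ^ 2 = (n + 1) * θ ^ 2 := by rw [← hu2, mul_pow, hr2]
      have e3 : θ ^ 2 ≤ π ^ 2 := by rw [← sq_abs]; gcongr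
      rw [e2]
      nlinarith
    have h4 : ‖Complex.exp (j * zz8 s θ)‖ = Real.exp (-(|(j:ℝ)| / r)) := by
      rw [Complex.norm_exp, ← hsj]
      congr 1
      simp [zz8]
    unfold E8
    rw [norm_mul, norm_mul, norm_mul, norm_pow, norm_pow, h4, hu2]
    calc _ ≤ (kap8 a * (K8 a + 1) * (r⁻¹ * (1 + u)) ^ 2) ^ k₀ *
          (Real.exp 5 * (r⁻¹ * (1 + u))) ^ k₁ *
          (Real.exp (C + c * π ^ 2) * Real.exp (-c * u ^ 2)) * Real.exp (-(|(j:ℝ)| / r)) := by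
          gcongr
      _ = (kap8 a * (K8 a + 1)) ^ k₀ * Real.exp 5 ^ k₁ * Real.exp (C + c * π ^ 2) *
          r⁻¹ ^ (2 * k₀ + k₁) * Real.exp (-(|(j:ℝ)| / r)) *
          ((1 + u) ^ (2 * k₀ + k₁) * Real.exp (-c * u ^ 2)) := by
          rw [mul_pow _ _ k₀, mul_pow _ _ k₁, ← pow_mul, mul_pow _ _ k₁, mul_pow _ _ (2 * k₀),
            pow_add (1 + u), pow_add r⁻¹]
          ring
      _ ≤ (kap8 a * (K8 a + 1)) ^ k₀ * Real.exp 5 ^ k₁ * Real.exp (C + c * π ^ 2) *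
          r⁻¹ ^ (2 * k₀ + k₁) * Real.exp (-(|(j:ℝ)| / r)) * (B * (1 + u ^ 2)⁻¹) := by
          exact mul_le_mul_of_nonneg_left (hpoly u hu0) (by positivity)
      _ = _ := by rw [hW]; ring
  have hcontR : Continuous fun θ : ℝ => W * r⁻¹ ^ (2 * k₀ + k₁) * Real.exp (-(|(j:ℝ)| / r)) *
      (1 + (r * θ) ^ 2)⁻¹ := by
    apply Continuous.mul continuous_const
    apply Continuous.inv₀ (by fun_prop)
    intro x; positivity
  have hI : ‖∫ θ in (-π)..π, E8 a s k₀ k₁ n j θ‖ ≤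
      W * r⁻¹ ^ (2 * k₀ + k₁) * Real.exp (-(|(j:ℝ)| / r)) * (π / r) := by
    refine (intervalIntegral.norm_integral_le_integral_norm (by linarith)).trans ?_
    refine (intervalIntegral.integral_mono_on (by linarith)
      ((E8_cont ..).norm.intervalIntegrable ..) (hcontR.intervalIntegrable ..) hpt).trans ?_
    rw [intervalIntegral.integral_const_mul]
    gcongr
    exact int8 r hr
  rw [← Real.norm_eq_abs, ← Complex.norm_real, fd8 a s k₀ k₁ n j, norm_mul]
  have e : ‖(2 * π : ℂ)⁻¹‖ = (2 * π)⁻¹ := by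
    rw [norm_inv]; simp [abs_of_pos hpi]
  rw [e]
  calc (2 * π)⁻¹ * _ ≤ (2 * π)⁻¹ * (W * r⁻¹ ^ (2 * k₀ + k₁) * Real.exp (-(|(j:ℝ)| / r)) * (π / r)) := by
        gcongr
    _ = 1 / 2 * (W * r⁻¹ ^ (2 * k₀ + k₁ + 1) * Real.exp (-(|(j:ℝ)| / r))) := by
        rw [pow_succ]; field_simp
    _ ≤ _ := by
        have : 0 ≤ (W * r⁻¹ ^ (2 * k₀ + k₁ + 1) * Real.exp (-(|(j:ℝ)| / r))) := by positivity
        linarith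

/-- Nonpositive times. -/
lemma neg8 (a : ℤ →₀ ℝ)
    (ha_symm : ∀ k : ℤ, a (-k) = a k)
    (ha0 : ∑ k ∈ a.support, a k = 0)
    (ha2 : ∑ k ∈ a.support, ((k : ℝ)) ^ 2 * a k = 2)
    (ha_four : ∀ θ : ℝ, nuHat a θ = 0 → ∃ z : ℤ, θ = (z : ℝ)) (k₀ k₁ : ℕ) :
    ∃ B : ℝ, 0 < B ∧ ∀ (n j : ℤ), n ≤ 0 →
      |fdiff 1 k₀ k₁ (PfullG a 1) n j| ≤ B * Real.exp (n - |(j:ℝ)|) := by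
  induction k₀ with
  | zero =>
    obtain ⟨B, hB, h⟩ := bound8 a ha_symm ha0 ha2 ha_four 0 k₁
    refine ⟨B, hB, fun n j hn => ?_⟩
    rcases hn.eq_or_lt with rfl | hn
    · have := h 0 j 1 one_pos (by simp)
      simpa using this
    · have : ∀ k : ℕ, ∀ j : ℤ, (fdX 1)^[k] (PfullG a 1) n j = 0 := by
        intro k
        induction k with
        | zero => intro j; simp [PfullG, hn]
        | succ k ih => intro j; rw [Function.iterate_succ_apply']; simp [fdX, ih]
      have h0 : fdiff 1 0 k₁ (PfullG a 1) n j = 0 := this k₁ j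
      rw [h0, abs_zero]; positivity
  | succ k₀ ih =>
    obtain ⟨B, hB, h⟩ := bound8 a ha_symm ha0 ha2 ha_four (k₀ + 1) k₁
    obtain ⟨B', hB', h'⟩ := ih
    refine ⟨B + B' * (Real.exp 1 + 1), by positivity, fun n j hn => ?_⟩
    rcases hn.eq_or_lt with rfl | hn
    · have := h 0 j 1 one_pos (by simp)
      have h2 : |fdiff 1 (k₀ + 1) k₁ (PfullG a 1) 0 j| ≤ B * Real.exp (-|(j:ℝ)|) := by
        simpa using this
      refine h2.trans ?_
      simp only [Int.cast_zero, zero_sub]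
      gcongr
      have : 0 ≤ B' * (Real.exp 1 + 1) := by positivity
      linarith
    · have e : fdiff 1 (k₀ + 1) k₁ (PfullG a 1) n j = fdiff 1 k₀ k₁ (PfullG a 1) (n + 1) j -
        fdiff 1 k₀ k₁ (PfullG a 1) n j := by
        unfold fdiff
        rw [Function.iterate_succ_apply']; simp [fdT]
      have h1 := h' (n + 1) j (by omega)
      have h2 := h' n j hn.le
      have h3 : Real.exp (((n + 1 : ℤ) : ℝ) - |(j:ℝ)|) = Real.exp 1 * Real.exp (n - |(j:ℝ)|) := by
        rw [← Real.exp_add]; push_cast; ring_nf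
      rw [h3] at h1
      rw [e]
      refine (abs_sub _ _).trans ?_
      have : 0 ≤ B * Real.exp (n - |(j:ℝ)|) := by positivity
      linarith

lemma snormE8_pos (n j : ℤ) : 1 ≤ snormE 1 n j := le_max_right _ _

lemma unit8 (a : ℤ →₀ ℝ)
    (ha_symm : ∀ k : ℤ, a (-k) = a k)
    (ha0 : ∑ k ∈ a.support, a k = 0)
    (ha2 : ∑ k ∈ a.support, ((k : ℝ)) ^ 2 * a k = 2)
    (ha_four : ∀ θ : ℝ, nuHat a θ = 0 → ∃ z : ℤ, θ = (z : ℝ)) (k₀ k₁ : ℕ) :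
    ∃ B : ℝ, 0 < B ∧ ∀ (n j : ℤ),
      |fdiff 1 k₀ k₁ (PfullG a 1) n j| * snormE 1 n j ^ (2 * k₀ + k₁ + 1) ≤ B := by
  obtain ⟨B, hB, h⟩ := bound8 a ha_symm ha0 ha2 ha_four k₀ k₁
  obtain ⟨B', hB', h'⟩ := neg8 a ha_symm ha0 ha2 ha_four k₀ k₁
  set p := 2 * k₀ + k₁ + 1 with hp
  have key : ∀ x : ℝ, 0 ≤ x → (1 + x) ^ p * Real.exp (-x) ≤ p.factorial * Real.exp 1 := by
    intro x hx
    have h1 := Real.pow_div_factorial_le_exp (1 + x) (by positivity) p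
    rw [div_le_iff₀ (by positivity)] at h1
    calc (1 + x) ^ p * Real.exp (-x) ≤ (Real.exp (1 + x) * p.factorial) * Real.exp (-x) := by gcongr
      _ = p.factorial * (Real.exp (1 + x) * Real.exp (-x)) := by ring
      _ = _ := by rw [← Real.exp_add]; ring_nf
  refine ⟨(B + B') * (p.factorial * Real.exp 1), by positivity, fun n j => ?_⟩
  have hs0 : 0 ≤ snormE 1 n j := zero_le_one.trans (snormE8_pos n j)
  rcases le_total n 0 with hn | hn
  · have hnR : (n:ℝ) ≤ 0 := by exact_mod_cast hn
    set x : ℝ := |(j:ℝ)| - n with hx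
    have hx0 : 0 ≤ x := by have := abs_nonneg (j:ℝ); linarith
    have hM : snormE 1 n j ≤ 1 + x := by
      unfold snormE snorm
      have hj := abs_nonneg (j:ℝ)
      refine max_le (max_le ?_ ?_) (by linarith)
      · rw [one_pow, one_mul, abs_of_nonpos hnR, Real.sqrt_le_iff]
        constructor <;> nlinarith
      · rw [one_mul]; linarith
    have h1 := h' n j hn
    rw [show (n:ℝ) - |(j:ℝ)| = -x by rw [hx]; ring] at h1
    calc _ ≤ (B' * Real.exp (-x)) * (1 + x) ^ p := by gcongr
      _ = B' * ((1 + x) ^ p * Real.exp (-x)) := by ring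
      _ ≤ B' * (p.factorial * Real.exp 1) := mul_le_mul_of_nonneg_left (key x hx0) (by positivity)
      _ ≤ _ := by gcongr; linarith
  · obtain ⟨n, rfl⟩ := Int.eq_ofNat_of_zero_le hn
    have hn0 : (0:ℝ) ≤ n := Nat.cast_nonneg n
    set r : ℝ := Real.sqrt (n + 1) with hr
    have hr0 : 0 < r := Real.sqrt_pos.2 (by positivity)
    have hr2 : r ^ 2 = n + 1 := Real.sq_sqrt (by positivity)
    have h1 := h n j r hr0 hr2
    set x : ℝ := |(j:ℝ)| / r with hx
    have hx0 : 0 ≤ x := by positivity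
    have hrx : r * (1 + x) = r + |(j:ℝ)| := by rw [hx]; field_simp
    have hr1 : 1 ≤ r := by rw [hr, Real.one_le_sqrt]; linarith
    have hM : snormE 1 (n:ℤ) j ≤ r * (1 + x) := by
      rw [hrx]
      unfold snormE snorm
      have hj := abs_nonneg (j:ℝ)
      refine max_le (max_le ?_ ?_) (by linarith)
      · rw [one_pow, one_mul, Int.cast_natCast, abs_of_nonneg hn0]
        have : Real.sqrt n ≤ r := Real.sqrt_le_sqrt (by linarith)
        linarith
      · rw [one_mul]; linarith
    calc _ ≤ (B * r⁻¹ ^ p * Real.exp (-x)) * (r * (1 + x)) ^ p := by gcongr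
      _ = B * ((1 + x) ^ p * Real.exp (-x)) * (r⁻¹ * r) ^ p := by rw [mul_pow, mul_pow]; ring
      _ = B * ((1 + x) ^ p * Real.exp (-x)) := by rw [inv_mul_cancel₀ hr0.ne', one_pow, mul_one]
      _ ≤ B * (p.factorial * Real.exp 1) := mul_le_mul_of_nonneg_left (key x hx0) (by positivity)
      _ ≤ _ := by gcongr; linarith

lemma scaleX8 (a : ℤ →₀ ℝ) (ε : ℝ) (k : ℕ) (m j : ℤ) :
    (fdX ε)^[k] (PfullG a ε) m j = ε⁻¹ ^ (k + 1) * (fdX 1)^[k] (PfullG a 1) m j := by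
  induction k generalizing j with
  | zero => simp [PfullG]
  | succ k ih =>
    rw [Function.iterate_succ_apply', Function.iterate_succ_apply']
    simp only [fdX, ih, div_one]
    ring

lemma scale8 (a : ℤ →₀ ℝ) (ε : ℝ) (k₀ k₁ : ℕ) (m j : ℤ) :
    fdiff ε k₀ k₁ (PfullG a ε) m j = ε⁻¹ ^ (2 * k₀ + k₁ + 1) * fdiff 1 k₀ k₁ (PfullG a 1) m j := by
  unfold fdiff
  induction k₀ generalizing m with
  | zero => simpa using scaleX8 a ε k₁ m j
  | succ k ih =>
    rw [Function.iterate_succ_apply', Function.iterate_succ_apply']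
    simp only [fdT, ih, one_pow, div_one]
    ring

lemma snormE8_scale (ε : ℝ) (hε : 0 < ε) (m j : ℤ) : snormE ε m j = ε * snormE 1 m j := by
  unfold snormE snorm
  rw [mul_max_of_nonneg _ _ hε.le, mul_max_of_nonneg _ _ hε.le, mul_one]
  congr 2
  · rw [abs_mul, abs_of_pos (by positivity : (0:ℝ) < ε ^ 2), Real.sqrt_mul (by positivity),
      Real.sqrt_sq hε.le]; simp
  · rw [abs_mul, abs_of_pos hε]; simp

/-- the discrete heat kernel is, on the parabolic unit ball, a
discrete singular kernel of order `-1`, uniformly in `ε`. -/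
theorem statement8 (a : ℤ →₀ ℝ)
    (ha_symm : ∀ k : ℤ, a (-k) = a k)
    (ha0 : ∑ k ∈ a.support, a k = 0)
    (ha2 : ∑ k ∈ a.support, ((k : ℝ)) ^ 2 * a k = 2)
    (ha_four : ∀ θ : ℝ, nuHat a θ = 0 → ∃ z : ℤ, θ = (z : ℝ)) :
    ∀ m : ℕ, ∃ C : ℝ, 0 < C ∧
      ∀ (N : ℕ) (ε : ℝ), ε = ((2 : ℝ) ^ N)⁻¹ →
      ∀ k₀ k₁ : ℕ, 2 * k₀ + k₁ ≤ m →
      ∀ tm j : ℤ, snorm ε tm j ≤ 1 →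
        |fdiff ε k₀ k₁ (PfullG a ε) tm j| ≤
          C * snormE ε tm j ^ (-1 - (2 * (k₀ : ℝ) + (k₁ : ℝ))) := by
  intro m
  choose B hB h using unit8 a ha_symm ha0 ha2 ha_four
  refine ⟨∑ x ∈ Finset.range (m+1), ∑ y ∈ Finset.range (m+1), B x y, ?_, ?_⟩
  · exact Finset.sum_pos (fun x _ => Finset.sum_pos (fun y _ => hB x y) (by simp)) (by simp)
  intro N ε hε k₀ k₁ hk tm j _
  have hε0 : 0 < ε := by rw [hε]; positivity
  have hBle : B k₀ k₁ ≤ ∑ x ∈ Finset.range (m+1), ∑ y ∈ Finset.range (m+1), B x y := by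
    have h1 : B k₀ k₁ ≤ ∑ y ∈ Finset.range (m+1), B k₀ y :=
      Finset.single_le_sum (f := fun y => B k₀ y) (fun y _ => (hB k₀ y).le)
        (by simp; omega)
    refine h1.trans (Finset.single_le_sum (f := fun x => ∑ y ∈ Finset.range (m+1), B x y)
      (fun x _ => Finset.sum_nonneg fun y _ => (hB x y).le) (by simp; omega))
  have hM : 0 < snormE 1 tm j := lt_of_lt_of_le one_pos (snormE8_pos tm j)
  have hexp : snormE ε tm j ^ (-1 - (2 * (k₀ : ℝ) + (k₁ : ℝ))) =
      ε⁻¹ ^ (2 * k₀ + k₁ + 1) * (snormE 1 tm j ^ (2 * k₀ + k₁ + 1))⁻¹ := by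
    rw [show (-1 - (2 * (k₀ : ℝ) + (k₁ : ℝ))) = -((2 * k₀ + k₁ + 1 : ℕ) : ℝ) by push_cast; ring,
      snormE8_scale ε hε0, Real.rpow_neg (by positivity), Real.rpow_natCast, mul_pow, mul_inv,
      inv_pow]
  rw [hexp, scale8, abs_mul, abs_of_pos (by positivity : 0 < ε⁻¹ ^ (2 * k₀ + k₁ + 1))]
  have h2 : |fdiff 1 k₀ k₁ (PfullG a 1) tm j| ≤
      B k₀ k₁ * (snormE 1 tm j ^ (2 * k₀ + k₁ + 1))⁻¹ := by
    rw [← div_eq_mul_inv, le_div_iff₀ (by positivity)]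
    exact h k₀ k₁ tm j
  calc _ ≤ ε⁻¹ ^ (2 * k₀ + k₁ + 1) * (B k₀ k₁ * (snormE 1 tm j ^ (2 * k₀ + k₁ + 1))⁻¹) := by gcongr
    _ = B k₀ k₁ * (ε⁻¹ ^ (2 * k₀ + k₁ + 1) * (snormE 1 tm j ^ (2 * k₀ + k₁ + 1))⁻¹) := by ring
    _ ≤ _ := by gcongr
end
end
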